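/- arXiv:2605.03347 — 2 statements merged into one kernel-verified Lean document; each statement's English description precedes it below -/
import Mathlib

section
/- Let G be a bipartite graph on vertex set {1,…,n} with at least one edge, K a field, R = K[x_1,…,x_n], and J(G) its cover ideal. Then the index of depth stability of powers of J(G) equals the least integer t ≥ 1 such that depth(R/J(G)^t) ≤ n − ν₀(G) − 1, where ν₀(G) is the ordered matching number of G. -/
/-!
Write `S_t` for the set of exponents `c ≥ 0` with `c_u + c_v ≥ t` on every edge `uv`. Since `G` is
bipartite, `J(G)^t` is the monomial ideal with exponent set `S_t` (`monI_pow`): a monomial of weight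
at least `t + 1` on all edges is divisible by a vertex cover leaving weight at least `t`.

Depth is read off from Koszul homology. For a monomial ideal `I`, the inequality
`depth(R/I) ≥ n - k` is equivalent to the vanishing of the Koszul homology of `I` with respect to
all sets of variables in homological degrees at least `k` (`le_depthQuot_iff_VV`). This homology is
multigraded, so the vanishing, called `VV`, is a statement about one exponent `c` at a time. The
Koszul complex on `v :: l` is the mapping cone of multiplication by `x_v` on the one on `l`, and
this multiplication is bijective in multidegree `c` unless some edge `vw` with `w ∈ l` is tight,
that is, `c_v + c_w = t + 1`.

* Lower bound on the depth. Removing the variables one at a time, always a vertex `a` of one side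
  with `c_a` minimal once every `x^c / x_v` is in the ideal, nonzero homology in degree `j` produces
  an ordered matching of at least `j` tight edges (`exists_spec`). Hence the homology vanishes above
  degree `ν₀(G)`, and `depth(R/J(G)^t) ≥ n - ν₀(G) - 1` for all `t ≥ 1` (`VV_succ_matching`).
* Persistence. `J(G)^t` is the colon ideal of `J(G)^(t+1)` by the monomial `∏_{v ∈ A} x_v`, where
  `A` is a side of the bipartition, and `VV` passes to colon ideals by monomials (`VV_shift`). So
  once the depth has reached `n - ν₀(G) - 1`, it stays there (`VV_of_succ`).
* The bound is attained. If `(u_i, v_i)` is a maximal ordered matching and `t` is large, the ideal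
  `⋂_i (x_{u_i}, x_{v_i})` is a colon ideal of `J(G)^t` by a monomial. Its Koszul homology in degree
  `ν₀(G)` contains the nonzero product of the classes of the cycles `x_a e_b - x_b e_a`, where
  `(a, b)` runs over the edges of the matching (`not_VV_of_matching`).

Therefore the depth equals its limit `n - ν₀(G) - 1` exactly when it is at most that number, and
the set of such `t` is upward closed; this identifies the two infima.
-/

open MvPolynomial

/-- The cover ideal `J(G) = ⋂_{{u,v} ∈ E(G)} (x_u, x_v)` of a graph `G` on `{1,…,n}`,
inside `R = K[x_1,…,x_n]`. -/
noncomputable def coverIdeal (K : Type*) [Field K] {n : ℕ} (G : SimpleGraph (Fin n)) :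
    Ideal (MvPolynomial (Fin n) K) :=
  ⨅ (u : Fin n) (v : Fin n) (_ : G.Adj u v), Ideal.span {X u, X v}

/-- The `s`-th symbolic power of the cover ideal:
`J(G)^{(s)} = ⋂_{{u,v} ∈ E(G)} (x_u, x_v)^s`. -/
noncomputable def coverIdealSymbPow (K : Type*) [Field K] {n : ℕ} (G : SimpleGraph (Fin n))
    (s : ℕ) : Ideal (MvPolynomial (Fin n) K) :=
  ⨅ (u : Fin n) (v : Fin n) (_ : G.Adj u v), (Ideal.span {X u, X v}) ^ s

/-- The maximal homogeneous ideal `(x_1,…,x_n)` of `K[x_1,…,x_n]`. -/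
noncomputable def maxIdeal (K : Type*) [Field K] (n : ℕ) : Ideal (MvPolynomial (Fin n) K) :=
  Ideal.span (Set.range (X : Fin n → MvPolynomial (Fin n) K))

/-- `depth(R/I)` with respect to the maximal homogeneous ideal: the supremum of the
lengths of `R/I`-regular sequences consisting of elements of `(x_1,…,x_n)`. -/
noncomputable def depthQuot (K : Type*) [Field K] (n : ℕ)
    (I : Ideal (MvPolynomial (Fin n) K)) : ℕ :=
  sSup {d : ℕ | ∃ rs : List (MvPolynomial (Fin n) K), rs.length = d ∧
    (∀ r ∈ rs, r ∈ maxIdeal K n) ∧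
    RingTheory.Sequence.IsRegular ((MvPolynomial (Fin n) K) ⧸ I) rs}

/-- An ordered matching of size `s` in `G`, given by edges `{u i, v i}`:
the edges form a matching (all `2s` endpoints are distinct), `{u 1,…,u s}` is an
independent set, and `{u i, v j} ∈ E(G)` implies `i ≤ j`. -/
def IsOrderedMatching {V : Type*} (G : SimpleGraph V) {s : ℕ} (u v : Fin s → V) : Prop :=
  (∀ i, G.Adj (u i) (v i)) ∧
  (Function.Injective (fun p : Fin s × Bool => if p.2 then u p.1 else v p.1)) ∧
  (∀ i j, ¬ G.Adj (u i) (u j)) ∧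
  (∀ i j, G.Adj (u i) (v j) → i ≤ j)

/-- The ordered matching number `ν₀(G)`: the maximum size of an ordered matching in `G`. -/
noncomputable def orderedMatchingNumber {V : Type*} (G : SimpleGraph V) : ℕ :=
  sSup {s : ℕ | ∃ u v : Fin s → V, IsOrderedMatching G u v}

/-- The index of depth stability of powers of `I`: the least `k ≥ 1` such that
`depth(R/I^m)` takes the (eventually constant) limit value for all `m ≥ k`, i.e. the least
`k ≥ 1` from which on the depth function of powers is constant. -/
noncomputable def dstab (K : Type*) [Field K] (n : ℕ)
    (I : Ideal (MvPolynomial (Fin n) K)) : ℕ :=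
  sInf {k : ℕ | 1 ≤ k ∧ ∀ m : ℕ, k ≤ m → depthQuot K n (I ^ m) = depthQuot K n (I ^ k)}

set_option linter.unusedSectionVars false

namespace CoverDepth

variable {K : Type*} [Field K] {n : ℕ}

/-! ### Koszul chains -/

/-- The underlying group of the Koszul complex of the variables listed in `l` with coefficients
in `M`, built as an iterated mapping cone: `K(v :: l) = K(l) ⊕ K(l) e_v`. -/
def KT {n : ℕ} (M : Type*) : List (Fin n) → Type _
  | [] => M
  | _ :: l => KT M l × KT M l

instance instACG {M : Type*} [AddCommGroup M] : ∀ l : List (Fin n), AddCommGroup (KT M l)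
  | [] => inferInstanceAs (AddCommGroup M)
  | _ :: l => @Prod.instAddCommGroup _ _ (instACG l) (instACG l)

noncomputable instance instMod {M : Type*} [AddCommGroup M] [Module (MvPolynomial (Fin n) K) M] :
    ∀ l : List (Fin n), Module (MvPolynomial (Fin n) K) (KT M l)
  | [] => inferInstanceAs (Module (MvPolynomial (Fin n) K) M)
  | _ :: l => @Prod.instModule _ _ _ _ _ _ (instMod l) (instMod l)

/-- The chain `a + b e_v`. -/
def mk {M : Type*} {l : List (Fin n)} (v : Fin n) (a b : KT M l) : KT M (v :: l) := (a, b)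

/-- An element of `M` as a chain for the empty list of variables. -/
def one {M : Type*} (a : M) : KT M ([] : List (Fin n)) := a

section
variable {M M' : Type*} [AddCommGroup M] [Module (MvPolynomial (Fin n) K) M]
  [AddCommGroup M'] [Module (MvPolynomial (Fin n) K) M']

theorem exists_mk {l : List (Fin n)} {v : Fin n} (z : KT M (v :: l)) :
    ∃ a b : KT M l, z = mk v a b := ⟨z.1, z.2, rfl⟩

theorem mk_inj {l : List (Fin n)} {v : Fin n} {a b a' b' : KT M l} :
    mk v a b = mk v a' b' ↔ a = a' ∧ b = b' := Prod.mk_inj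

theorem mk_add {l : List (Fin n)} {v : Fin n} (a b a' b' : KT M l) :
    mk v a b + mk v a' b' = mk v (a + a') (b + b') := rfl

theorem mk_sub {l : List (Fin n)} {v : Fin n} (a b a' b' : KT M l) :
    mk v a b - mk v a' b' = mk v (a - a') (b - b') := rfl

theorem mk_zero {l : List (Fin n)} {v : Fin n} : mk v (0 : KT M l) 0 = 0 := rfl

theorem smul_mk {l : List (Fin n)} {v : Fin n} (r : MvPolynomial (Fin n) K) (a b : KT M l) :
    r • mk v a b = mk v (r • a) (r • b) := rfl

theorem mk_eq_zero {l : List (Fin n)} {v : Fin n} {a b : KT M l} :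
    mk v a b = 0 ↔ a = 0 ∧ b = 0 := by rw [← mk_zero, mk_inj]

/-- The Koszul differential: `∂(a + b e_v) = (∂a + x_v b) - (∂b) e_v`. -/
noncomputable def dd (K : Type*) [Field K] {M : Type*} [AddCommGroup M]
    [Module (MvPolynomial (Fin n) K) M] :
    ∀ l : List (Fin n), KT M l →ₗ[MvPolynomial (Fin n) K] KT M l
  | [] => 0
  | v :: l =>
    { toFun := fun z => mk v (dd K l z.1 + (X v : MvPolynomial (Fin n) K) • z.2) (- dd K l z.2)
      map_add' := by
        intro y z
        obtain ⟨a, b, rfl⟩ := exists_mk y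
        obtain ⟨a', b', rfl⟩ := exists_mk z
        change mk v (dd K l (a + a') + (X v : MvPolynomial (Fin n) K) • (b + b'))
          (- dd K l (b + b')) = mk v (dd K l a + (X v : MvPolynomial (Fin n) K) • b) (- dd K l b)
            + mk v (dd K l a' + (X v : MvPolynomial (Fin n) K) • b') (- dd K l b')
        rw [mk_add, mk_inj, map_add, map_add, smul_add]
        exact ⟨by abel, by abel⟩
      map_smul' := by
        intro r z
        obtain ⟨a, b, rfl⟩ := exists_mk z
        change mk v (dd K l (r • a) + (X v : MvPolynomial (Fin n) K) • (r • b))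
          (- dd K l (r • b)) = r • mk v (dd K l a + (X v : MvPolynomial (Fin n) K) • b) (- dd K l b)
        rw [smul_mk, mk_inj, map_smul, map_smul, smul_add, smul_comm, smul_neg]
        exact ⟨rfl, rfl⟩ }

theorem dd_mk {l : List (Fin n)} {v : Fin n} (a b : KT M l) :
    dd K (v :: l) (mk v a b) =
      mk v (dd K l a + (X v : MvPolynomial (Fin n) K) • b) (- dd K l b) := rfl

theorem dd_nil (a : KT M ([] : List (Fin n))) : dd K [] a = 0 := rfl

theorem dd_dd (l : List (Fin n)) (z : KT M l) : dd K l (dd K l z) = 0 := by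
  induction l with
  | nil => rfl
  | cons v l ih =>
    obtain ⟨a, b, rfl⟩ := exists_mk z
    rw [dd_mk, dd_mk, mk_eq_zero]
    simp [ih]

/-- Applying a linear map of coefficient modules to all coefficients of a chain. -/
noncomputable def mapK (φ : M →ₗ[MvPolynomial (Fin n) K] M') : ∀ l : List (Fin n), KT M l → KT M' l
  | [], z => φ z
  | v :: l, z => mk v (mapK φ l z.1) (mapK φ l z.2)

theorem mapK_mk (φ : M →ₗ[MvPolynomial (Fin n) K] M') {l : List (Fin n)} {v : Fin n}
    (a b : KT M l) : mapK φ (v :: l) (mk v a b) = mk v (mapK φ l a) (mapK φ l b) := rfl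

theorem mapK_add (φ : M →ₗ[MvPolynomial (Fin n) K] M') (l : List (Fin n)) (y z : KT M l) :
    mapK φ l (y + z) = mapK φ l y + mapK φ l z := by
  induction l with
  | nil => exact map_add φ _ _
  | cons v l ih =>
    obtain ⟨a, b, rfl⟩ := exists_mk y
    obtain ⟨a', b', rfl⟩ := exists_mk z
    rw [mk_add, mapK_mk, mapK_mk, mapK_mk, mk_add, ih, ih]

theorem mapK_smul (φ : M →ₗ[MvPolynomial (Fin n) K] M') (l : List (Fin n))
    (r : MvPolynomial (Fin n) K) (z : KT M l) : mapK φ l (r • z) = r • mapK φ l z := by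
  induction l with
  | nil => exact map_smul φ _ _
  | cons v l ih =>
    obtain ⟨a, b, rfl⟩ := exists_mk z
    rw [smul_mk, mapK_mk, mapK_mk, smul_mk, ih, ih]

theorem mapK_neg (φ : M →ₗ[MvPolynomial (Fin n) K] M') (l : List (Fin n)) (z : KT M l) :
    mapK φ l (-z) = - mapK φ l z := by
  have h := mapK_smul φ l (-1) z
  rwa [neg_one_smul, neg_one_smul] at h

theorem mapK_sub (φ : M →ₗ[MvPolynomial (Fin n) K] M') (l : List (Fin n)) (y z : KT M l) :
    mapK φ l (y - z) = mapK φ l y - mapK φ l z := by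
  rw [sub_eq_add_neg, mapK_add, mapK_neg, sub_eq_add_neg]

theorem mapK_dd (φ : M →ₗ[MvPolynomial (Fin n) K] M') (l : List (Fin n)) (z : KT M l) :
    mapK φ l (dd K l z) = dd K l (mapK φ l z) := by
  induction l with
  | nil => exact map_zero φ
  | cons v l ih =>
    obtain ⟨a, b, rfl⟩ := exists_mk z
    rw [dd_mk, mapK_mk, mapK_mk, dd_mk, mapK_add, mapK_smul, mapK_neg, ih, ih]

theorem mapK_lsmul (r : MvPolynomial (Fin n) K) (l : List (Fin n)) (z : KT M l) :
    mapK (LinearMap.lsmul (MvPolynomial (Fin n) K) M r) l z = r • z := by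
  induction l with
  | nil => rfl
  | cons v l ih =>
    obtain ⟨a, b, rfl⟩ := exists_mk z
    rw [mapK_mk, smul_mk, ih, ih]

theorem smul_KT_inj {r : MvPolynomial (Fin n) K} (hr : IsSMulRegular M r) (l : List (Fin n))
    {y z : KT M l} (h : r • y = r • z) : y = z := by
  induction l with
  | nil => exact hr h
  | cons v l ih =>
    obtain ⟨a, b, rfl⟩ := exists_mk y
    obtain ⟨a', b', rfl⟩ := exists_mk z
    rw [smul_mk, smul_mk, mk_inj] at h
    rw [ih h.1, ih h.2]

/-! ### Graded Koszul chains and exactness -/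

/-- Given a family `N` of subgroups of `M` indexed by multidegrees, the chains of homological
degree `j` and multidegree `c`: the coefficient of `e_ρ` is `0` unless `|ρ| = j`, and lies in
`N (c - ρ)`.  Constant families `N` give the chains with coefficients in a submodule, with no
multigrading. -/
def hom (N : (Fin n → ℤ) → AddSubgroup M) :
    ∀ l : List (Fin n), ℤ → (Fin n → ℤ) → AddSubgroup (KT M l)
  | [], j, c => (if j = 0 then N c else ⊥ : AddSubgroup M)
  | v :: l, j, c => (hom N l j c).prod (hom N l (j - 1) (c - Pi.single v 1))

theorem mem_hom_mk {N : (Fin n → ℤ) → AddSubgroup M} {l : List (Fin n)} {v : Fin n}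
    {j : ℤ} {c : Fin n → ℤ} {a b : KT M l} :
    mk v a b ∈ hom N (v :: l) j c ↔ a ∈ hom N l j c ∧ b ∈ hom N l (j - 1) (c - Pi.single v 1) :=
  AddSubgroup.mem_prod

theorem hom_nil_of_ne {N : (Fin n → ℤ) → AddSubgroup M} {j : ℤ} {c : Fin n → ℤ} (hj : j ≠ 0)
    {z : KT M ([] : List (Fin n))} (h : z ∈ hom N [] j c) : z = 0 := by
  have : z ∈ (if j = 0 then N c else ⊥ : AddSubgroup M) := h
  rw [if_neg hj] at this
  exact this

theorem mem_hom_nil_zero {N : (Fin n → ℤ) → AddSubgroup M} {c : Fin n → ℤ} {x : M} :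
    one x ∈ hom N ([] : List (Fin n)) 0 c ↔ x ∈ N c := by
  change x ∈ (if (0 : ℤ) = 0 then N c else ⊥ : AddSubgroup M) ↔ _
  rw [if_pos rfl]

theorem hom_gt {N : (Fin n → ℤ) → AddSubgroup M} (l : List (Fin n)) {j : ℤ} {c : Fin n → ℤ}
    (hj : l.length < j) {z : KT M l} (h : z ∈ hom N l j c) : z = 0 := by
  induction l generalizing j c with
  | nil => exact hom_nil_of_ne (by simpa using hj.ne') h
  | cons v l ih =>
    obtain ⟨a, b, rfl⟩ := exists_mk z
    rw [mem_hom_mk] at h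
    simp only [List.length_cons, Nat.cast_add, Nat.cast_one] at hj
    rw [ih (by omega) h.1, ih (by omega) h.2, mk_zero]

theorem hom_neg {N : (Fin n → ℤ) → AddSubgroup M} (l : List (Fin n)) {j : ℤ} {c : Fin n → ℤ}
    (hj : j < 0) {z : KT M l} (h : z ∈ hom N l j c) : z = 0 := by
  induction l generalizing j c with
  | nil => exact hom_nil_of_ne hj.ne h
  | cons v l ih =>
    obtain ⟨a, b, rfl⟩ := exists_mk z
    rw [mem_hom_mk] at h
    rw [ih hj h.1, ih (by omega) h.2, mk_zero]

/-- The multidegrees `c - ρ` with `ρ` a subset of `l`. -/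
def Near (l : List (Fin n)) (c c' : Fin n → ℤ) : Prop :=
  ∀ i, c' i ≤ c i ∧ c i - 1 ≤ c' i ∧ (i ∉ l → c' i = c i)

theorem Near.refl (l : List (Fin n)) (c : Fin n → ℤ) : Near l c c :=
  fun i => ⟨le_rfl, by omega, fun _ => rfl⟩

theorem Near.cons {v : Fin n} {l : List (Fin n)} {c c' : Fin n → ℤ} (h : Near l c c') :
    Near (v :: l) c c' :=
  fun i => ⟨(h i).1, (h i).2.1, fun hi => (h i).2.2 fun h' => hi (List.mem_cons_of_mem _ h')⟩

theorem Near.cons' {v : Fin n} {l : List (Fin n)} (hv : v ∉ l) {c c' : Fin n → ℤ}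
    (h : Near l (c - Pi.single v 1) c') : Near (v :: l) c c' := by
  intro i
  have hi := h i
  by_cases hiv : i = v
  · subst hiv
    have h3 := hi.2.2 hv
    simp only [Pi.sub_apply, Pi.single_eq_same] at h3
    exact ⟨by omega, by omega, fun h' => absurd List.mem_cons_self h'⟩
  · simp only [Pi.sub_apply, Pi.single_eq_of_ne hiv, sub_zero] at hi
    refine ⟨hi.1, hi.2.1, fun h' => hi.2.2 fun h'' => h' (List.mem_cons_of_mem _ h'')⟩

theorem map_hom (φ : M →ₗ[MvPolynomial (Fin n) K] M') {N : (Fin n → ℤ) → AddSubgroup M}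
    {N' : (Fin n → ℤ) → AddSubgroup M'} (h : ∀ c, ∀ x ∈ N c, φ x ∈ N' c)
    (l : List (Fin n)) {j : ℤ} {c : Fin n → ℤ} {z : KT M l} (hz : z ∈ hom N l j c) :
    mapK φ l z ∈ hom N' l j c := by
  induction l generalizing j c with
  | nil =>
    by_cases hj : j = 0
    · subst hj
      exact mem_hom_nil_zero.2 (h c _ (mem_hom_nil_zero.1 hz))
    · rw [hom_nil_of_ne hj hz]
      have : mapK φ [] (0 : KT M ([] : List (Fin n))) = 0 := map_zero φ
      rw [this]; exact zero_mem _
  | cons v l ih =>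
    obtain ⟨a, b, rfl⟩ := exists_mk z
    rw [mem_hom_mk] at hz
    rw [mapK_mk, mem_hom_mk]
    exact ⟨ih hz.1, ih hz.2⟩

/-- A chain lifts along a map of coefficients as soon as its coefficients do. -/
theorem lift_hom (φ : M →ₗ[MvPolynomial (Fin n) K] M') {N : (Fin n → ℤ) → AddSubgroup M}
    {N' : (Fin n → ℤ) → AddSubgroup M'} (l : List (Fin n)) (hl : l.Nodup) {j : ℤ} {c : Fin n → ℤ}
    (h : ∀ c', Near l c c' → ∀ x ∈ N' c', ∃ y ∈ N c', φ y = x)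
    {z : KT M' l} (hz : z ∈ hom N' l j c) :
    ∃ y ∈ hom N l j c, mapK φ l y = z := by
  induction l generalizing j c with
  | nil =>
    by_cases hj : j = 0
    · subst hj
      obtain ⟨y, hy, hy'⟩ := h c (Near.refl _ _) z (mem_hom_nil_zero.1 hz)
      exact ⟨y, mem_hom_nil_zero.2 hy, hy'⟩
    · rw [hom_nil_of_ne hj hz]
      exact ⟨0, zero_mem _, map_zero φ⟩
  | cons v l ih =>
    obtain ⟨a, b, rfl⟩ := exists_mk z
    rw [mem_hom_mk] at hz
    rw [List.nodup_cons] at hl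
    obtain ⟨a', ha', ha⟩ := ih hl.2 (fun c' hc' => h c' hc'.cons) hz.1
    obtain ⟨b', hb', hb⟩ := ih hl.2 (fun c' hc' => h c' (hc'.cons' hl.1)) hz.2
    exact ⟨mk v a' b', mem_hom_mk.2 ⟨ha', hb'⟩, by rw [mapK_mk, ha, hb]⟩

theorem hom_shift (N : (Fin n → ℤ) → AddSubgroup M) (a : Fin n → ℤ) (l : List (Fin n)) (j : ℤ)
    (c : Fin n → ℤ) : hom (fun c => N (c + a)) l j c = hom N l j (c + a) := by
  induction l generalizing j c with
  | nil => rfl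
  | cons v l ih =>
    change (hom _ l j c).prod (hom _ l (j - 1) (c - Pi.single v 1)) =
      (hom _ l j _).prod (hom _ l (j - 1) (c + a - Pi.single v 1))
    rw [ih, ih, sub_add_eq_add_sub]

theorem hom_mono {N N' : (Fin n → ℤ) → AddSubgroup M} (h : ∀ c, N c ≤ N' c)
    (l : List (Fin n)) {j : ℤ} {c : Fin n → ℤ} {z : KT M l} (hz : z ∈ hom N l j c) :
    z ∈ hom N' l j c := by
  induction l generalizing j c with
  | nil =>
    by_cases hj : j = 0
    · subst hj
      exact mem_hom_nil_zero.2 (h c (mem_hom_nil_zero.1 hz))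
    · rw [hom_nil_of_ne hj hz]; exact zero_mem _
  | cons v l ih =>
    obtain ⟨a, b, rfl⟩ := exists_mk z
    rw [mem_hom_mk] at hz ⊢
    exact ⟨ih hz.1, ih hz.2⟩

theorem hom_const (N : AddSubgroup M) (l : List (Fin n)) (j : ℤ) (c c' : Fin n → ℤ) :
    hom (fun _ => N) l j c = hom (fun _ => N) l j c' := by
  induction l generalizing j c c' with
  | nil => rfl
  | cons v l ih =>
    change (hom _ l j c).prod (hom _ l (j - 1) (c - Pi.single v 1)) =
      (hom _ l j _).prod (hom _ l (j - 1) (c' - Pi.single v 1))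
    rw [ih _ c c', ih _ (c - Pi.single v 1) (c' - Pi.single v 1)]

/-- The family `N` is stable under the variables. -/
def Sys (K : Type*) [Field K] {M : Type*} [AddCommGroup M] [Module (MvPolynomial (Fin n) K) M]
    (N : (Fin n → ℤ) → AddSubgroup M) : Prop :=
  ∀ c v, ∀ x ∈ N c, (X v : MvPolynomial (Fin n) K) • x ∈ N (c + Pi.single v 1)

theorem Sys.smul {N : (Fin n → ℤ) → AddSubgroup M} (hN : Sys K N) (v : Fin n)
    (l : List (Fin n)) {j : ℤ} {c : Fin n → ℤ} {z : KT M l}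
    (hz : z ∈ hom N l j (c - Pi.single v 1)) :
    (X v : MvPolynomial (Fin n) K) • z ∈ hom N l j c := by
  rw [← mapK_lsmul]
  have h := map_hom (LinearMap.lsmul (MvPolynomial (Fin n) K) M (X v)) (N := N)
    (N' := fun c => N (c + Pi.single v 1)) (fun c x hx => hN c v x hx) l hz
  rwa [hom_shift, sub_add_cancel] at h

theorem Sys.dd_mem {N : (Fin n → ℤ) → AddSubgroup M} (hN : Sys K N)
    (l : List (Fin n)) {j : ℤ} {c : Fin n → ℤ} {z : KT M l} (hz : z ∈ hom N l j c) :
    dd K l z ∈ hom N l (j - 1) c := by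
  induction l generalizing j c with
  | nil => exact zero_mem _
  | cons v l ih =>
    obtain ⟨a, b, rfl⟩ := exists_mk z
    rw [mem_hom_mk] at hz
    rw [dd_mk, mem_hom_mk]
    exact ⟨add_mem (ih hz.1) (hN.smul v l hz.2), neg_mem (ih hz.2)⟩

/-- Vanishing of the Koszul homology in homological degree `j` and multidegree `c`. -/
def Ex (K : Type*) [Field K] {M : Type*} [AddCommGroup M] [Module (MvPolynomial (Fin n) K) M]
    (N : (Fin n → ℤ) → AddSubgroup M) (l : List (Fin n)) (j : ℤ) (c : Fin n → ℤ) : Prop :=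
  ∀ z ∈ hom N l j c, dd K l z = 0 → ∃ w ∈ hom N l (j + 1) c, dd K l w = z

/-- The long exact sequence of the mapping cone of multiplication by `x_v`. -/
theorem Ex.cons {N : (Fin n → ℤ) → AddSubgroup M} (hN : Sys K N) {v : Fin n} {l : List (Fin n)}
    {j : ℤ} {c : Fin n → ℤ} (h1 : Ex K N l j c) (h2 : Ex K N l (j - 1) (c - Pi.single v 1)) :
    Ex K N (v :: l) j c := by
  intro z hz hdz
  obtain ⟨a, b, rfl⟩ := exists_mk z
  rw [mem_hom_mk] at hz
  rw [dd_mk, mk_eq_zero, neg_eq_zero] at hdz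
  obtain ⟨w, hw, hdw⟩ := h2 b hz.2 hdz.2
  rw [sub_add_cancel] at hw
  obtain ⟨u, hu, hdu⟩ := h1 (a + (X v : MvPolynomial (Fin n) K) • w)
    (add_mem hz.1 (hN.smul v l hw)) (by rw [map_add, map_smul, hdw, hdz.1])
  refine ⟨mk v u (-w), mem_hom_mk.2 ⟨hu, neg_mem (by rwa [add_sub_cancel_right])⟩, ?_⟩
  rw [dd_mk, hdu, map_neg, hdw, neg_neg, smul_neg, add_neg_cancel_right]

theorem Ex.cons_of_zero {N : (Fin n → ℤ) → AddSubgroup M} {v : Fin n} {l : List (Fin n)}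
    {j : ℤ} {c : Fin n → ℤ} (h1 : Ex K N l j c)
    (h2 : ∀ b ∈ hom N l (j - 1) (c - Pi.single v 1), b = 0) :
    Ex K N (v :: l) j c := by
  intro z hz hdz
  obtain ⟨a, b, rfl⟩ := exists_mk z
  rw [mem_hom_mk] at hz
  rw [dd_mk, mk_eq_zero] at hdz
  have hb := h2 b hz.2
  subst hb
  rw [smul_zero, add_zero] at hdz
  obtain ⟨u, hu, hdu⟩ := h1 a hz.1 hdz.1
  refine ⟨mk v u 0, mem_hom_mk.2 ⟨hu, zero_mem _⟩, ?_⟩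
  rw [dd_mk, hdu, map_zero, smul_zero, add_zero, neg_zero]

/-- If multiplication by `x_v` is bijective on the relevant coefficients, the Koszul homology
vanishes. -/
theorem Ex.cone {N : (Fin n → ℤ) → AddSubgroup M} {v : Fin n} {l : List (Fin n)}
    {j : ℤ} {c : Fin n → ℤ} (hl : (v :: l).Nodup)
    (hreg : IsSMulRegular M (X v : MvPolynomial (Fin n) K))
    (h : ∀ c', Near l (c - Pi.single v 1) c' → ∀ x ∈ N (c' + Pi.single v 1), ∃ y ∈ N c',
      (X v : MvPolynomial (Fin n) K) • y = x) :
    Ex K N (v :: l) j c := by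
  intro z hz hdz
  obtain ⟨a, b, rfl⟩ := exists_mk z
  rw [mem_hom_mk] at hz
  rw [dd_mk, mk_eq_zero] at hdz
  have ha : a ∈ hom (fun c => N (c + Pi.single v 1)) l j (c - Pi.single v 1) := by
    rw [hom_shift, sub_add_cancel]; exact hz.1
  obtain ⟨y, hy, hya⟩ := lift_hom (LinearMap.lsmul (MvPolynomial (Fin n) K) M (X v)) l
    (List.nodup_cons.1 hl).2 h ha
  rw [mapK_lsmul] at hya
  subst hya
  have hb : b = - dd K l y := by
    rw [map_smul, ← smul_add] at hdz
    have := smul_KT_inj hreg l (hdz.1.trans (smul_zero _).symm)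
    exact eq_neg_of_add_eq_zero_right this
  refine ⟨mk v 0 y, mem_hom_mk.2 ⟨zero_mem _, by rwa [add_sub_cancel_right]⟩, ?_⟩
  rw [dd_mk, map_zero, zero_add, hb]

/-- The Koszul complex does not depend on the order of the variables. -/
theorem exists_perm_equiv {l l' : List (Fin n)} (h : l.Perm l') :
    ∃ e : KT M l ≃+ KT M l', (∀ z, e (dd K l z) = dd K l' (e z)) ∧
      (∀ r : MvPolynomial (Fin n) K, ∀ z, e (r • z) = r • e z) ∧
      ∀ (N : (Fin n → ℤ) → AddSubgroup M) j c z, z ∈ hom N l j c ↔ e z ∈ hom N l' j c := by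
  induction h with
  | nil => exact ⟨AddEquiv.refl _, fun _ => rfl, fun _ _ => rfl, fun _ _ _ _ => Iff.rfl⟩
  | @cons v l l' _ ih =>
    obtain ⟨e, he1, he2, he3⟩ := ih
    refine ⟨AddEquiv.prodCongr e e, ?_, ?_, ?_⟩
    · intro z
      obtain ⟨a, b, rfl⟩ := exists_mk z
      change mk v (e _) (e _) = mk v _ _
      rw [mk_inj]
      change e (dd K l a + (X v : MvPolynomial (Fin n) K) • b) = dd K l' (e a) +
        (X v : MvPolynomial (Fin n) K) • e b ∧ e (- dd K l b) = - dd K l' (e b)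
      rw [map_add, map_neg, he1, he1, he2]
      exact ⟨rfl, rfl⟩
    · intro r z
      obtain ⟨a, b, rfl⟩ := exists_mk z
      change mk v (e (r • a)) (e (r • b)) = mk v (r • e a) (r • e b)
      rw [he2, he2]
    · intro N j c z
      obtain ⟨a, b, rfl⟩ := exists_mk z
      change _ ↔ mk v (e a) (e b) ∈ _
      rw [mem_hom_mk, mem_hom_mk, he3, he3]
  | swap v w l =>
    -- `a + b e_v + (a' + b' e_v) e_w` is sent to `a + a' e_w + (b - b' e_w) e_v`
    let f : ∀ v w : Fin n, KT M (w :: v :: l) → KT M (v :: w :: l) :=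
      fun v w z => mk v (mk w z.1.1 z.2.1) (mk w z.1.2 (- z.2.2))
    have hf : ∀ v w (a b a' b' : KT M l), f v w (mk w (mk v a b) (mk v a' b')) =
      mk v (mk w a a') (mk w b (- b')) := fun _ _ _ _ _ _ => rfl
    have hff : ∀ v w z, f v w (f w v z) = z := by
      intro v w z
      obtain ⟨a, b, rfl⟩ := exists_mk z
      obtain ⟨a1, a2, rfl⟩ := exists_mk a
      obtain ⟨b1, b2, rfl⟩ := exists_mk b
      change mk v (mk w a1 a2) (mk w b1 (- - b2)) = _
      rw [neg_neg]
    refine ⟨⟨⟨f v w, f w v, hff w v, hff v w⟩, ?_⟩, ?_, ?_, ?_⟩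
    · intro y z
      obtain ⟨a, b, rfl⟩ := exists_mk y
      obtain ⟨a1, a2, rfl⟩ := exists_mk a
      obtain ⟨b1, b2, rfl⟩ := exists_mk b
      obtain ⟨a', b', rfl⟩ := exists_mk z
      obtain ⟨a1', a2', rfl⟩ := exists_mk a'
      obtain ⟨b1', b2', rfl⟩ := exists_mk b'
      change f v w _ = f v w _ + f v w _
      rw [mk_add, mk_add, mk_add, hf, hf, hf, mk_add, mk_add, mk_add, neg_add]
    · intro y
      obtain ⟨a, b, rfl⟩ := exists_mk y
      obtain ⟨a1, a2, rfl⟩ := exists_mk a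
      obtain ⟨b1, b2, rfl⟩ := exists_mk b
      change f v w _ = dd K _ (f v w _)
      have hneg : ∀ (v : Fin n) (x y : KT M l), - mk v x y = mk v (-x) (-y) := fun _ _ _ => rfl
      rw [hf]
      simp only [dd_mk, smul_mk, mk_add, hneg, hf, mk_inj, neg_neg, map_neg, smul_neg, neg_add]
      refine ⟨⟨?_, trivial⟩, ?_⟩
      · abel
      · simp
    · intro r y
      obtain ⟨a, b, rfl⟩ := exists_mk y
      obtain ⟨a1, a2, rfl⟩ := exists_mk a
      obtain ⟨b1, b2, rfl⟩ := exists_mk b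
      change f v w _ = r • (f v w _)
      simp only [smul_mk, hf, smul_neg]
    · intro N j c y
      obtain ⟨a, b, rfl⟩ := exists_mk y
      obtain ⟨a1, a2, rfl⟩ := exists_mk a
      obtain ⟨b1, b2, rfl⟩ := exists_mk b
      change _ ↔ f v w _ ∈ _
      rw [hf]
      simp only [mem_hom_mk, neg_mem_iff]
      rw [sub_right_comm c (Pi.single w 1) (Pi.single v 1)]
      tauto
  | trans _ _ ih1 ih2 =>
    obtain ⟨e, he1, he2, he3⟩ := ih1
    obtain ⟨f, hf1, hf2, hf3⟩ := ih2
    refine ⟨e.trans f, fun z => ?_, fun r z => ?_, fun N j c z => ?_⟩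
    · simp only [AddEquiv.trans_apply, he1, hf1]
    · simp only [AddEquiv.trans_apply, he2, hf2]
    · rw [he3, hf3]; rfl

theorem Ex.perm {N : (Fin n → ℤ) → AddSubgroup M} {l l' : List (Fin n)} (h : l.Perm l')
    {j : ℤ} {c : Fin n → ℤ} (hE : Ex K N l j c) : Ex K N l' j c := by
  obtain ⟨e, he1, _, he3⟩ := exists_perm_equiv (K := K) (M := M) h
  intro z hz hdz
  obtain ⟨y, rfl⟩ := e.surjective z
  rw [← he3] at hz
  rw [← he1, map_eq_zero_iff e e.injective] at hdz
  obtain ⟨w, hw, hdw⟩ := hE y hz hdz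
  exact ⟨e w, (he3 _ _ _ _).1 hw, by rw [← he1, hdw]⟩

end

end CoverDepth

namespace CoverDepth

open scoped Pointwise

variable {K : Type*} [Field K] {n : ℕ}

/-! ### Koszul homology and regular sequences -/

section
variable {M M' : Type*} [AddCommGroup M] [Module (MvPolynomial (Fin n) K) M]
  [AddCommGroup M'] [Module (MvPolynomial (Fin n) K) M']

/-- Chains with arbitrary coefficients, of homological degree `j`. -/
abbrev topN : (Fin n → ℤ) → AddSubgroup M := fun _ => ⊤

theorem hom_ker (φ : M →ₗ[MvPolynomial (Fin n) K] M') {N N' : (Fin n → ℤ) → AddSubgroup M}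
    (h : ∀ c, ∀ x ∈ N c, φ x = 0 → x ∈ N' c) (l : List (Fin n)) {j : ℤ} {c : Fin n → ℤ}
    {z : KT M l} (hz : z ∈ hom N l j c) (hz0 : mapK φ l z = 0) : z ∈ hom N' l j c := by
  induction l generalizing j c with
  | nil =>
    by_cases hj : j = 0
    · subst hj
      exact mem_hom_nil_zero.2 (h c z (mem_hom_nil_zero.1 hz) hz0)
    · rw [hom_nil_of_ne hj hz]; exact zero_mem _
  | cons v l ih =>
    obtain ⟨a, b, rfl⟩ := exists_mk z
    rw [mapK_mk, mk_eq_zero] at hz0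
    rw [mem_hom_mk] at hz ⊢
    exact ⟨ih hz.1 hz0.1, ih hz.2 hz0.2⟩

theorem top_sys : Sys K (topN : (Fin n → ℤ) → AddSubgroup M) := fun _ _ _ _ => trivial

theorem top_smul (r : MvPolynomial (Fin n) K) (l : List (Fin n)) {j : ℤ} {c : Fin n → ℤ}
    {z : KT M l} (hz : z ∈ hom topN l j c) : r • z ∈ hom topN l j c := by
  rw [← mapK_lsmul]
  exact map_hom (N' := topN) _ (fun _ _ _ => trivial) l hz

theorem top_any (l : List (Fin n)) {j : ℤ} {c c' : Fin n → ℤ}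
    {z : KT M l} (hz : z ∈ hom topN l j c) : z ∈ hom topN l j c' := by
  have := hom_const (⊤ : AddSubgroup M) l j c c'
  exact this ▸ hz

/-- Multiplication by a variable of the list is homotopic to zero. -/
theorem exists_homotopy (l : List (Fin n)) (v : Fin n) (hv : v ∈ l) :
    ∃ h : KT M l →ₗ[MvPolynomial (Fin n) K] KT M l,
      (∀ z, dd K l (h z) + h (dd K l z) = (X v : MvPolynomial (Fin n) K) • z) ∧
      ∀ j c z, z ∈ hom topN l j c → h z ∈ hom topN l (j + 1) c := by
  induction l with
  | nil => simp at hv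
  | cons w l ih =>
    by_cases hvw : v = w
    · subst hvw
      refine ⟨⟨⟨fun z => mk v 0 z.1, ?_⟩, ?_⟩, ?_, ?_⟩
      · intro y z
        change mk v 0 (y.1 + z.1) = _
        rw [mk_add, add_zero]
      · intro r z
        change mk v 0 (r • z.1) = r • mk v 0 z.1
        rw [smul_mk, smul_zero]
      · intro z
        obtain ⟨a, b, rfl⟩ := exists_mk z
        change dd K _ (mk v 0 a) + mk v 0 (dd K l a + (X v : MvPolynomial (Fin n) K) • b) = _
        rw [dd_mk, mk_add, smul_mk, mk_inj]
        simp
      · intro j c z hz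
        obtain ⟨a, b, rfl⟩ := exists_mk z
        change mk v 0 a ∈ _
        rw [mem_hom_mk] at hz ⊢
        refine ⟨zero_mem _, ?_⟩
        rw [add_sub_cancel_right]
        exact top_any l hz.1
    · obtain ⟨h, h1, h2⟩ := ih ((List.mem_cons.1 hv).resolve_left hvw)
      refine ⟨⟨⟨fun z => mk w (h z.1) (- h z.2), ?_⟩, ?_⟩, ?_, ?_⟩
      · intro y z
        change mk w (h (y.1 + z.1)) (- h (y.2 + z.2)) = _
        rw [mk_add, map_add, map_add, neg_add]
      · intro r z
        change mk w (h (r • z.1)) (- h (r • z.2)) = r • mk w (h z.1) (- h z.2)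
        rw [smul_mk, map_smul, map_smul, smul_neg]
      · intro z
        obtain ⟨a, b, rfl⟩ := exists_mk z
        change dd K _ (mk w (h a) (- h b)) +
          mk w (h (dd K l a + (X w : MvPolynomial (Fin n) K) • b)) (- h (- dd K l b)) = _
        rw [dd_mk, mk_add, smul_mk, mk_inj, ← h1, ← h1]
        simp only [map_add, map_neg, map_smul, smul_neg, neg_neg]
        exact ⟨by abel, trivial⟩
      · intro j c z hz
        obtain ⟨a, b, rfl⟩ := exists_mk z
        change mk w (h a) (- h b) ∈ _
        rw [mem_hom_mk] at hz ⊢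
        refine ⟨h2 _ _ _ hz.1, neg_mem ?_⟩
        have := h2 _ _ _ hz.2
        rwa [sub_add_cancel, ← add_sub_cancel_right j 1] at this

/-- The maximal homogeneous ideal annihilates the Koszul homology of all the variables. -/
theorem smul_bdry {l : List (Fin n)} (hl : ∀ v, v ∈ l) {r : MvPolynomial (Fin n) K}
    (hr : r ∈ maxIdeal K n) {j : ℤ} {c : Fin n → ℤ} {z : KT M l} (hz : z ∈ hom topN l j c)
    (hdz : dd K l z = 0) : ∃ w ∈ hom topN l (j + 1) c, dd K l w = r • z := by
  refine Submodule.span_induction ?_ ?_ ?_ ?_ hr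
  · rintro _ ⟨v, rfl⟩
    obtain ⟨h, h1, h2⟩ := exists_homotopy (K := K) (M := M) l v (hl v)
    exact ⟨h z, h2 _ _ _ hz, by simpa [hdz] using h1 z⟩
  · exact ⟨0, zero_mem _, by simp⟩
  · rintro x y - - ⟨w, hw, hw'⟩ ⟨w', h, h'⟩
    exact ⟨w + w', add_mem hw h, by rw [map_add, hw', h', add_smul]⟩
  · rintro a x - ⟨w, hw, hw'⟩
    exact ⟨a • w, top_smul a l hw, by rw [map_smul, hw', smul_eq_mul, mul_smul]⟩

/-- The projection `M → M / r M`. -/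
noncomputable def modr (M : Type*) [AddCommGroup M] [Module (MvPolynomial (Fin n) K) M]
    (r : MvPolynomial (Fin n) K) : M →ₗ[MvPolynomial (Fin n) K] QuotSMulTop r M :=
  Submodule.mkQ _

theorem modr_eq_zero {r : MvPolynomial (Fin n) K} {x : M} (h : modr M r x = 0) :
    ∃ y, r • y = x := by
  have h' : x ∈ (r • (⊤ : Submodule (MvPolynomial (Fin n) K) M)) :=
    (Submodule.Quotient.mk_eq_zero _).1 h
  obtain ⟨y, -, hy⟩ := (Submodule.mem_smul_pointwise_iff_exists x r ⊤).1 h'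
  exact ⟨y, hy⟩

theorem modr_smul (r : MvPolynomial (Fin n) K) (x : M) : modr M r (r • x) = 0 :=
  (Submodule.Quotient.mk_eq_zero _).2 ((Submodule.mem_smul_pointwise_iff_exists _ r ⊤).2
    ⟨x, trivial, rfl⟩)

theorem mapK_modr_smul (r : MvPolynomial (Fin n) K) (l : List (Fin n)) (z : KT M l) :
    mapK (modr M r) l (r • z) = 0 := by
  induction l with
  | nil => exact modr_smul r z
  | cons v l ih =>
    obtain ⟨a, b, rfl⟩ := exists_mk z
    rw [smul_mk, mapK_mk, ih, ih, mk_zero]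

/-- A chain that vanishes modulo `r` is `r` times a chain. -/
theorem exists_of_mapK_modr {r : MvPolynomial (Fin n) K} {l : List (Fin n)} (hl : l.Nodup)
    {j : ℤ} {c : Fin n → ℤ} {z : KT M l} (hz : z ∈ hom topN l j c)
    (h0 : mapK (modr M r) l z = 0) : ∃ y ∈ hom topN l j c, r • y = z := by
  have h1 := hom_ker (N' := fun _ => (modr M r).ker.toAddSubgroup)
    _ (fun c x _ hx => hx) l hz h0
  obtain ⟨y, hy, hyz⟩ := lift_hom (LinearMap.lsmul (MvPolynomial (Fin n) K) M r)
    (N := topN) l hl (fun c' _ x hx => by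
      obtain ⟨y, hy⟩ := modr_eq_zero (r := r) (x := x) hx
      exact ⟨y, trivial, hy⟩) h1
  rw [mapK_lsmul] at hyz
  exact ⟨y, hy, hyz⟩

theorem exists_lift (φ : M →ₗ[MvPolynomial (Fin n) K] M') (hφ : Function.Surjective φ)
    {l : List (Fin n)} (hl : l.Nodup) {j : ℤ} {c : Fin n → ℤ} {z : KT M' l}
    (hz : z ∈ hom topN l j c) : ∃ y ∈ hom topN l j c, mapK φ l y = z :=
  lift_hom φ (N := topN) l hl (fun _ _ x _ => by
    obtain ⟨y, hy⟩ := hφ x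
    exact ⟨y, trivial, hy⟩) hz

theorem mapK_top (φ : M →ₗ[MvPolynomial (Fin n) K] M') {l : List (Fin n)} {j : ℤ}
    {c : Fin n → ℤ} {z : KT M l} (hz : z ∈ hom topN l j c) : mapK φ l z ∈ hom topN l j c :=
  map_hom φ (N' := topN) (fun _ _ _ => trivial) l hz

end

/-- Depth sensitivity of the Koszul complex: a regular sequence of length `d` makes the Koszul
homology vanish in the top `d` degrees. -/
theorem ex_of_regular {l : List (Fin n)} (hn : l.Nodup) (hl : ∀ v, v ∈ l)
    (rs : List (MvPolynomial (Fin n) K)) :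
    ∀ (M : Type*) [AddCommGroup M] [Module (MvPolynomial (Fin n) K) M],
      (∀ r ∈ rs, r ∈ maxIdeal K n) → RingTheory.Sequence.IsWeaklyRegular M rs →
      ∀ (j : ℤ) (c : Fin n → ℤ), (l.length : ℤ) - rs.length < j →
        Ex K (topN : (Fin n → ℤ) → AddSubgroup M) l j c := by
  induction rs with
  | nil =>
    intro M _ _ _ _ j c hj z hz _
    rw [hom_gt l (by simpa using hj) hz]
    exact ⟨0, zero_mem _, map_zero _⟩
  | cons r rs ih =>
    intro M _ _ hrs hreg j c hj z hz hdz
    rw [RingTheory.Sequence.isWeaklyRegular_cons_iff] at hreg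
    rw [List.length_cons, Nat.cast_add, Nat.cast_one] at hj
    obtain ⟨y, hy, hyz⟩ := smul_bdry hl (hrs r List.mem_cons_self) hz hdz
    obtain ⟨w, hw, hdw⟩ := ih (QuotSMulTop r M)
      (fun r hr => hrs r (List.mem_cons_of_mem _ hr)) hreg.2 (j + 1) c (by omega)
      (mapK (modr M r) l y) (mapK_top _ hy) (by rw [← mapK_dd, hyz, mapK_modr_smul])
    obtain ⟨w', hw', rfl⟩ := exists_lift _ (Submodule.mkQ_surjective _) hn hw
    obtain ⟨y', hy', hyy⟩ := exists_of_mapK_modr (r := r) hn (z := y - dd K l w') (j := j + 1)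
      (c := c) (sub_mem hy (by simpa using top_sys.dd_mem l hw'))
      (by rw [mapK_sub, mapK_dd, ← hdw]; exact sub_self _)
    refine ⟨y', hy', smul_KT_inj hreg.1 l ?_⟩
    rw [← map_smul, hyy, map_sub, dd_dd, sub_zero, hyz]

section
variable {M : Type*} [AddCommGroup M] [Module (MvPolynomial (Fin n) K) M]

/-- The chain `x e_l`, of homological degree the length of `l`. -/
def topChain : ∀ l : List (Fin n), M → KT M l
  | [], x => x
  | v :: l, x => mk v 0 (topChain l x)

theorem topChain_mem (l : List (Fin n)) (x : M) (c : Fin n → ℤ) :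
    topChain l x ∈ hom topN l l.length c := by
  induction l generalizing c with
  | nil => exact (mem_hom_nil_zero (N := topN) (x := x)).2 (AddSubgroup.mem_top x)
  | cons v l ih =>
    refine mem_hom_mk.2 ⟨zero_mem _, ?_⟩
    have := ih (c - Pi.single v 1)
    simpa using this

theorem topChain_eq_zero (l : List (Fin n)) (x : M) : topChain l x = 0 ↔ x = 0 := by
  induction l with
  | nil => rfl
  | cons v l ih =>
    change mk v 0 _ = 0 ↔ _
    rw [mk_eq_zero, ih]; simp

theorem smul_topChain (r : MvPolynomial (Fin n) K) (l : List (Fin n)) (x : M) :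
    r • topChain l x = topChain l (r • x) := by
  induction l with
  | nil => rfl
  | cons v l ih =>
    change r • mk v 0 _ = mk v 0 _
    rw [smul_mk, ih, smul_zero]

theorem dd_topChain (l : List (Fin n)) (x : M)
    (h : ∀ v ∈ l, (X v : MvPolynomial (Fin n) K) • x = 0) : dd K l (topChain l x) = 0 := by
  induction l with
  | nil => rfl
  | cons v l ih =>
    change dd K _ (mk v 0 _) = 0
    rw [dd_mk, ih fun w hw => h w (List.mem_cons_of_mem _ hw), smul_topChain,
      h v List.mem_cons_self, (topChain_eq_zero l (0 : M)).2 rfl]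
    simp [mk_zero]

/-- Vanishing of the top Koszul homology gives an element of `(x_1,…,x_n)` regular on `M`. -/
theorem exists_regular [Module.Finite (MvPolynomial (Fin n) K) M] {l : List (Fin n)}
    (h : Ex K (topN : (Fin n → ℤ) → AddSubgroup M) l l.length 0) :
    ∃ r ∈ maxIdeal K n, IsSMulRegular M r := by
  have hs : ∀ x : M, (∀ v, (X v : MvPolynomial (Fin n) K) • x = 0) → x = 0 := by
    intro x hx
    obtain ⟨w, hw, hw'⟩ := h _ (topChain_mem l x 0) (dd_topChain l x fun v _ => hx v)
    rw [hom_gt l (by omega) hw, map_zero] at hw'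
    exact (topChain_eq_zero l x).1 hw'.symm
  have : Subsingleton ((MvPolynomial (Fin n) K ⧸ maxIdeal K n) →ₗ[MvPolynomial (Fin n) K] M) := by
    refine ⟨fun f g => ?_⟩
    rw [← sub_eq_zero]
    refine LinearMap.ext fun y => ?_
    have h1 : (f - g) (Submodule.Quotient.mk 1) = 0 := by
      refine hs _ fun v => ?_
      rw [← map_smul, ← Submodule.Quotient.mk_smul,
        (Submodule.Quotient.mk_eq_zero (maxIdeal K n)).2, map_zero]
      rw [smul_eq_mul, mul_one]
      exact Ideal.subset_span ⟨v, rfl⟩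
    obtain ⟨p, rfl⟩ := Submodule.Quotient.mk_surjective _ y
    have : (Submodule.Quotient.mk p : MvPolynomial (Fin n) K ⧸ maxIdeal K n)
        = p • Submodule.Quotient.mk 1 := by
      rw [← Submodule.Quotient.mk_smul, smul_eq_mul, mul_one]
    rw [this, map_smul, h1, smul_zero, LinearMap.zero_apply]
  obtain ⟨r, hr, hr'⟩ := IsSMulRegular.subsingleton_linearMap_iff.1 this
  rw [Ideal.annihilator_quotient] at hr
  exact ⟨r, hr, hr'⟩

/-- Koszul homology of `M / r M`, for `r` regular on `M`. -/
theorem ex_modr {r : MvPolynomial (Fin n) K} (hr : IsSMulRegular M r) {l : List (Fin n)}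
    (hn : l.Nodup) {j : ℤ} {c : Fin n → ℤ}
    (h1 : Ex K (topN : (Fin n → ℤ) → AddSubgroup M) l (j - 1) c)
    (h2 : Ex K (topN : (Fin n → ℤ) → AddSubgroup M) l j c) :
    Ex K (topN : (Fin n → ℤ) → AddSubgroup (QuotSMulTop r M)) l j c := by
  intro z hz hdz
  obtain ⟨z, hz', rfl⟩ := exists_lift (modr M r) (Submodule.mkQ_surjective _) hn hz
  rw [← mapK_dd] at hdz
  obtain ⟨y, hy, hyz⟩ := exists_of_mapK_modr hn (top_sys.dd_mem l hz') hdz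
  have hdy : dd K l y = 0 := smul_KT_inj hr l (by rw [← map_smul, hyz, dd_dd, smul_zero])
  obtain ⟨w, hw, rfl⟩ := h1 y hy hdy
  rw [sub_add_cancel] at hw
  obtain ⟨u, hu, hdu⟩ := h2 (z - r • w) (sub_mem hz' (top_smul r l hw))
    (by rw [map_sub, map_smul, hyz, sub_self])
  exact ⟨mapK (modr M r) l u, mapK_top _ hu, by
    rw [← mapK_dd, hdu, mapK_sub, mapK_modr_smul, sub_zero]⟩

/-- The coefficient of a chain in homological degree `0`. -/
def botCoeff : ∀ l : List (Fin n), KT M l → M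
  | [], z => z
  | _ :: l, z => botCoeff l z.1

/-- The chain `x` of homological degree `0`. -/
def botChain : ∀ l : List (Fin n), M → KT M l
  | [], x => x
  | v :: l, x => mk v (botChain l x) 0

theorem botCoeff_botChain (l : List (Fin n)) (x : M) : botCoeff l (botChain l x) = x := by
  induction l with
  | nil => rfl
  | cons v l ih => exact ih

theorem botChain_mem (l : List (Fin n)) (x : M) (c : Fin n → ℤ) :
    botChain l x ∈ hom topN l 0 c := by
  induction l with
  | nil => exact (mem_hom_nil_zero (N := topN) (x := x)).2 (AddSubgroup.mem_top x)
  | cons v l ih => exact mem_hom_mk.2 ⟨ih, zero_mem _⟩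

theorem dd_botChain (l : List (Fin n)) (x : M) : dd K l (botChain l x) = 0 := by
  induction l with
  | nil => rfl
  | cons v l ih =>
    change dd K _ (mk v _ 0) = 0
    rw [dd_mk, ih]
    simp [mk_zero]

theorem botCoeff_add (l : List (Fin n)) (y z : KT M l) :
    botCoeff l (y + z) = botCoeff l y + botCoeff l z := by
  induction l with
  | nil => rfl
  | cons v l ih => exact ih _ _

theorem botCoeff_smul (r : MvPolynomial (Fin n) K) (l : List (Fin n)) (z : KT M l) :
    botCoeff l (r • z) = r • botCoeff l z := by
  induction l with
  | nil => rfl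
  | cons v l ih => exact ih _

theorem botCoeff_dd (l : List (Fin n)) (z : KT M l) :
    botCoeff l (dd K l z) ∈ maxIdeal K n • (⊤ : Submodule (MvPolynomial (Fin n) K) M) := by
  induction l with
  | nil => exact zero_mem _
  | cons v l ih =>
    obtain ⟨a, b, rfl⟩ := exists_mk z
    change botCoeff l (dd K l a + (X v : MvPolynomial (Fin n) K) • b) ∈ _
    rw [botCoeff_add, botCoeff_smul]
    exact add_mem (ih a) (Submodule.smul_mem_smul (Ideal.subset_span ⟨v, rfl⟩) trivial)

/-- If the Koszul homology in degree `0` vanishes, then `M = m M`. -/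
theorem top_eq_of_ex_zero {l : List (Fin n)} {c : Fin n → ℤ}
    (h : Ex K (topN : (Fin n → ℤ) → AddSubgroup M) l 0 c) :
    maxIdeal K n • (⊤ : Submodule (MvPolynomial (Fin n) K) M) = ⊤ := by
  refine eq_top_iff.2 fun x _ => ?_
  obtain ⟨w, -, hw⟩ := h _ (botChain_mem l x c) (dd_botChain l x)
  have := botCoeff_dd (K := K) l w
  rwa [hw, botCoeff_botChain] at this

theorem smul_top_modr {r : MvPolynomial (Fin n) K} (hr : r ∈ maxIdeal K n)
    (hI : maxIdeal K n • (⊤ : Submodule (MvPolynomial (Fin n) K) M) ≠ ⊤) :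
    maxIdeal K n • (⊤ : Submodule (MvPolynomial (Fin n) K) (QuotSMulTop r M)) ≠ ⊤ := by
  by_contra eq
  absurd congrArg (Submodule.comap (Submodule.mkQ _)) eq
  simpa [Submodule.comap_smul_top_of_surjective (maxIdeal K n) _ (Submodule.mkQ_surjective _),
    Submodule.smul_mono_left ((Ideal.span_singleton_le_iff_mem (maxIdeal K n)).mpr hr),
    ← Submodule.ideal_span_singleton_smul] using hI

end

/-- Depth sensitivity of the Koszul complex: vanishing of the Koszul homology in the top `d`
degrees gives a regular sequence of length `d`. -/
theorem regular_of_ex {l : List (Fin n)} (hn : l.Nodup) (d : ℕ) :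
    ∀ (M : Type*) [AddCommGroup M] [Module (MvPolynomial (Fin n) K) M]
      [Module.Finite (MvPolynomial (Fin n) K) M],
      maxIdeal K n • (⊤ : Submodule (MvPolynomial (Fin n) K) M) ≠ ⊤ →
      (∀ j : ℤ, (l.length : ℤ) - d < j → Ex K (topN : (Fin n → ℤ) → AddSubgroup M) l j 0) →
      ∃ rs : List (MvPolynomial (Fin n) K), rs.length = d ∧ (∀ r ∈ rs, r ∈ maxIdeal K n) ∧
        RingTheory.Sequence.IsRegular M rs := by
  induction d with
  | zero =>
    intro M _ _ _ hM _
    refine ⟨[], rfl, by simp, ?_⟩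
    have : Nontrivial M := by
      by_contra h
      rw [not_nontrivial_iff_subsingleton] at h
      exact hM (Subsingleton.elim _ _)
    exact RingTheory.Sequence.IsRegular.nil _ _
  | succ d ih =>
    intro M _ _ _ hM h
    push_cast at h
    obtain ⟨r, hr, hreg⟩ := exists_regular (h l.length (by omega))
    obtain ⟨rs, h1, h2, h3⟩ := ih (QuotSMulTop r M) (smul_top_modr hr hM) fun j hj =>
      ex_modr hreg hn (h _ (by omega)) (h _ (by omega))
    exact ⟨r :: rs, by simp [h1], by simpa using ⟨hr, h2⟩, .cons hreg h3⟩

/-- The depth of `R / I` in terms of Koszul homology. -/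
theorem le_depthQuot_iff {I : Ideal (MvPolynomial (Fin n) K)} (hI : I ≤ maxIdeal K n) {k : ℕ}
    (hk : k ≤ n) : n - k ≤ depthQuot K n I ↔
      ∀ j : ℤ, (k : ℤ) < j → Ex K (topN : (Fin n → ℤ) → AddSubgroup (MvPolynomial (Fin n) K ⧸ I))
        (List.finRange n) j 0 := by
  have hM : maxIdeal K n • (⊤ : Submodule (MvPolynomial (Fin n) K) (MvPolynomial (Fin n) K ⧸ I))
      ≠ ⊤ := by
    intro h
    have h2 : (1 : MvPolynomial (Fin n) K) ∈ Submodule.comap (Submodule.mkQ I)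
        (maxIdeal K n • (⊤ : Submodule (MvPolynomial (Fin n) K) (MvPolynomial (Fin n) K ⧸ I))) := by
      rw [h]; trivial
    rw [Submodule.comap_smul_top_of_surjective _ _ (Submodule.mkQ_surjective _)] at h2
    have h3 : (1 : MvPolynomial (Fin n) K) ∈ maxIdeal K n := by
      have : maxIdeal K n • (⊤ : Submodule (MvPolynomial (Fin n) K) (MvPolynomial (Fin n) K)) ⊔
        (Submodule.mkQ I).ker ≤ maxIdeal K n := by
        rw [Submodule.ker_mkQ]
        exact sup_le Ideal.mul_le_left hI
      exact this h2
    have h4 : maxIdeal K n ≤ RingHom.ker (constantCoeff : MvPolynomial (Fin n) K →+* K) := by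
      refine Ideal.span_le.2 ?_
      rintro _ ⟨v, rfl⟩
      simp
    have := h4 h3
    simp at this
  have hlen : (List.finRange n).length = n := List.length_finRange
  have hbdd : ∀ rs : List (MvPolynomial (Fin n) K), (∀ r ∈ rs, r ∈ maxIdeal K n) →
      RingTheory.Sequence.IsRegular (MvPolynomial (Fin n) K ⧸ I) rs → rs.length ≤ n := by
    intro rs h1 h2
    by_contra h3
    exact hM (top_eq_of_ex_zero (c := 0) (ex_of_regular (List.nodup_finRange n)
      (List.mem_finRange) rs _ h1 h2.1 0 0 (by rw [hlen]; omega)))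
  have hB : BddAbove {d : ℕ | ∃ rs : List (MvPolynomial (Fin n) K), rs.length = d ∧
      (∀ r ∈ rs, r ∈ maxIdeal K n) ∧
      RingTheory.Sequence.IsRegular ((MvPolynomial (Fin n) K) ⧸ I) rs} := by
    refine ⟨n, ?_⟩
    rintro _ ⟨rs, rfl, h1, h2⟩
    exact hbdd rs h1 h2
  constructor
  · intro h j hj
    obtain ⟨rs, h1, h2, h3⟩ := Nat.sSup_mem (s := {d : ℕ | ∃ rs : List (MvPolynomial (Fin n) K),
      rs.length = d ∧ (∀ r ∈ rs, r ∈ maxIdeal K n) ∧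
      RingTheory.Sequence.IsRegular ((MvPolynomial (Fin n) K) ⧸ I) rs})
      (by
        obtain ⟨rs, h1, h2, h3⟩ := regular_of_ex (List.nodup_finRange n) 0 _ hM
          (fun j hj z hz _ => by
            rw [hom_gt _ (by simpa using hj) hz]
            exact ⟨0, zero_mem _, map_zero _⟩)
        exact ⟨_, rs, h1, h2, h3⟩) hB
    refine ex_of_regular (List.nodup_finRange n) List.mem_finRange rs _ h2 h3.1 j 0 ?_
    rw [h1, hlen]
    unfold depthQuot at h
    omega
  · intro h
    refine le_csSup hB (regular_of_ex (List.nodup_finRange n) (n - k) _ hM fun j hj => h j ?_)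
    rw [hlen] at hj
    omega

end CoverDepth

namespace CoverDepth

variable {K : Type*} [Field K] {n : ℕ}

/-! ### Monomial ideals and their multigraded Koszul chains -/

/-- The exponent vector of an integer vector (with negative entries truncated to `0`). -/
noncomputable def tn (c : Fin n → ℤ) : Fin n →₀ ℕ :=
  Finsupp.equivFunOnFinite.symm fun i => (c i).toNat

@[simp] theorem tn_apply (c : Fin n → ℤ) (i : Fin n) : tn c i = (c i).toNat := rfl

theorem tn_add {a c : Fin n → ℤ} (ha : ∀ i, 0 ≤ a i) (hc : ∀ i, 0 ≤ c i) :
    tn (a + c) = tn a + tn c := by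
  ext i
  have h1 := ha i
  have h2 := hc i
  simp only [tn_apply, Pi.add_apply, Finsupp.add_apply]
  omega

theorem tn_single (v : Fin n) : tn (Pi.single v 1) = Finsupp.single v 1 := by
  ext i
  by_cases h : i = v
  · subst h; simp
  · simp [Pi.single_eq_of_ne h, Finsupp.single_eq_of_ne h]

theorem single_nonneg (v : Fin n) (i : Fin n) : (0 : ℤ) ≤ (Pi.single v 1 : Fin n → ℤ) i := by
  by_cases h : i = v
  · subst h; simp
  · simp [Pi.single_eq_of_ne h]

/-- The component of multidegree `c` of the span of the monomials whose exponents satisfy `S`. -/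
noncomputable def NS (K : Type*) [Field K] (S : (Fin n → ℤ) → Prop) (c : Fin n → ℤ) :
    AddSubgroup (MvPolynomial (Fin n) K) where
  carrier := {f | ∃ a : K, f = monomial (tn c) a ∧ (a ≠ 0 → S c)}
  zero_mem' := ⟨0, by simp, fun h => absurd rfl h⟩
  add_mem' := by
    rintro _ _ ⟨a, rfl, ha⟩ ⟨b, rfl, hb⟩
    refine ⟨a + b, by simp, fun h => ?_⟩
    by_cases h' : a = 0
    · exact hb fun h'' => h (by rw [h', h'', add_zero])
    · exact ha h'
  neg_mem' := by
    rintro _ ⟨a, rfl, ha⟩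
    exact ⟨-a, by simp, fun h => ha (by simpa using h)⟩

theorem NS_eq_zero {S : (Fin n → ℤ) → Prop} {c : Fin n → ℤ} (hc : ¬ S c)
    {f : MvPolynomial (Fin n) K} (hf : f ∈ NS K S c) : f = 0 := by
  obtain ⟨a, rfl, ha⟩ := hf
  have : a = 0 := by
    by_contra h
    exact hc (ha h)
  rw [this, map_zero]

/-- Upward closed sets of exponent vectors, i.e. those of the monomials in a monomial ideal. -/
structure UpC (S : (Fin n → ℤ) → Prop) : Prop where
  nonneg : ∀ c, S c → ∀ i, 0 ≤ c i
  up : ∀ c c', S c → (∀ i, c i ≤ c' i) → S c'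

theorem NS_mul {S S' : (Fin n → ℤ) → Prop} (hS : UpC S) {a c : Fin n → ℤ} (ha : ∀ i, 0 ≤ a i)
    (h : S c → S' (c + a)) {f : MvPolynomial (Fin n) K} (hf : f ∈ NS K S c) :
    (monomial (tn a) (1 : K)) • f ∈ NS K S' (c + a) := by
  obtain ⟨b, rfl, hb⟩ := hf
  by_cases hb0 : b = 0
  · subst hb0
    rw [map_zero, smul_zero]
    exact zero_mem _
  · refine ⟨b, ?_, fun _ => h (hb hb0)⟩
    rw [smul_eq_mul, monomial_mul, one_mul, add_comm c, tn_add ha (hS.nonneg c (hb hb0))]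

theorem NS_div {S S' : (Fin n → ℤ) → Prop} (hS : UpC S) {a c : Fin n → ℤ} (ha : ∀ i, 0 ≤ a i)
    (h : S' (c + a) → S c) {f : MvPolynomial (Fin n) K} (hf : f ∈ NS K S' (c + a)) :
    ∃ g ∈ NS K S c, (monomial (tn a) (1 : K)) • g = f := by
  obtain ⟨b, rfl, hb⟩ := hf
  by_cases hb0 : b = 0
  · subst hb0
    exact ⟨0, zero_mem _, by simp⟩
  · refine ⟨monomial (tn c) b, ⟨b, rfl, fun _ => h (hb hb0)⟩, ?_⟩
    rw [smul_eq_mul, monomial_mul, one_mul, add_comm c, tn_add ha (hS.nonneg c (h (hb hb0)))]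

theorem X_eq (v : Fin n) :
    (X v : MvPolynomial (Fin n) K) = monomial (tn (Pi.single v 1)) 1 := by
  rw [tn_single]; rfl

theorem NS_sys {S : (Fin n → ℤ) → Prop} (hS : UpC S) : Sys K (NS K S) := by
  intro c v f hf
  rw [X_eq]
  exact NS_mul hS (single_nonneg v) (fun h => hS.up _ _ h fun i => by
    have := single_nonneg v i
    simp only [Pi.add_apply]
    omega) hf

theorem monomial_regular (d : Fin n →₀ ℕ) :
    IsSMulRegular (MvPolynomial (Fin n) K) (monomial d (1 : K)) := by
  intro x y h
  exact mul_left_cancel₀ (by rw [Ne, monomial_eq_zero]; exact one_ne_zero) h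

theorem X_regular (v : Fin n) :
    IsSMulRegular (MvPolynomial (Fin n) K) (X v : MvPolynomial (Fin n) K) :=
  monomial_regular _

theorem hom_eq_zero {M : Type*} [AddCommGroup M] {N : (Fin n → ℤ) → AddSubgroup M}
    (l : List (Fin n)) {j : ℤ} {c : Fin n → ℤ} (h : ∀ c', (∀ i, c' i ≤ c i) → ∀ x ∈ N c', x = 0)
    {z : KT M l} (hz : z ∈ hom N l j c) : z = 0 := by
  induction l generalizing j c with
  | nil =>
    by_cases hj : j = 0
    · subst hj
      exact h c (fun _ => le_rfl) z (mem_hom_nil_zero.1 hz)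
    · exact hom_nil_of_ne hj hz
  | cons v l ih =>
    obtain ⟨a, b, rfl⟩ := exists_mk z
    rw [mem_hom_mk] at hz
    rw [ih h hz.1, ih (fun c' hc' => h c' fun i => ?_) hz.2, mk_zero]
    have h1 := hc' i
    have h2 := single_nonneg v i
    simp only [Pi.sub_apply] at h1
    omega

theorem NS_hom_eq_zero {S : (Fin n → ℤ) → Prop} (hS : UpC S) (l : List (Fin n)) {j : ℤ}
    {c : Fin n → ℤ} (hc : ¬ S c) {z : KT (MvPolynomial (Fin n) K) l}
    (hz : z ∈ hom (NS K S) l j c) : z = 0 :=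
  hom_eq_zero l (fun _ hc' _ hx => NS_eq_zero (fun h => hc (hS.up _ _ h hc')) hx) hz

/-- The component of multidegree `c` of a polynomial. -/
noncomputable def proj (c : Fin n → ℤ) (f : MvPolynomial (Fin n) K) : MvPolynomial (Fin n) K :=
  open Classical in if ∀ i, 0 ≤ c i then monomial (tn c) (coeff (tn c) f) else 0

theorem proj_add (c : Fin n → ℤ) (f g : MvPolynomial (Fin n) K) :
    proj c (f + g) = proj c f + proj c g := by
  unfold proj
  split_ifs
  · rw [coeff_add, map_add]
  · rw [add_zero]

theorem proj_neg (c : Fin n → ℤ) (f : MvPolynomial (Fin n) K) : proj c (-f) = - proj c f := by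
  unfold proj
  split_ifs
  · rw [coeff_neg, map_neg]
  · rw [neg_zero]

theorem proj_X_smul (c : Fin n → ℤ) (v : Fin n) (f : MvPolynomial (Fin n) K) :
    proj c ((X v : MvPolynomial (Fin n) K) • f) =
      (X v : MvPolynomial (Fin n) K) • proj (c - Pi.single v 1) f := by
  unfold proj
  by_cases h : ∀ i, 0 ≤ (c - Pi.single v 1 : Fin n → ℤ) i
  · have h' : ∀ i, 0 ≤ c i := fun i => by
      have h1 := h i
      have h2 := single_nonneg v i
      simp only [Pi.sub_apply] at h1
      omega
    have h3 : tn c = Finsupp.single v 1 + tn (c - Pi.single v 1) := by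
      rw [← tn_single, ← tn_add (single_nonneg v) h, add_sub_cancel]
    rw [if_pos h, if_pos h', smul_eq_mul, smul_eq_mul, h3, coeff_X_mul, X, monomial_mul, one_mul]
  · rw [if_neg h, smul_zero]
    split_ifs with h'
    · rw [smul_eq_mul, coeff_X_mul', if_neg, map_zero]
      intro h1
      apply h
      intro i
      rw [Finsupp.mem_support_iff, tn_apply] at h1
      have h2 := h' i
      by_cases hi : i = v
      · subst hi
        simp only [Pi.sub_apply, Pi.single_eq_same]
        omega
      · simpa [Pi.single_eq_of_ne hi] using h2
    · rfl

/-- The component of multidegree `c` of a Koszul chain. -/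
noncomputable def pr : ∀ l : List (Fin n), (Fin n → ℤ) →
    KT (MvPolynomial (Fin n) K) l → KT (MvPolynomial (Fin n) K) l
  | [], c, z => proj c z
  | v :: l, c, z => mk v (pr l c z.1) (pr l (c - Pi.single v 1) z.2)

theorem pr_mk {l : List (Fin n)} {v : Fin n} (c : Fin n → ℤ)
    (a b : KT (MvPolynomial (Fin n) K) l) :
    pr (v :: l) c (mk v a b) = mk v (pr l c a) (pr l (c - Pi.single v 1) b) := rfl

theorem pr_add (l : List (Fin n)) (c : Fin n → ℤ) (y z : KT (MvPolynomial (Fin n) K) l) :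
    pr l c (y + z) = pr l c y + pr l c z := by
  induction l generalizing c with
  | nil => exact proj_add c _ _
  | cons v l ih =>
    obtain ⟨a, b, rfl⟩ := exists_mk y
    obtain ⟨a', b', rfl⟩ := exists_mk z
    rw [mk_add, pr_mk, pr_mk, pr_mk, mk_add, ih, ih]

theorem pr_neg (l : List (Fin n)) (c : Fin n → ℤ) (z : KT (MvPolynomial (Fin n) K) l) :
    pr l c (-z) = - pr l c z := by
  induction l generalizing c with
  | nil => exact proj_neg c _
  | cons v l ih =>
    obtain ⟨a, b, rfl⟩ := exists_mk z
    change mk v (pr l c (-a)) (pr l _ (-b)) = mk v (- pr l c a) (- pr l _ b)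
    rw [ih, ih]

theorem pr_X_smul (l : List (Fin n)) (c : Fin n → ℤ) (v : Fin n)
    (z : KT (MvPolynomial (Fin n) K) l) : pr l c ((X v : MvPolynomial (Fin n) K) • z) =
      (X v : MvPolynomial (Fin n) K) • pr l (c - Pi.single v 1) z := by
  induction l generalizing c with
  | nil => exact proj_X_smul c v _
  | cons w l ih =>
    obtain ⟨a, b, rfl⟩ := exists_mk z
    rw [smul_mk, pr_mk, pr_mk, smul_mk, ih, ih, sub_right_comm]

theorem pr_dd (l : List (Fin n)) (c : Fin n → ℤ) (z : KT (MvPolynomial (Fin n) K) l) :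
    pr l c (dd K l z) = dd K l (pr l c z) := by
  induction l generalizing c with
  | nil =>
    change proj c 0 = 0
    have h := proj_add c (0 : MvPolynomial (Fin n) K) 0
    simpa using h
  | cons v l ih =>
    obtain ⟨a, b, rfl⟩ := exists_mk z
    rw [dd_mk, pr_mk, pr_mk, dd_mk, pr_add, pr_neg, ih, ih, pr_X_smul]

/-- The exponent vector of a monomial, with integer entries. -/
def toZ (d : Fin n →₀ ℕ) : Fin n → ℤ := fun i => (d i : ℤ)

theorem toZ_tn {c : Fin n → ℤ} (hc : ∀ i, 0 ≤ c i) : toZ (tn c) = c := by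
  funext i
  have := hc i
  simp only [toZ, tn_apply]
  omega

theorem tn_toZ (d : Fin n →₀ ℕ) : tn (toZ d) = d := by
  ext i
  simp [toZ]

theorem toZ_inj : Function.Injective (toZ : (Fin n →₀ ℕ) → (Fin n → ℤ)) :=
  Function.LeftInverse.injective tn_toZ

/-- `I` is the monomial ideal spanned by the monomials with exponent in `S`. -/
def MonI (I : Ideal (MvPolynomial (Fin n) K)) (S : (Fin n → ℤ) → Prop) : Prop :=
  ∀ f, f ∈ I ↔ ∀ d, coeff d f ≠ 0 → S (toZ d)

/-- Chains with coefficients in the ideal `I`. -/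
noncomputable abbrev idN (I : Ideal (MvPolynomial (Fin n) K)) :
    (Fin n → ℤ) → AddSubgroup (MvPolynomial (Fin n) K) := fun _ => I.toAddSubgroup

theorem NS_le {I : Ideal (MvPolynomial (Fin n) K)} {S : (Fin n → ℤ) → Prop} (hI : MonI I S)
    (hS : UpC S) (c : Fin n → ℤ) : NS K S c ≤ idN I c := by
  rintro _ ⟨a, rfl, ha⟩
  refine (hI _).2 fun d hd => ?_
  rw [coeff_monomial] at hd
  split_ifs at hd with h
  · rw [← h, toZ_tn (hS.nonneg c (ha hd))]
    exact ha hd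
  · exact absurd rfl hd

theorem proj_mem {I : Ideal (MvPolynomial (Fin n) K)} {S : (Fin n → ℤ) → Prop} (hI : MonI I S)
    (c : Fin n → ℤ) {f : MvPolynomial (Fin n) K} (hf : f ∈ I) : proj c f ∈ NS K S c := by
  unfold proj
  split_ifs with h
  · refine ⟨_, rfl, fun h' => ?_⟩
    have := (hI f).1 hf _ h'
    rwa [toZ_tn h] at this
  · exact zero_mem _

theorem proj_eq {S : (Fin n → ℤ) → Prop} (hS : UpC S)
    (c : Fin n → ℤ) {f : MvPolynomial (Fin n) K} (hf : f ∈ NS K S c) : proj c f = f := by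
  obtain ⟨a, rfl, ha⟩ := hf
  unfold proj
  split_ifs with h
  · rw [coeff_monomial, if_pos rfl]
  · have : a = 0 := by
      by_contra h'
      exact h (hS.nonneg c (ha h'))
    rw [this, map_zero]

theorem pr_mem {I : Ideal (MvPolynomial (Fin n) K)} {S : (Fin n → ℤ) → Prop} (hI : MonI I S)
    (l : List (Fin n)) {j : ℤ} (c c' : Fin n → ℤ) {z : KT (MvPolynomial (Fin n) K) l}
    (hz : z ∈ hom (idN I) l j c') : pr l c z ∈ hom (NS K S) l j c := by
  induction l generalizing j c c' with
  | nil =>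
    by_cases hj : j = 0
    · subst hj
      exact mem_hom_nil_zero.2 (proj_mem hI c (mem_hom_nil_zero.1 hz))
    · rw [hom_nil_of_ne hj hz]
      have : pr [] c (0 : KT (MvPolynomial (Fin n) K) []) = 0 := by
        have h := pr_add [] c (0 : KT (MvPolynomial (Fin n) K) []) 0
        simpa using h
      rw [this]
      exact zero_mem _
  | cons v l ih =>
    obtain ⟨a, b, rfl⟩ := exists_mk z
    rw [mem_hom_mk] at hz
    rw [pr_mk, mem_hom_mk]
    exact ⟨ih c c' hz.1, ih _ _ hz.2⟩

theorem pr_eq {S : (Fin n → ℤ) → Prop} (hS : UpC S)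
    (l : List (Fin n)) {j : ℤ} (c : Fin n → ℤ) {z : KT (MvPolynomial (Fin n) K) l}
    (hz : z ∈ hom (NS K S) l j c) : pr l c z = z := by
  induction l generalizing j c with
  | nil =>
    by_cases hj : j = 0
    · subst hj
      exact proj_eq hS c (mem_hom_nil_zero.1 hz)
    · rw [hom_nil_of_ne hj hz]
      have h := pr_add [] c (0 : KT (MvPolynomial (Fin n) K) []) 0
      simpa using h
  | cons v l ih =>
    obtain ⟨a, b, rfl⟩ := exists_mk z
    rw [mem_hom_mk] at hz
    rw [pr_mk, ih _ hz.1, ih _ hz.2]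

theorem sum_mk {ι : Type*} (F : Finset ι) {l : List (Fin n)} {v : Fin n}
    (a b : ι → KT (MvPolynomial (Fin n) K) l) :
    ∑ i ∈ F, mk v (a i) (b i) = mk v (∑ i ∈ F, a i) (∑ i ∈ F, b i) := by
  classical
  induction F using Finset.induction_on with
  | empty => rfl
  | insert i F hi ih => rw [Finset.sum_insert hi, Finset.sum_insert hi, Finset.sum_insert hi, ih,
      mk_add]

/-- A chain is the sum of its multigraded components. -/
theorem sum_pr (l : List (Fin n)) (z : KT (MvPolynomial (Fin n) K) l) :
    ∃ B : Finset (Fin n → ℤ), ∀ F, B ⊆ F → ∑ c ∈ F, pr l c z = z := by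
  classical
  induction l with
  | nil =>
    let f : MvPolynomial (Fin n) K := z
    refine ⟨f.support.image toZ, fun F hF => ?_⟩
    change ∑ c ∈ F, proj c f = f
    rw [← Finset.sum_subset hF, Finset.sum_image toZ_inj.injOn]
    · conv_rhs => rw [f.as_sum]
      refine Finset.sum_congr rfl fun d _ => ?_
      unfold proj
      rw [if_pos (fun i => by simp [toZ]), tn_toZ]
    · intro c _ hc
      unfold proj
      split_ifs with h
      · have : coeff (tn c) f = 0 := by
          by_contra h'
          exact hc (Finset.mem_image.2 ⟨tn c, mem_support_iff.2 h', toZ_tn h⟩)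
        rw [this, map_zero]
      · rfl
  | cons v l ih =>
    obtain ⟨a, b, rfl⟩ := exists_mk z
    obtain ⟨A, hA⟩ := ih a
    obtain ⟨B, hB⟩ := ih b
    refine ⟨A ∪ B.image (· + Pi.single v 1), fun F hF => ?_⟩
    have hinj : Function.Injective fun c : Fin n → ℤ => c - Pi.single v 1 :=
      sub_left_injective
    rw [Finset.sum_congr rfl fun c _ => pr_mk c a b, sum_mk,
      hA F (Finset.subset_union_left.trans hF),
      ← Finset.sum_image (f := fun c => pr l c b) (g := fun c => c - Pi.single v 1)
        hinj.injOn, hB]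
    intro c hc
    refine Finset.mem_image.2 ⟨c + Pi.single v 1, hF ?_, add_sub_cancel_right _ _⟩
    exact Finset.mem_union_right _ (Finset.mem_image_of_mem _ hc)

/-- The Koszul homology of a monomial ideal vanishes iff all its multigraded pieces do. -/
theorem ex_idN_iff {I : Ideal (MvPolynomial (Fin n) K)} {S : (Fin n → ℤ) → Prop} (hI : MonI I S)
    (hS : UpC S) (l : List (Fin n)) (j : ℤ) :
    Ex K (idN I) l j 0 ↔ ∀ c, Ex K (NS K S) l j c := by
  have hc : ∀ (j : ℤ) (c : Fin n → ℤ) (z : KT (MvPolynomial (Fin n) K) l),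
      z ∈ hom (NS K S) l j c → z ∈ hom (idN I) l j 0 := by
    intro j c z hz
    have := hom_mono (NS_le hI hS) l hz
    rwa [hom_const _ l j c 0] at this
  constructor
  · intro h c z hz hdz
    obtain ⟨w, hw, hdw⟩ := h z (hc _ _ _ hz) hdz
    exact ⟨pr l c w, pr_mem hI l c _ hw, by rw [← pr_dd, hdw, pr_eq hS l c hz]⟩
  · intro h z hz hdz
    obtain ⟨B, hB⟩ := sum_pr l z
    have hz0 : ∀ c, dd K l (pr l c z) = 0 := by
      intro c
      rw [← pr_dd, hdz]
      have h := pr_add l c (0 : KT (MvPolynomial (Fin n) K) l) 0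
      simpa using h
    choose w hw hdw using fun c => h c (pr l c z) (pr_mem hI l c _ hz) (hz0 c)
    refine ⟨∑ c ∈ B, w c, sum_mem fun c _ => hc _ _ _ (hw c), ?_⟩
    rw [map_sum, Finset.sum_congr rfl fun c _ => hdw c, hB B subset_rfl]

/-- The multigraded Koszul homology of the monomial ideal with exponents `S`, with respect to
any set of variables, vanishes in all degrees `≥ k`. -/
def VV (K : Type*) [Field K] (S : (Fin n → ℤ) → Prop) (k : ℕ) : Prop :=
  ∀ l : List (Fin n), l.Nodup → ∀ j : ℤ, (k : ℤ) ≤ j → ∀ c, Ex K (NS K S) l j c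

/-- Exactness with respect to `v :: l` passes to `l`, by induction on `c_v`: up to a boundary, a cycle
is `x_v` times a cycle of multidegree `c - e_v`, and there are no nonzero chains with `c_v < 0`. -/
theorem ex_uncons {S : (Fin n → ℤ) → Prop} (hS : UpC S) {v : Fin n} {l : List (Fin n)} {j : ℤ}
    (h : ∀ c, Ex K (NS K S) (v :: l) j c) (m : ℕ) :
    ∀ c : Fin n → ℤ, c v < m → Ex K (NS K S) l j c := by
  induction m with
  | zero =>
    intro c hc z hz _
    rw [NS_hom_eq_zero hS l (fun h' => by have := hS.nonneg c h' v; simp at hc; omega) hz]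
    exact ⟨0, zero_mem _, map_zero _⟩
  | succ m ih =>
    intro c hc z hz hdz
    obtain ⟨w, hw, hdw⟩ := h c (mk v z 0) (mem_hom_mk.2 ⟨hz, zero_mem _⟩)
      (by rw [dd_mk, hdz]; simp [mk_zero])
    obtain ⟨a, b, rfl⟩ := exists_mk w
    rw [mem_hom_mk, add_sub_cancel_right] at hw
    rw [dd_mk, mk_inj, neg_eq_zero] at hdw
    obtain ⟨b', hb', rfl⟩ := ih (c - Pi.single v 1) (by simp at hc ⊢; omega) b hw.2 hdw.2
    refine ⟨a + (X v : MvPolynomial (Fin n) K) • b', add_mem hw.1 ((NS_sys hS).smul v l hb'), ?_⟩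
    rw [map_add, map_smul, hdw.1]

theorem VV_of_full {S : (Fin n → ℤ) → Prop} (hS : UpC S) {k : ℕ}
    (h : ∀ j : ℤ, (k : ℤ) ≤ j → ∀ c, Ex K (NS K S) (List.finRange n) j c) : VV K S k := by
  intro l hl j hj
  have key : ∀ l' : List (Fin n), (∀ c, Ex K (NS K S) (l' ++ l) j c) →
      ∀ c, Ex K (NS K S) l j c := by
    intro l'
    induction l' with
    | nil => exact fun h => h
    | cons v l' ih =>
      intro h
      refine ih fun c => ex_uncons hS h ((c v).toNat + 1) c ?_
      have := Int.self_le_toNat (c v)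
      push_cast
      omega
  refine key ((List.finRange n).filter (· ∉ l)) fun c => (h j hj c).perm ?_
  rw [List.perm_ext_iff_of_nodup (List.nodup_finRange n)]
  · intro v
    by_cases hv : v ∈ l <;> simp [hv]
  · refine List.nodup_append.2 ⟨(List.nodup_finRange n).filter _, hl, ?_⟩
    intro a ha b hb hab
    subst hab
    simp at ha
    exact ha hb

/-- Koszul homology of a monomial ideal is inherited by colon ideals with respect to monomials:
this expresses the general inequality `depth (R / (I : x^a)) ≥ depth (R / I)`. -/
theorem VV_shift {S S' : (Fin n → ℤ) → Prop} (hS : UpC S) {a : Fin n → ℤ} (ha : ∀ i, 0 ≤ a i)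
    (h : ∀ c, (∀ i, 0 ≤ c i) → (S c ↔ S' (c + a))) {k : ℕ} (hV : VV K S' k) : VV K S k := by
  intro l
  generalize hm : l.length = m
  induction m generalizing l with
  | zero =>
    intro _ j hj c z hz _
    have hl := List.length_eq_zero_iff.1 hm
    subst hl
    by_cases hc : ∀ i, 0 ≤ c i
    swap
    · rw [NS_hom_eq_zero hS [] (fun h' => hc (hS.nonneg c h')) hz]
      exact ⟨0, zero_mem _, map_zero _⟩
    by_cases hj0 : j = 0
    · subst hj0
      have h1 := hV [] List.nodup_nil 0 hj (c + a) (one ((monomial (tn a) (1 : K)) • z))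
        (mem_hom_nil_zero.2 (NS_mul hS ha (h c hc).1 (mem_hom_nil_zero.1 hz))) rfl
      obtain ⟨w, hw, hdw⟩ := h1
      refine ⟨0, zero_mem _, ?_⟩
      rw [map_zero]
      symm
      apply monomial_regular (tn a)
      change (monomial (tn a) (1 : K)) • z = (monomial (tn a) (1 : K)) • 0
      rw [smul_zero]
      exact hdw.symm
    · rw [hom_nil_of_ne hj0 hz]
      exact ⟨0, zero_mem _, map_zero _⟩
  | succ m ih =>
    intro hl j hj c
    by_cases hv : ∃ v ∈ l, c v ≤ 0
    · obtain ⟨v, hvl, hv⟩ := hv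
      have hp := List.perm_cons_erase hvl
      refine Ex.perm hp.symm (Ex.cons_of_zero
        (ih _ (by rw [List.length_erase_of_mem hvl, hm]; rfl) (hl.erase v) j hj c) fun b hb => ?_)
      refine NS_hom_eq_zero hS _ (fun h' => ?_) hb
      have := hS.nonneg _ h' v
      simp at this
      omega
    · push Not at hv
      intro z hz hdz
      by_cases hc : ∀ i, 0 ≤ c i
      swap
      · rw [NS_hom_eq_zero hS l (fun h' => hc (hS.nonneg c h')) hz]
        exact ⟨0, zero_mem _, map_zero _⟩
      have h1 : (monomial (tn a) (1 : K)) • z ∈ hom (NS K S') l j (c + a) := by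
        rw [← hom_shift, ← mapK_lsmul]
        refine map_hom _ (fun c x hx => ?_) l hz
        by_cases hSc : S c
        · exact NS_mul hS ha (h c (hS.nonneg c hSc)).1 hx
        · rw [NS_eq_zero hSc hx, map_zero]
          exact zero_mem _
      obtain ⟨w, hw, hdw⟩ := hV l hl j hj _ _ h1 (by rw [map_smul, hdz, smul_zero])
      rw [← hom_shift] at hw
      have hnear : ∀ c', Near l c c' → ∀ i, 0 ≤ c' i := by
        intro c' hc' i
        by_cases hi : i ∈ l
        · have := (hc' i).2.1
          have := hv i hi
          omega
        · rw [(hc' i).2.2 hi]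
          exact hc i
      obtain ⟨y, hy, hyw⟩ := lift_hom
        (LinearMap.lsmul (MvPolynomial (Fin n) K) _ (monomial (tn a) (1 : K))) (N := NS K S) l hl
        (fun c' hc' x hx => NS_div hS ha (h c' (hnear c' hc')).2 hx) hw
      rw [mapK_lsmul] at hyw
      subst hyw
      rw [map_smul] at hdw
      exact ⟨y, hy, smul_KT_inj (monomial_regular _) l hdw⟩

/-! ### The depth of a monomial quotient -/

theorem mapK_mkQ_eq_zero {I : Ideal (MvPolynomial (Fin n) K)} (l : List (Fin n)) {j : ℤ}
    {c : Fin n → ℤ} {z : KT (MvPolynomial (Fin n) K) l} (hz : z ∈ hom (idN I) l j c) :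
    mapK (Submodule.mkQ I) l z = 0 := by
  induction l generalizing j c with
  | nil =>
    by_cases hj : j = 0
    · subst hj
      exact (Submodule.Quotient.mk_eq_zero I).2 (mem_hom_nil_zero.1 hz)
    · rw [hom_nil_of_ne hj hz]
      exact map_zero _
  | cons v l ih =>
    obtain ⟨a, b, rfl⟩ := exists_mk z
    rw [mem_hom_mk] at hz
    rw [mapK_mk, ih hz.1, ih hz.2, mk_zero]

theorem mem_idN_of_mapK {I : Ideal (MvPolynomial (Fin n) K)} (l : List (Fin n)) {j : ℤ}
    {c : Fin n → ℤ} {z : KT (MvPolynomial (Fin n) K) l} (hz : z ∈ hom topN l j c)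
    (h : mapK (Submodule.mkQ I) l z = 0) : z ∈ hom (idN I) l j c :=
  hom_ker (Submodule.mkQ I) (fun _ _ _ hx => (Submodule.Quotient.mk_eq_zero I).1 hx) l hz h

theorem idN_top {I : Ideal (MvPolynomial (Fin n) K)} (l : List (Fin n)) {j : ℤ}
    {c : Fin n → ℤ} {z : KT (MvPolynomial (Fin n) K) l} (hz : z ∈ hom (idN I) l j c) :
    z ∈ hom topN l j c :=
  hom_mono (fun _ => le_top) l hz

theorem ex_quot {I : Ideal (MvPolynomial (Fin n) K)} {l : List (Fin n)} (hl : l.Nodup) {j : ℤ}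
    {c : Fin n → ℤ}
    (hP : Ex K (topN : (Fin n → ℤ) → AddSubgroup (MvPolynomial (Fin n) K)) l (j + 1) c)
    (h : Ex K (idN I) l j c) :
    Ex K (topN : (Fin n → ℤ) → AddSubgroup (MvPolynomial (Fin n) K ⧸ I)) l (j + 1) c := by
  intro z hz hdz
  obtain ⟨z, hz', rfl⟩ := exists_lift (Submodule.mkQ I) (Submodule.mkQ_surjective _) hl hz
  rw [← mapK_dd] at hdz
  have h1 := top_sys.dd_mem (K := K) l hz'
  rw [add_sub_cancel_right] at h1
  obtain ⟨w, hw, hdw⟩ := h _ (mem_idN_of_mapK l h1 hdz) (dd_dd l z)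
  obtain ⟨u, hu, hdu⟩ := hP (z - w) (sub_mem hz' (idN_top l hw)) (by rw [map_sub, hdw, sub_self])
  exact ⟨mapK (Submodule.mkQ I) l u, mapK_top _ hu, by
    rw [← mapK_dd, hdu, mapK_sub, mapK_mkQ_eq_zero l hw, sub_zero]⟩

theorem ex_of_quot {I : Ideal (MvPolynomial (Fin n) K)} {l : List (Fin n)} (hl : l.Nodup) {j : ℤ}
    {c : Fin n → ℤ}
    (hP : Ex K (topN : (Fin n → ℤ) → AddSubgroup (MvPolynomial (Fin n) K)) l j c)
    (h : Ex K (topN : (Fin n → ℤ) → AddSubgroup (MvPolynomial (Fin n) K ⧸ I)) l (j + 1) c) :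
    Ex K (idN I) l j c := by
  intro z hz hdz
  obtain ⟨w, hw, rfl⟩ := hP z (idN_top l hz) hdz
  obtain ⟨y, hy, hdy⟩ := h (mapK (Submodule.mkQ I) l w) (mapK_top _ hw)
    (by rw [← mapK_dd, mapK_mkQ_eq_zero l hz])
  obtain ⟨y, hy', rfl⟩ := exists_lift (Submodule.mkQ I) (Submodule.mkQ_surjective _) hl hy
  have h1 := top_sys.dd_mem (K := K) l hy'
  rw [add_sub_cancel_right] at h1
  refine ⟨w - dd K l y, mem_idN_of_mapK l (sub_mem hw h1) ?_, by rw [map_sub, dd_dd, sub_zero]⟩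
  rw [mapK_sub, mapK_dd, hdy, sub_self]

/-- The depth of the quotient by a monomial ideal in terms of multigraded Koszul homology. -/
theorem le_depthQuot_iff_VV {I : Ideal (MvPolynomial (Fin n) K)} {S : (Fin n → ℤ) → Prop}
    (hI : MonI I S) (hS : UpC S) (hIm : I ≤ maxIdeal K n)
    (hP : ∀ j : ℤ, 1 ≤ j → Ex K (topN : (Fin n → ℤ) → AddSubgroup (MvPolynomial (Fin n) K))
      (List.finRange n) j 0) {k : ℕ} (hk : 1 ≤ k) (hkn : k ≤ n) :
    n - k ≤ depthQuot K n I ↔ VV K S k := by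
  rw [le_depthQuot_iff hIm hkn]
  constructor
  · intro h
    refine VV_of_full hS fun j hj => (ex_idN_iff hI hS _ j).1 ?_
    exact ex_of_quot (List.nodup_finRange n) (hP j (by omega)) (h (j + 1) (by omega))
  · intro h j hj
    have := ex_quot (List.nodup_finRange n) (hP (j - 1 + 1) (by omega))
      ((ex_idN_iff hI hS _ (j - 1)).2 (h _ (List.nodup_finRange n) _ (by omega)))
    rwa [sub_add_cancel] at this

end CoverDepth

namespace CoverDepth

variable {K : Type*} [Field K] {n : ℕ}

/-! ### Koszul homology of powers of cover ideals and ordered matchings -/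

/-- The exponent vectors of the monomials in the `t`-th symbolic power of the cover ideal. -/
def ST (G : SimpleGraph (Fin n)) (t : ℤ) (c : Fin n → ℤ) : Prop :=
  (∀ i, 0 ≤ c i) ∧ ∀ u v, G.Adj u v → t ≤ c u + c v

theorem ST_upC (G : SimpleGraph (Fin n)) (t : ℤ) : UpC (ST G t) where
  nonneg _ h := h.1
  up c c' h hc := ⟨fun i => (h.1 i).trans (hc i), fun u v huv => by
    have := h.2 u v huv
    have := hc u
    have := hc v
    omega⟩

/-- `A` is one side of a bipartition of `G`. -/
def Side (G : SimpleGraph (Fin n)) (A : Set (Fin n)) : Prop :=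
  ∀ u v : Fin n, G.Adj u v → (u ∈ A ↔ v ∉ A)

/-- An ordered matching with endpoints in `l` whose edges `u v`, `u ∈ A`, satisfy
`c_u + c_v = t + 1`, and such that `x^c / x_v` is still in the ideal. -/
def Spec (G : SimpleGraph (Fin n)) (A : Set (Fin n)) (t : ℤ) (c : Fin n → ℤ) (l : List (Fin n))
    {s : ℕ} (u v : Fin s → Fin n) : Prop :=
  (∀ i, u i ∈ A ∧ u i ∈ l ∧ v i ∈ l ∧ G.Adj (u i) (v i) ∧ c (u i) + c (v i) = t + 1 ∧
    ST G t (c - Pi.single (v i) 1)) ∧ ∀ i j, G.Adj (u i) (v j) → i ≤ j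

theorem Spec.mono {G : SimpleGraph (Fin n)} {A : Set (Fin n)} {t : ℤ} {c : Fin n → ℤ}
    {l l' : List (Fin n)} {s : ℕ} {u v : Fin s → Fin n} (h : Spec G A t c l u v) (hl : l ⊆ l') :
    Spec G A t c l' u v :=
  ⟨fun i => by
    obtain ⟨h1, h2, h3, h4⟩ := h.1 i
    exact ⟨h1, hl h2, hl h3, h4⟩, h.2⟩

theorem Spec.isOrderedMatching {G : SimpleGraph (Fin n)} {A : Set (Fin n)} (hA : Side G A) {t : ℤ}
    {c : Fin n → ℤ} {l : List (Fin n)} {s : ℕ} {u v : Fin s → Fin n} (h : Spec G A t c l u v) :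
    IsOrderedMatching G u v := by
  have hadj : ∀ i, G.Adj (u i) (v i) := fun i => (h.1 i).2.2.2.1
  have huA : ∀ i, u i ∈ A := fun i => (h.1 i).1
  have hvA : ∀ i, v i ∉ A := fun i => (hA _ _ (hadj i)).1 (huA i)
  refine ⟨hadj, ?_, fun i j hij => (hA _ _ hij).1 (huA i) (huA j), h.2⟩
  rintro ⟨i, b⟩ ⟨j, b'⟩ hij
  cases b <;> cases b' <;> simp only [Bool.false_eq_true, if_true, if_false] at hij
  · rw [le_antisymm (h.2 i j (hij ▸ hadj i)) (h.2 j i (hij ▸ hadj j))]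
  · exact absurd (hij ▸ huA j) (hvA i)
  · exact absurd (hij ▸ huA i) (hvA j)
  · rw [le_antisymm (h.2 i j (hij ▸ hadj j)) (h.2 j i (hij ▸ hadj i))]

theorem Spec.empty (G : SimpleGraph (Fin n)) (A : Set (Fin n)) (t : ℤ) (c : Fin n → ℤ)
    (l : List (Fin n)) : Spec G A t c l (s := 0) Fin.elim0 Fin.elim0 :=
  ⟨fun i => i.elim0, fun i => i.elim0⟩

/-- A vertex of `l` with `c` minimal among those in `A`, or any vertex if `l` does not meet `A`. -/
theorem exists_min_side (A : Set (Fin n)) (c : Fin n → ℤ) (l : List (Fin n)) (hl : l ≠ []) :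
    ∃ v ∈ l, ∀ w ∈ l, w ∈ A → v ∈ A ∧ c v ≤ c w := by
  classical
  by_cases h : ∃ w ∈ l, w ∈ A
  · obtain ⟨w, hw, hwA⟩ := h
    obtain ⟨v, hv, hmin⟩ := Finset.exists_min_image (l.toFinset.filter (· ∈ A)) c
      ⟨w, by simp [hw, hwA]⟩
    simp only [Finset.mem_filter, List.mem_toFinset] at hv hmin
    exact ⟨v, hv.1, fun w hw hwA => ⟨hv.2, hmin w ⟨hw, hwA⟩⟩⟩
  · push Not at h
    obtain ⟨v, hv⟩ := List.exists_mem_of_ne_nil l hl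
    exact ⟨v, hv, fun w hw hwA => absurd hwA (h w hw)⟩

/-- Adjoining a last edge to an ordered matching. -/
theorem Spec.snoc {G : SimpleGraph (Fin n)} {A : Set (Fin n)} {t : ℤ} {c : Fin n → ℤ}
    {l : List (Fin n)} (hl : l.Nodup) {a b : Fin n} (ha : a ∈ l) (hb : b ∈ l) (haA : a ∈ A)
    (hab : G.Adj a b)
    (htight : c a + c b = t + 1) (hST : ST G t (c - Pi.single b 1))
    (hmin : ∀ w ∈ l, w ∈ A → c a ≤ c w) {s : ℕ} {u v : Fin s → Fin n}
    (h : Spec G A t (c - Pi.single a 1) (l.erase a) u v) :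
    ∃ u' v' : Fin (s + 1) → Fin n, Spec G A t c l u' v' := by
  have hne : ∀ x ∈ l.erase a, x ≠ a := fun x hx => ((List.Nodup.mem_erase_iff hl).1 hx).1
  have hmem : ∀ x ∈ l.erase a, x ∈ l := fun x hx => List.mem_of_mem_erase hx
  refine ⟨Fin.snoc (α := fun _ => Fin n) u a, Fin.snoc (α := fun _ => Fin n) v b, ?_, ?_⟩
  · intro i
    induction i using Fin.lastCases with
    | last =>
      simp only [Fin.snoc_last]
      exact ⟨haA, ha, hb, hab, htight, hST⟩
    | cast i =>
      simp only [Fin.snoc_castSucc]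
      obtain ⟨h1, h2, h3, h4, h5, h6⟩ := h.1 i
      refine ⟨h1, hmem _ h2, hmem _ h3, h4, ?_, (ST_upC G t).up _ _ h6 fun x => ?_⟩
      · simpa [Pi.single_eq_of_ne (hne _ h2), Pi.single_eq_of_ne (hne _ h3)] using h5
      · have := single_nonneg a x
        simp only [Pi.sub_apply]
        omega
  · intro i j
    induction i using Fin.lastCases with
    | last =>
      induction j using Fin.lastCases with
      | last => exact fun _ => le_rfl
      | cast j =>
        simp only [Fin.snoc_last, Fin.snoc_castSucc]
        intro hadj
        -- minimality of `c a` contradicts `x^c / (x_a x_v)` being in the ideal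
        exfalso
        obtain ⟨h1, h2, h3, h4, h5, h6⟩ := h.1 j
        have h7 := h6.2 _ _ hadj
        have h8 := hmin _ (hmem _ h2) h1
        have h9 : a ≠ v j := hadj.ne
        simp only [Pi.sub_apply, Pi.single_eq_same, Pi.single_eq_of_ne (hne _ h2),
          Pi.single_eq_of_ne (hne _ h3), Pi.single_eq_of_ne h9] at h5 h7
        omega
    | cast i =>
      induction j using Fin.lastCases with
      | last => exact fun _ => Fin.le_last _
      | cast j =>
        simp only [Fin.snoc_castSucc]
        intro hadj
        exact Fin.castSucc_le_castSucc_iff.2 (h.2 i j hadj)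

/-- If `x^c / x_v` is in the ideal and no edge from `v` to `l` is tight, multiplication by `x_v` is
bijective on the multigraded pieces occurring in multidegree `c`, so the homology vanishes. -/
theorem ex_of_not_tight {G : SimpleGraph (Fin n)} {t : ℤ} {c : Fin n → ℤ} {l : List (Fin n)}
    {v : Fin n} (hl : (v :: l).Nodup) (hv : ST G t (c - Pi.single v 1))
    (h : ∀ w ∈ l, G.Adj v w → c v + c w ≠ t + 1) (j : ℤ) :
    Ex K (NS K (ST G t)) (v :: l) j c := by
  refine Ex.cone hl (X_regular v) fun c' hc' x hx => ?_
  rw [X_eq]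
  refine NS_div (ST_upC G t) (single_nonneg v) (fun hST => ?_) hx
  have hvl : v ∉ l := (List.nodup_cons.1 hl).1
  have hcv : c' v = c v - 1 := by
    have := (hc' v).2.2 hvl
    simpa using this
  have hne : ∀ w, w ≠ v → (c' + Pi.single v 1 : Fin n → ℤ) w = c' w := fun w hw => by
    simp [Pi.single_eq_of_ne hw]
  have key : ∀ w, G.Adj v w → t ≤ c' v + c' w := by
    intro w hvw
    have h1 := hv.2 v w hvw
    have h2 := hc' w
    have hwv : w ≠ v := hvw.ne'
    simp only [Pi.sub_apply, Pi.single_eq_same, Pi.single_eq_of_ne hwv] at h1 h2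
    by_cases hw : w ∈ l
    · have := h w hw hvw
      omega
    · have := h2.2.2 hw
      omega
  refine ⟨fun i => ?_, fun u w huw => ?_⟩
  · by_cases hi : i = v
    · subst hi
      have := hv.1 i
      simp only [Pi.sub_apply, Pi.single_eq_same] at this
      omega
    · have := hST.1 i
      rwa [hne i hi] at this
  · by_cases hu : u = v
    · subst hu
      exact key w huw
    · by_cases hw : w = v
      · subst hw
        rw [add_comm]
        exact key u huw.symm
      · have := hST.2 u w huw
        rwa [hne u hu, hne w hw] at this

/-- Nonvanishing Koszul homology in degree `j` produces an ordered matching of size at least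
`j`. A variable `x_v` such that `x^c / x_v` is not in the ideal can be dropped from `l`. Otherwise
take `a ∈ A` in `l` with `c_a` minimal: it lies on a tight edge `ab`, and the mapping cone sequence
passes the homology on to `l.erase a`, either in the same degree, or in degree `j - 1` and
multidegree `c - e_a`; in the second case `ab` is appended to the matching found there. -/
theorem exists_spec (K : Type*) [Field K] {G : SimpleGraph (Fin n)} {A : Set (Fin n)}
    (hA : Side G A) (t : ℤ) (m : ℕ) :
    ∀ (l : List (Fin n)), l.length = m → l.Nodup → ∀ (j : ℤ) (c : Fin n → ℤ),
      ¬ Ex K (NS K (ST G t)) l j c →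
      ∃ (s : ℕ) (u v : Fin s → Fin n), j ≤ s ∧ Spec G A t c l u v := by
  induction m with
  | zero =>
    intro l hm hl j c h
    by_cases hj : j ≤ 0
    · exact ⟨0, _, _, by simpa using hj, Spec.empty G A t c l⟩
    · refine absurd (fun z hz _ => ?_) h
      rw [hom_gt l (by rw [hm]; push_cast; omega) hz]
      exact ⟨0, zero_mem _, map_zero _⟩
  | succ m ih =>
    intro l hm hl j c h
    by_cases hj : j ≤ 0
    · exact ⟨0, _, _, by simpa using hj, Spec.empty G A t c l⟩
    have herase : ∀ v ∈ l, (l.erase v).length = m := fun v hv => by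
      rw [List.length_erase_of_mem hv, hm]; rfl
    by_cases hST : ∃ v ∈ l, ¬ ST G t (c - Pi.single v 1)
    · obtain ⟨v, hv, hvS⟩ := hST
      have hp := List.perm_cons_erase hv
      by_cases hE : Ex K (NS K (ST G t)) (l.erase v) j c
      · exact absurd (Ex.perm hp.symm (Ex.cons_of_zero hE fun b hb =>
          NS_hom_eq_zero (ST_upC G t) _ hvS hb)) h
      · obtain ⟨s, u, w, h1, h2⟩ := ih _ (herase v hv) (hl.erase v) j c hE
        exact ⟨s, u, w, h1, h2.mono List.erase_subset⟩
    push Not at hST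
    obtain ⟨a, ha, hmin⟩ := exists_min_side A c l (by rintro rfl; simp at hm)
    have hp := List.perm_cons_erase ha
    by_cases htight : ∃ b ∈ l, G.Adj a b ∧ c a + c b = t + 1
    · obtain ⟨b, hb, hab, hcab⟩ := htight
      have haA : a ∈ A := by
        by_contra hna
        have hbA : b ∈ A := by
          by_contra hnb
          exact hna ((hA _ _ hab).2 hnb)
        exact hna (hmin b hb hbA).1
      by_cases hE : Ex K (NS K (ST G t)) (l.erase a) j c
      · by_cases hE' : Ex K (NS K (ST G t)) (l.erase a) (j - 1) (c - Pi.single a 1)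
        · exact absurd (Ex.perm hp.symm (Ex.cons (NS_sys (ST_upC G t)) hE hE')) h
        · obtain ⟨s, u, w, h1, h2⟩ := ih _ (herase a ha) (hl.erase a) _ _ hE'
          obtain ⟨u', w', h3⟩ := h2.snoc hl ha hb haA hab hcab (hST b hb)
            fun w hw hwA => (hmin w hw hwA).2
          exact ⟨s + 1, u', w', by push_cast; omega, h3⟩
      · obtain ⟨s, u, w, h1, h2⟩ := ih _ (herase a ha) (hl.erase a) j c hE
        exact ⟨s, u, w, h1, h2.mono List.erase_subset⟩
    · push Not at htight
      exact absurd (Ex.perm hp.symm (ex_of_not_tight (hp.nodup_iff.1 hl) (hST a ha)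
        (fun w hw => htight w (List.mem_of_mem_erase hw)) j)) h

theorem two_mul_le_of_matching {G : SimpleGraph (Fin n)} {s : ℕ} {u v : Fin s → Fin n}
    (h : IsOrderedMatching G u v) : 2 * s ≤ n := by
  have := Fintype.card_le_of_injective _ h.2.1
  simp at this
  omega

theorem bddAbove_matching (G : SimpleGraph (Fin n)) :
    BddAbove {s : ℕ | ∃ u v : Fin s → Fin n, IsOrderedMatching G u v} := by
  refine ⟨n, ?_⟩
  rintro s ⟨u, v, h⟩
  have := two_mul_le_of_matching h
  omega

theorem exists_max_matching (G : SimpleGraph (Fin n)) :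
    ∃ u v : Fin (orderedMatchingNumber G) → Fin n, IsOrderedMatching G u v := by
  refine Nat.sSup_mem (s := {s : ℕ | ∃ u v : Fin s → Fin n, IsOrderedMatching G u v}) ?_
    (bddAbove_matching G)
  refine ⟨0, Fin.elim0, Fin.elim0, fun i => i.elim0, fun p => p.1.elim0, fun i => i.elim0,
    fun i => i.elim0⟩

/-- The Koszul homology of the powers of the cover ideal of a bipartite graph vanishes above the
ordered matching number. -/
theorem VV_succ_matching (K : Type*) [Field K] {G : SimpleGraph (Fin n)} {A : Set (Fin n)}
    (hA : Side G A) (t : ℤ) : VV K (ST G t) (orderedMatchingNumber G + 1) := by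
  intro l hl j hj c
  by_contra h
  obtain ⟨s, u, v, h1, h2⟩ := exists_spec K hA t _ l rfl hl j c h
  have := le_csSup (bddAbove_matching G) (⟨u, v, h2.isOrderedMatching hA⟩ :
    s ∈ {s : ℕ | ∃ u v : Fin s → Fin n, IsOrderedMatching G u v})
  unfold orderedMatchingNumber at hj
  push_cast at hj
  omega

/-- The Koszul complex of the variables is exact in positive degrees. -/
theorem ex_top (K : Type*) [Field K] (j : ℤ) (hj : 1 ≤ j) :
    Ex K (topN : (Fin n → ℤ) → AddSubgroup (MvPolynomial (Fin n) K)) (List.finRange n) j 0 := by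
  have hA : Side (⊥ : SimpleGraph (Fin n)) ∅ := fun u v h => absurd h (by simp)
  have hI : MonI (⊤ : Ideal (MvPolynomial (Fin n) K)) (ST ⊥ 0) := fun f =>
    ⟨fun _ d _ => ⟨fun i => by simp [toZ], fun u v h => absurd h (by simp)⟩, fun _ => trivial⟩
  refine (ex_idN_iff hI (ST_upC _ _) _ j).2 fun c => ?_
  by_contra h
  obtain ⟨s, u, v, h1, h2⟩ := exists_spec K hA 0 _ _ rfl (List.nodup_finRange n) j c h
  have := (h2.1 ⟨0, by omega⟩).2.2.2.1
  simp at this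

/-- Lower powers of the cover ideal are colon ideals of higher ones by the monomial `∏_{v ∈ A} x_v`,
so their Koszul homology vanishes whenever that of the higher powers does. -/
theorem VV_of_succ {G : SimpleGraph (Fin n)} {A : Set (Fin n)} (hA : Side G A) (t : ℤ) {k : ℕ}
    (h : VV K (ST G (t + 1)) k) : VV K (ST G t) k := by
  classical
  refine VV_shift (ST_upC G t) (a := fun i => if i ∈ A then 1 else 0)
    (fun i => by split_ifs <;> omega) (fun c hc => ?_) h
  have key : ∀ u v, G.Adj u v → ((fun i => if i ∈ A then (1 : ℤ) else 0) u +
      (fun i => if i ∈ A then (1 : ℤ) else 0) v = 1) := by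
    intro u v huv
    have := hA u v huv
    by_cases hu : u ∈ A <;> by_cases hv : v ∈ A <;> simp_all
  constructor
  · rintro ⟨h1, h2⟩
    refine ⟨fun i => ?_, fun u v huv => ?_⟩
    · have := h1 i
      simp only [Pi.add_apply]
      split_ifs <;> omega
    · have h3 := h2 u v huv
      have h4 := key u v huv
      simp only [Pi.add_apply] at h4 ⊢
      omega
  · rintro ⟨h1, h2⟩
    refine ⟨hc, fun u v huv => ?_⟩
    have h3 := h2 u v huv
    have h4 := key u v huv
    simp only [Pi.add_apply] at h3 h4
    omega

/-! ### The Koszul homology of the cover ideal of a matching -/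

/-- The endpoints of a list of edges. -/
def ends : List (Fin n × Fin n) → List (Fin n)
  | [] => []
  | q :: p => q.1 :: q.2 :: ends p

/-- The exponents of the monomials in `⋂_{(a,b) ∈ p} (x_a, x_b)`. -/
def QP (p : List (Fin n × Fin n)) (c : Fin n → ℤ) : Prop :=
  (∀ i, 0 ≤ c i) ∧ ∀ q ∈ p, 1 ≤ c q.1 + c q.2

theorem QP_upC (p : List (Fin n × Fin n)) : UpC (QP p) where
  nonneg _ h := h.1
  up c c' h hc := ⟨fun i => (h.1 i).trans (hc i), fun q hq => by
    have := h.2 q hq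
    have := hc q.1
    have := hc q.2
    omega⟩

/-- The indicator vector of a list without repetitions. -/
def cnt (l : List (Fin n)) (i : Fin n) : ℤ := l.count i

theorem cnt_cons (v : Fin n) (l : List (Fin n)) : cnt (v :: l) - Pi.single v 1 = cnt l := by
  funext i
  by_cases h : v = i
  · subst h; simp [cnt]
  · simp [cnt, List.count_cons_of_ne h, Pi.single_eq_of_ne (Ne.symm h)]

/-- The product over the edges `(a, b)` of the cycles `x_a e_b - x_b e_a`. -/
noncomputable def cyc (K : Type*) [Field K] :
    ∀ p : List (Fin n × Fin n), KT (MvPolynomial (Fin n) K) (ends p)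
  | [] => one 1
  | q :: p => mk q.1 (mk q.2 0 ((X q.1 : MvPolynomial (Fin n) K) • cyc K p))
      (mk q.2 (- ((X q.2 : MvPolynomial (Fin n) K) • cyc K p)) 0)

theorem dd_cyc (p : List (Fin n × Fin n)) : dd K _ (cyc K p) = 0 := by
  induction p with
  | nil => rfl
  | cons q p ih =>
    change dd K (q.1 :: q.2 :: ends p) (mk q.1 _ _) = 0
    have hneg : ∀ (x y : KT (MvPolynomial (Fin n) K) (ends p)),
      - mk q.2 x y = mk q.2 (-x) (-y) := fun _ _ => rfl
    simp only [dd_mk, map_zero, map_neg, map_smul, ih, smul_mk, mk_add, hneg, smul_zero, neg_zero,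
      smul_neg, zero_add, add_zero]
    rw [smul_comm, add_neg_cancel]
    rfl

theorem cyc_ne_zero (p : List (Fin n × Fin n)) : cyc K p ≠ 0 := by
  induction p with
  | nil => exact one_ne_zero (α := MvPolynomial (Fin n) K)
  | cons q p ih =>
    intro h
    rw [cyc] at h
    have h1 := (mk_eq_zero.1 (mk_eq_zero.1 h).1).2
    exact ih (smul_KT_inj (X_regular q.1) _ (h1.trans (smul_zero _).symm))

theorem X_smul_hom {p : List (Fin n × Fin n)} {q : Fin n × Fin n} {v : Fin n}
    (hv : v = q.1 ∨ v = q.2) (l : List (Fin n)) {j : ℤ} {c : Fin n → ℤ}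
    {z : KT (MvPolynomial (Fin n) K) l} (hz : z ∈ hom (NS K (QP p)) l j (c - Pi.single v 1)) :
    (X v : MvPolynomial (Fin n) K) • z ∈ hom (NS K (QP (q :: p))) l j c := by
  rw [← mapK_lsmul]
  have h := map_hom (LinearMap.lsmul (MvPolynomial (Fin n) K) (MvPolynomial (Fin n) K) (X v))
    (N' := fun c => NS K (QP (q :: p)) (c + Pi.single v 1)) (fun c x hx => by
      rw [X_eq]
      refine NS_mul (QP_upC p) (single_nonneg v) (fun hc => ⟨fun i => ?_, fun r hr => ?_⟩) hx
      · have := hc.1 i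
        have := single_nonneg v i
        simp only [Pi.add_apply]
        omega
      · have h1 := single_nonneg v r.1
        have h2 := single_nonneg v r.2
        have h3 := hc.1 r.1
        have h4 := hc.1 r.2
        simp only [Pi.add_apply]
        rcases List.mem_cons.1 hr with rfl | hr
        · rcases hv with rfl | rfl
          · rw [Pi.single_eq_same]
            omega
          · rw [Pi.single_eq_same (r.2)]
            omega
        · have := hc.2 r hr
          omega) l hz
  rwa [hom_shift, sub_add_cancel] at h

theorem cyc_mem (p : List (Fin n × Fin n)) :
    cyc K p ∈ hom (NS K (QP p)) (ends p) p.length (cnt (ends p)) := by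
  induction p with
  | nil =>
    refine (mem_hom_nil_zero (x := (1 : MvPolynomial (Fin n) K))).2 ⟨1, ?_, fun _ => ?_⟩
    · have : tn (cnt (ends ([] : List (Fin n × Fin n)))) = 0 := by
        ext i; simp [cnt, ends]
      rw [this]; rfl
    · exact ⟨fun i => by simp [cnt], fun q hq => by simp at hq⟩
  | cons q p ih =>
    have hlen : ((q :: p).length : ℤ) = p.length + 1 := by simp
    change mk q.1 _ _ ∈ hom _ (q.1 :: q.2 :: ends p) _ (cnt (q.1 :: q.2 :: ends p))
    rw [mem_hom_mk, mem_hom_mk, mem_hom_mk, hlen, add_sub_cancel_right, cnt_cons]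
    refine ⟨⟨zero_mem _, X_smul_hom (Or.inl rfl) _ ?_⟩, neg_mem (X_smul_hom (Or.inr rfl) _ ?_),
      zero_mem _⟩
    · rwa [sub_right_comm, cnt_cons, cnt_cons]
    · rwa [cnt_cons]

/-- Chains of degree larger than the number of edges vanish if the ideal contains no monomial
dividing `x^c / (x_a x_b)` for an edge `(a, b)`. -/
theorem hom_ends_eq_zero {S : (Fin n → ℤ) → Prop} (hS : UpC S) (p : List (Fin n × Fin n)) {j : ℤ}
    (hj : (p.length : ℤ) < j) {c : Fin n → ℤ}
    (hc : ∀ q ∈ p, ¬ S (c - Pi.single q.1 1 - Pi.single q.2 1))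
    {z : KT (MvPolynomial (Fin n) K) (ends p)} (hz : z ∈ hom (NS K S) (ends p) j c) : z = 0 := by
  induction p generalizing j c with
  | nil => exact hom_gt _ (by simpa [ends] using hj) hz
  | cons q p ih =>
    obtain ⟨a, b, rfl⟩ : ∃ a b : KT (MvPolynomial (Fin n) K) (q.2 :: ends p), z = mk q.1 a b :=
      exists_mk z
    obtain ⟨a, a', rfl⟩ := exists_mk a
    obtain ⟨b, b', rfl⟩ := exists_mk b
    have hz' : mk q.1 (mk q.2 a a') (mk q.2 b b') ∈
      hom (NS K S) (q.1 :: q.2 :: ends p) j c := hz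
    rw [mem_hom_mk, mem_hom_mk, mem_hom_mk] at hz'
    obtain ⟨⟨h1, h2⟩, h3, h4⟩ := hz'
    have hlen : ((q :: p).length : ℤ) = p.length + 1 := by simp
    have hc' : ∀ v, ∀ r ∈ p, ¬ S (c - Pi.single v 1 - Pi.single r.1 1 - Pi.single r.2 1) := by
      intro v r hr h
      refine hc r (List.mem_cons_of_mem _ hr) (hS.up _ _ h fun i => ?_)
      have := single_nonneg v i
      simp only [Pi.sub_apply]
      omega
    rw [ih (by omega) (fun r hr => hc r (List.mem_cons_of_mem _ hr)) h1, ih (by omega) (hc' _) h2,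
      ih (by omega) (hc' _) h3, NS_hom_eq_zero hS _ (hc q List.mem_cons_self) h4, mk_zero, mk_zero]
    rfl

/-- The cycle `cyc` is not a boundary, for lack of chains of higher degree in its multidegree. -/
theorem not_VV_QP {p : List (Fin n × Fin n)} (hp : (ends p).Nodup) : ¬ VV K (QP p) p.length := by
  intro h
  obtain ⟨w, hw, hdw⟩ := h (ends p) hp p.length le_rfl _ (cyc K p) (cyc_mem p) (dd_cyc p)
  rw [hom_ends_eq_zero (QP_upC p) p (by omega) (fun q hq hQ => ?_) hw, map_zero] at hdw
  · exact cyc_ne_zero p hdw.symm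
  · have h1 := hQ.2 q hq
    have h2 : ∀ v, cnt (ends p) v ≤ 1 := fun v => by
      have := List.nodup_iff_count_le_one.1 hp v
      unfold cnt
      omega
    have h3 := h2 q.1
    have h4 := h2 q.2
    have h5 := single_nonneg q.2 q.1
    have h6 := single_nonneg q.1 q.2
    simp only [Pi.sub_apply, Pi.single_eq_same] at h1
    omega

theorem ends_nodup {s : ℕ} {u v : Fin s → Fin n}
    (h : Function.Injective (fun p : Fin s × Bool => if p.2 then u p.1 else v p.1)) :
    (ends (List.ofFn fun i => (u i, v i))).Nodup := by
  have hflat : ∀ p : List (Fin n × Fin n), ends p = p.flatMap fun q => [q.1, q.2] := by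
    intro p
    induction p with
    | nil => rfl
    | cons q p ih => simp [ends, ih]
  have huv : ∀ i j, u i ≠ v j := fun i j hij => by
    have := @h (i, true) (j, false) (by simpa using hij)
    simp at this
  have huu : ∀ i j, u i = u j → i = j := fun i j hij => by
    have := @h (i, true) (j, true) (by simpa using hij)
    simpa using this
  have hvv : ∀ i j, v i = v j → i = j := fun i j hij => by
    have := @h (i, false) (j, false) (by simpa using hij)
    simpa using this
  rw [hflat, List.nodup_flatMap]
  constructor
  · intro q hq
    rw [List.mem_ofFn] at hq
    obtain ⟨i, rfl⟩ := hq
    simpa using huv i i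
  · rw [List.pairwise_ofFn]
    intro i j hij
    have hne := hij.ne
    simp only [Function.onFun, List.disjoint_cons_left, List.mem_cons, List.not_mem_nil, or_false]
    refine ⟨?_, ?_, by simp⟩
    · rintro (h | h)
      · exact hne (huu _ _ h)
      · exact huv _ _ h
    · rintro (h | h)
      · exact huv _ _ h.symm
      · exact hne (hvv _ _ h)

/-- The cover ideal of an ordered matching, seen as a graph by itself, is a colon ideal of a high
power of the cover ideal of `G` by a monomial, so the Koszul homology of that power does not vanish
in all degrees at least `s`. -/
theorem not_VV_of_matching {G : SimpleGraph (Fin n)} {s : ℕ} {u v : Fin s → Fin n}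
    (h : IsOrderedMatching G u v) {t : ℤ} (ht : 2 * s + 2 ≤ t) : ¬ VV K (ST G t) s := by
  obtain ⟨hadj, hinj, huu, huv⟩ := h
  -- the weights decrease along the `u i`, so that only the edges `u i, v i` are not slack
  let val : Fin s × Bool → ℤ := fun p => if p.2 then s - (p.1 : ℕ) else t - 1 - s + (p.1 : ℕ)
  let a : Fin n → ℤ := Function.extend
    (fun p : Fin s × Bool => if p.2 then u p.1 else v p.1) val fun _ => t
  have hau : ∀ i, a (u i) = s - (i : ℕ) := fun i => by
    simpa [val] using hinj.extend_apply val (fun _ => t) (i, true)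
  have hav : ∀ i, a (v i) = t - 1 - s + (i : ℕ) := fun i => by
    simpa [val] using hinj.extend_apply val (fun _ => t) (i, false)
  have haw : ∀ w, (∃ i, w = u i) ∨ (∃ i, w = v i) ∨ a w = t := fun w => by
    by_cases hw : ∃ p : Fin s × Bool, (if p.2 then u p.1 else v p.1) = w
    · obtain ⟨⟨i, b⟩, hw⟩ := hw
      cases b
      · exact Or.inr (Or.inl ⟨i, by simpa using hw.symm⟩)
      · exact Or.inl ⟨i, by simpa using hw.symm⟩
    · exact Or.inr (Or.inr (Function.extend_apply' _ _ _ hw))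
  have ha : ∀ i, 0 ≤ a i := fun w => by
    rcases haw w with ⟨i, rfl⟩ | ⟨i, rfl⟩ | h
    · rw [hau]; omega
    · rw [hav]; omega
    · omega
  have hmem : ∀ q, q ∈ List.ofFn (fun i => (u i, v i)) ↔ ∃ i, (u i, v i) = q := fun q => by
    rw [List.mem_ofFn]
  intro hV
  have hlen : (List.ofFn fun i => (u i, v i)).length = s := List.length_ofFn
  have hiff : ∀ c : Fin n → ℤ, (∀ i, 0 ≤ c i) →
      (QP (List.ofFn fun i => (u i, v i)) c ↔ ST G t (c + a)) := by
    intro c hc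
    refine ⟨fun hQ => ⟨fun i => add_nonneg (hc i) (ha i), ?_⟩, fun hS => ⟨hc, ?_⟩⟩
    · intro x y hxy
      have hmix : ∀ i j, G.Adj (u i) (v j) → t ≤ (c + a) (u i) + (c + a) (v j) := by
        intro i j hij
        have h1 := hc (u i)
        have h2 := hc (v j)
        have h3 : (i : ℕ) ≤ j := huv i j hij
        simp only [Pi.add_apply, hau, hav]
        rcases h3.eq_or_lt with h4 | h4
        · have h5 : i = j := Fin.ext h4
          subst h5
          have := hQ.2 _ ((hmem _).2 ⟨i, rfl⟩)
          simp only at this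
          omega
        · omega
      have h1 := hc x
      have h2 := hc y
      have h3 := ha x
      have h4 := ha y
      rcases haw x with ⟨i, rfl⟩ | ⟨i, rfl⟩ | hx
      · rcases haw y with ⟨j, rfl⟩ | ⟨j, rfl⟩ | hy
        · exact absurd hxy (huu i j)
        · exact hmix i j hxy
        · simp only [Pi.add_apply]; omega
      · rcases haw y with ⟨j, rfl⟩ | ⟨j, rfl⟩ | hy
        · rw [add_comm]
          exact hmix j i hxy.symm
        · simp only [Pi.add_apply, hav]; omega
        · simp only [Pi.add_apply]; omega
      · simp only [Pi.add_apply]; omega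
    · intro q hq
      obtain ⟨i, rfl⟩ := (hmem q).1 hq
      have := hS.2 _ _ (hadj i)
      simp only [Pi.add_apply, hau, hav] at this
      simp only
      omega
  refine not_VV_QP (K := K) (ends_nodup hinj) ?_
  rw [hlen]
  exact VV_shift (QP_upC _) ha hiff hV

end CoverDepth

/-! ### The monomial description of the powers of the cover ideal -/

namespace CoverDepth

variable {K : Type*} [Field K] {n : ℕ}

/-- The polynomials all of whose monomials have degree at least `t` in `x_u` and `x_v` together. -/
def wt (K : Type*) [Field K] {n : ℕ} (u v : Fin n) (t : ℕ) : Ideal (MvPolynomial (Fin n) K) where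
  carrier := {f | ∀ d, coeff d f ≠ 0 → t ≤ d u + d v}
  zero_mem' := fun d hd => absurd (coeff_zero d) hd
  add_mem' := fun {f g} hf hg d hd => by
    rw [coeff_add] at hd
    by_cases h : coeff d f = 0
    · rw [h, zero_add] at hd
      exact hg d hd
    · exact hf d h
  smul_mem' := fun f g hg d hd => by
    classical
    rw [smul_eq_mul, coeff_mul] at hd
    obtain ⟨p, hp, hne⟩ := Finset.exists_ne_zero_of_sum_ne_zero hd
    have h1 := hg p.2 (right_ne_zero_of_mul hne)
    rw [← Finset.HasAntidiagonal.mem_antidiagonal.1 hp]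
    simp only [Finsupp.add_apply]
    omega

theorem wt_mul {u v : Fin n} {s t : ℕ} : wt K u v s * wt K u v t ≤ wt K u v (s + t) := by
  classical
  refine Ideal.mul_le.2 fun f hf g hg d hd => ?_
  rw [coeff_mul] at hd
  obtain ⟨p, hp, hne⟩ := Finset.exists_ne_zero_of_sum_ne_zero hd
  have h1 := hf p.1 (left_ne_zero_of_mul hne)
  have h2 := hg p.2 (right_ne_zero_of_mul hne)
  rw [← Finset.HasAntidiagonal.mem_antidiagonal.1 hp]
  simp only [Finsupp.add_apply]
  omega

theorem X_mem_wt {u v w : Fin n} (h : w = u ∨ w = v) : (X w : MvPolynomial (Fin n) K) ∈ wt K u v 1 := by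
  classical
  intro d hd
  rw [coeff_X] at hd
  have hd' : Finsupp.single w 1 = d := by
    by_contra hne
    simp [hne] at hd
  subst hd'
  rcases h with rfl | rfl
  · simp
  · simp

theorem coverIdeal_le {G : SimpleGraph (Fin n)} {u v : Fin n} (huv : G.Adj u v) :
    coverIdeal K G ≤ Ideal.span {X u, X v} :=
  (iInf_le _ u).trans ((iInf_le _ v).trans (iInf_le _ huv))

theorem coverIdeal_pow_le_wt {G : SimpleGraph (Fin n)} {u v : Fin n} (huv : G.Adj u v) (t : ℕ) :
    coverIdeal K G ^ t ≤ wt K u v t := by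
  have h1 : coverIdeal K G ≤ wt K u v 1 := by
    refine (coverIdeal_le huv).trans (Ideal.span_le.2 ?_)
    rintro x (rfl | rfl)
    · exact X_mem_wt (Or.inl rfl)
    · exact X_mem_wt (Or.inr rfl)
  induction t with
  | zero => exact fun f _ d _ => Nat.zero_le _
  | succ t ih =>
    rw [pow_succ]
    exact (Ideal.mul_mono ih h1).trans wt_mul

/-- In the bipartite case a monomial of weight at least `t` on every edge is divisible by a product
of `t` vertex covers. One cover splits off at a time: the vertices of `A` in the support, together
with the vertices outside `A` whose exponent is the maximal one needed. -/
theorem monomial_mem_pow {G : SimpleGraph (Fin n)} {A : Set (Fin n)} (hA : Side G A) (t : ℕ) :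
    ∀ d : Fin n →₀ ℕ, (∀ u v, G.Adj u v → t ≤ d u + d v) →
      monomial d (1 : K) ∈ coverIdeal K G ^ t := by
  classical
  induction t with
  | zero => intro d _; simp
  | succ t ih =>
    intro d hd
    let C : Fin n →₀ ℕ := Finsupp.equivFunOnFinite.symm fun i =>
      if i ∈ A then (if 1 ≤ d i then 1 else 0) else (if t + 1 ≤ d i then 1 else 0)
    have hC : ∀ i, C i = if i ∈ A then (if 1 ≤ d i then 1 else 0)
      else (if t + 1 ≤ d i then 1 else 0) := fun i => rfl
    have hle : C ≤ d := fun i => by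
      rw [hC]
      split_ifs <;> omega
    have hcov : ∀ u v, G.Adj u v → 1 ≤ C u ∨ 1 ≤ C v := by
      intro u v huv
      have h1 := hd u v huv
      have h2 := hA u v huv
      rw [hC, hC]
      by_cases hu : u ∈ A <;> by_cases hv : v ∈ A <;> simp only [hu, hv, if_true, if_false] <;>
        simp only [hu, hv, not_true, not_false_iff, iff_true, iff_false] at h2
      · split_ifs <;> omega
      · split_ifs <;> omega
    have hrest : ∀ u v, G.Adj u v → t ≤ (d - C) u + (d - C) v := by
      intro u v huv
      have h1 := hd u v huv
      have h2 := hA u v huv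
      simp only [Finsupp.tsub_apply]
      rw [hC, hC]
      by_cases hu : u ∈ A <;> by_cases hv : v ∈ A <;> simp only [hu, hv, if_true, if_false] <;>
        simp only [hu, hv, not_true, not_false_iff, iff_true, iff_false] at h2
      · split_ifs <;> omega
      · split_ifs <;> omega
    have hmem : monomial C (1 : K) ∈ coverIdeal K G := by
      simp only [coverIdeal, Ideal.mem_iInf]
      intro u v huv
      have hX : ∀ w, 1 ≤ C w → (X w : MvPolynomial (Fin n) K) ∣ monomial C 1 := fun w hw =>
        X_dvd_monomial.2 (Or.inr (by omega))
      rcases hcov u v huv with h | h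
      · exact Ideal.mem_of_dvd _ (hX u h) (Ideal.subset_span (by simp))
      · exact Ideal.mem_of_dvd _ (hX v h) (Ideal.subset_span (by simp))
    have hprod : monomial d (1 : K) = monomial (d - C) 1 * monomial C 1 := by
      rw [monomial_mul, tsub_add_cancel_of_le hle, one_mul]
    rw [hprod, pow_succ]
    exact Ideal.mul_mem_mul (ih _ hrest) hmem

/-- For bipartite graphs the powers of the cover ideal agree with its symbolic powers; both are
given by the monomials `x^d` with `d_u + d_v ≥ t` for all edges `uv`. -/
theorem monI_pow {G : SimpleGraph (Fin n)} {A : Set (Fin n)} (hA : Side G A) (t : ℕ) :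
    MonI (coverIdeal K G ^ t) (ST G t) := by
  intro f
  constructor
  · intro hf d hd
    refine ⟨fun i => by simp [toZ], fun u v huv => ?_⟩
    have := coverIdeal_pow_le_wt huv t hf d hd
    simp only [toZ]
    omega
  · intro h
    rw [f.as_sum]
    refine Ideal.sum_mem _ fun d hd => ?_
    have h1 := h d (mem_support_iff.1 hd)
    have h2 : monomial d (1 : K) ∈ coverIdeal K G ^ t := by
      refine monomial_mem_pow hA t d fun u v huv => ?_
      have := h1.2 u v huv
      simp only [toZ] at this
      omega
    have h3 := Ideal.mul_mem_left _ (C (coeff d f)) h2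
    rwa [C_mul_monomial, mul_one] at h3

theorem coverIdeal_pow_le_maxIdeal {G : SimpleGraph (Fin n)} {u v : Fin n} (huv : G.Adj u v)
    {t : ℕ} (ht : 1 ≤ t) : coverIdeal K G ^ t ≤ maxIdeal K n := by
  refine (Ideal.pow_le_self (by omega)).trans ((coverIdeal_le huv).trans (Ideal.span_mono ?_))
  rintro x (rfl | rfl)
  · exact ⟨u, rfl⟩
  · exact ⟨v, rfl⟩

/-- An edge is an ordered matching of size one. -/
theorem one_le_orderedMatchingNumber {G : SimpleGraph (Fin n)} {u v : Fin n} (huv : G.Adj u v) :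
    1 ≤ orderedMatchingNumber G := by
  refine le_csSup (bddAbove_matching G) ⟨fun _ => u, fun _ => v, fun _ => huv, ?_,
    fun _ _ => G.irrefl, fun i j _ => (Subsingleton.elim i j).le⟩
  rintro ⟨i, a⟩ ⟨j, b⟩ h
  have hij : i = j := Subsingleton.elim i j
  have h1 := huv.ne
  have h2 := huv.ne'
  cases a <;> cases b <;> simp_all

end CoverDepth

/-! ### Depth stability -/

/-- For a bipartite graph `G` with at least one edge, the index of depth stability of the
cover ideal `J(G)` is the least `t ≥ 1` with `depth(R/J(G)^t) ≤ n - ν₀(G) - 1`. -/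
theorem dstab_coverIdeal_bipartite (K : Type*) [Field K] (n : ℕ)
    (G : SimpleGraph (Fin n)) (hG : G.edgeSet.Nonempty)
    (hbip : ∃ A : Set (Fin n), ∀ u v : Fin n, G.Adj u v → (u ∈ A ↔ v ∉ A)) :
    dstab K n (coverIdeal K G)
      = sInf {t : ℕ | 1 ≤ t ∧
          depthQuot K n ((coverIdeal K G) ^ t) ≤ n - orderedMatchingNumber G - 1} := by
  open CoverDepth in
  obtain ⟨A, hA⟩ := hbip
  obtain ⟨u, v, huv⟩ : ∃ u v, G.Adj u v := by
    obtain ⟨e, he⟩ := hG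
    induction e using Sym2.ind with
    | _ u v => exact ⟨u, v, he⟩
  have hν := one_le_orderedMatchingNumber huv
  obtain ⟨a, b, hab⟩ := exists_max_matching G
  have h2ν := two_mul_le_of_matching hab
  set ν := orderedMatchingNumber G with hνdef
  set d : ℕ → ℕ := fun t => depthQuot K n (coverIdeal K G ^ t) with hd
  have hiff : ∀ t, 1 ≤ t → ∀ k, 1 ≤ k → k ≤ n → (n - k ≤ d t ↔ VV K (ST G t) k) :=
    fun t ht k h1 h2 => le_depthQuot_iff_VV (monI_pow hA t) (ST_upC G t)
      (coverIdeal_pow_le_maxIdeal huv ht) (fun j hj => ex_top K j hj) h1 h2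
  have hlow : ∀ t, 1 ≤ t → n - (ν + 1) ≤ d t := fun t ht =>
    (hiff t ht (ν + 1) (by omega) (by omega)).2 (VV_succ_matching K hA t)
  have hhigh : ∀ t, 1 ≤ t → (n - ν ≤ d t ↔ VV K (ST G t) ν) := fun t ht =>
    hiff t ht ν hν (by omega)
  have hstep : ∀ t, 1 ≤ t → d t ≤ n - ν - 1 → d (t + 1) ≤ n - ν - 1 := by
    intro t ht h
    by_contra hcon
    have h1 := (hhigh (t + 1) (by omega)).1 (by omega)
    push_cast at h1
    have h2 := (hhigh t ht).2 (VV_of_succ hA t h1)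
    omega
  have hmono : ∀ t, 1 ≤ t → d t ≤ n - ν - 1 → ∀ m, t ≤ m → d m ≤ n - ν - 1 := by
    intro t ht h m hm
    induction m, hm using Nat.le_induction with
    | base => exact h
    | succ m hm ih => exact hstep m (by omega) ih
  have hatt : d (2 * ν + 2) ≤ n - ν - 1 := by
    by_contra hcon
    refine not_VV_of_matching (K := K) (t := ((2 * ν + 2 : ℕ) : ℤ)) hab (by push_cast; omega) ?_
    exact (hhigh _ (by omega)).1 (by omega)
  refine congrArg sInf (Set.ext fun k => ?_)
  constructor
  · rintro ⟨hk, h⟩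
    refine ⟨hk, ?_⟩
    have h1 : d (max k (2 * ν + 2)) = d k := h _ (le_max_left _ _)
    have h2 := hmono _ (by omega) hatt _ (le_max_right k (2 * ν + 2))
    rwa [h1] at h2
  · rintro ⟨hk, h⟩
    refine ⟨hk, fun m hm => ?_⟩
    have h0 : d k ≤ n - ν - 1 := h
    have h1 := hmono k hk h m hm
    have h2 := hlow m (by omega)
    have h3 := hlow k hk
    change d m = d k
    omega
end

section
/- Let r ≥ 2 be an integer, P_r the path graph on r vertices, K a field, R = K[x_1,…,x_r], and J(P_r) its cover ideal. Then the index of depth stability of powers of J(P_r) equals r/2 if r is even, and equals ⌈(r − 1)/4⌉ if r is odd. -/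
/-!
Write `x_0, …, x_{r-1}` for the variables, `m` for the ideal they generate, and `L = (r - 1) / 2`
(rounded down). As the path is bipartite, `J ^ t` is the monomial ideal of all exponents `a` with
`a u + a v ≥ t` on every edge (`coverIdeal_pow`). Equivalently, each even vertex `u` satisfies
`a u ≥ need t a u`, where `need t a u` depends only on the exponents of the odd variables.

The `L` differences `x_0 - x_2, x_0 - x_4, …` form a weakly regular sequence on `R ⧸ J ^ t` for
every `t`: modulo the first `j` of them, the quotient is again defined by a monomial ideal, in which
the inequalities at the merged even vertices are replaced by their sum (`mem_sup_diffs`), and such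
inequalities make the next difference a nonzerodivisor (`diffs_regular`). By Rees' theorem the depth
is exactly `L` if the quotient by all the differences has a nonzero socle (`sSup_hasRegSeq_eq`), and
by prime avoidance it is larger than `L` otherwise (`length_lt_sSup_hasRegSeq`).

A monomial outside the ideal of the quotient lies in the socle only if raising the exponent of any
odd variable `x_v` lowers `need` at some even vertex, that is, if `v` is the strict minimum among
the neighbours of an even vertex. The exponents of the odd variables, all less than `t`, then have
no weak local maximum: they decrease strictly and then increase strictly, where the increasing part
can only occur if the path ends in an even vertex, i.e. if `r` is odd. This is impossible for `t`
below `stabIndex r` (`stabIndex_le`), and from there on such exponents exist (`need_valley`). Hence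
the depth is `L` for `t ≥ stabIndex r` (`depthQuot_of_le`) and larger for `1 ≤ t < stabIndex r`
(`lt_depthQuot`), so `stabIndex r` is the index of depth stability.
-/

open MvPolynomial

/-! ### Depth via weakly regular sequences -/

section Depth

open RingTheory.Sequence CategoryTheory Abelian Pointwise

universe u

variable {R : Type u} [CommRing R]

/-- There is an `R ⧸ I`-regular sequence of length `d` consisting of elements of `m`. -/
def HasRegSeq (m I : Ideal R) (d : ℕ) : Prop :=
  ∃ rs : List R, rs.length = d ∧ (∀ r ∈ rs, r ∈ m) ∧ IsRegular (R ⧸ I) rs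

theorem smul_top_quot (I J : Ideal R) :
    (J • ⊤ : Submodule R (R ⧸ I)) = Submodule.map (Submodule.mkQ I) J := by
  have h : J = J • (⊤ : Submodule R R) := by simp
  conv_rhs => rw [h]
  rw [Submodule.map_smul'', Submodule.map_top, Submodule.range_mkQ]

theorem smul_top_ne_top {m I : Ideal R} (hI : I ≤ m) (hm : m ≠ ⊤) :
    (m • ⊤ : Submodule R (R ⧸ I)) ≠ ⊤ := by
  rw [smul_top_quot]
  intro h
  apply hm
  have := congrArg (Submodule.comap (Submodule.mkQ I)) h
  rw [Submodule.comap_map_mkQ] at this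
  simpa [sup_eq_right.2 hI] using this

/-- The third isomorphism theorem, in the form in which it enters regular sequences on `R ⧸ I`. -/
noncomputable def quotSmulEquiv (I J : Ideal R) :
    ((R ⧸ I) ⧸ (J • ⊤ : Submodule R (R ⧸ I))) ≃ₗ[R] R ⧸ (I ⊔ J) :=
  (Submodule.quotEquivOfEq _ _ (smul_top_quot I J)).trans
    (Submodule.quotientQuotientEquivQuotientSup I J)

/-- The case of a principal ideal of `quotSmulEquiv`, for the quotient used by Mathlib in the
recursion for regular sequences. -/
noncomputable def quotSMulTopEquiv (I : Ideal R) (y : R) :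
    QuotSMulTop y (R ⧸ I) ≃ₗ[R] R ⧸ (I ⊔ Ideal.span {y}) :=
  (Submodule.quotEquivOfEq _ _ (Submodule.ideal_span_singleton_smul y ⊤).symm).trans
    (quotSmulEquiv I (Ideal.span {y}))

theorem isSMulRegular_quot_iff (I : Ideal R) (y : R) :
    IsSMulRegular (R ⧸ I) y ↔ ∀ f, y * f ∈ I → f ∈ I := by
  rw [isSMulRegular_iff_right_eq_zero_of_smul]
  constructor
  · intro h f hf
    have := h (Submodule.Quotient.mk f) (by
      rw [← Submodule.Quotient.mk_smul]
      exact (Submodule.Quotient.mk_eq_zero I).2 hf)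
    exact (Submodule.Quotient.mk_eq_zero I).1 this
  · intro h x hx
    obtain ⟨f, rfl⟩ := Submodule.Quotient.mk_surjective I x
    rw [← Submodule.Quotient.mk_smul] at hx
    exact (Submodule.Quotient.mk_eq_zero I).2 (h f ((Submodule.Quotient.mk_eq_zero I).1 hx))

theorem isWeaklyRegular_quot (I : Ideal R) (rs : List R)
    (h : ∀ i (hi : i < rs.length), ∀ f, rs[i] * f ∈ I ⊔ Ideal.ofList (rs.take i) →
      f ∈ I ⊔ Ideal.ofList (rs.take i)) : IsWeaklyRegular (R ⧸ I) rs := by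
  constructor
  intro i hi
  exact ((quotSmulEquiv I (Ideal.ofList (rs.take i))).isSMulRegular_congr _).2
    ((isSMulRegular_quot_iff _ _).2 (h i hi))

variable [IsNoetherianRing R]

/-- Rees' theorem for cyclic modules, in terms of `Ext`-vanishing. -/
theorem hasRegSeq_iff_ext (m : Ideal R) (d : ℕ) (M : ModuleCat.{u} R)
    [Module.Finite R M] (hM : (m • ⊤ : Submodule R M) ≠ ⊤) :
    (∃ rs : List R, rs.length = d ∧ (∀ r ∈ rs, r ∈ m) ∧ IsRegular M rs) ↔
      ∀ i < d, Subsingleton (Ext (ModuleCat.of R (Shrink.{u} (R ⧸ m))) M i) :=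
  (ModuleCat.exists_isRegular_tfae m d M hM.lt_top).out 3 1

/-- Dividing by a regular element of `m` lowers the length of regular sequences by one: by the
long exact sequence, `Ext^i(R/m, R/(I, y))` lies between `Ext^i(R/m, R/I)` and
`Ext^(i+1)(R/m, R/I)`. -/
theorem HasRegSeq.step {m I : Ideal R} (hI : I ≤ m) (hm : m ≠ ⊤) {y : R} (hy : y ∈ m)
    (hreg : IsSMulRegular (R ⧸ I) y) {d : ℕ} (h : HasRegSeq m I (d + 1)) :
    HasRegSeq m (I ⊔ Ideal.span {y}) d := by
  have hI' : I ⊔ Ideal.span {y} ≤ m := sup_le hI ((Ideal.span_singleton_le_iff_mem m).2 hy)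
  have h1 := (hasRegSeq_iff_ext m (d + 1) (ModuleCat.of R (R ⧸ I)) (smul_top_ne_top hI hm)).1 h
  have hne : (m • ⊤ : Submodule R (QuotSMulTop y (R ⧸ I))) ≠ ⊤ := by
    intro h0
    apply smul_top_ne_top hI' hm
    have := congrArg (Submodule.map (quotSMulTopEquiv I y).toLinearMap) h0
    rw [Submodule.map_smul'', Submodule.map_top, LinearEquiv.range] at this
    exact this
  obtain ⟨rs, hl, hmem, hr⟩ :=
    (hasRegSeq_iff_ext m d (ModuleCat.of R (QuotSMulTop y (R ⧸ I))) hne).2 (by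
      intro i hi
      have zero1 := AddCommGrpCat.isZero_of_iff_subsingleton.mpr (h1 i (by omega))
      have zero2 := AddCommGrpCat.isZero_of_iff_subsingleton.mpr (h1 (i + 1) (by omega))
      exact AddCommGrpCat.subsingleton_of_isZero <| ShortComplex.Exact.isZero_of_both_zeros
        ((Ext.covariant_sequence_exact₃' _
          (IsSMulRegular.smulShortComplex_shortExact (M := ModuleCat.of R (R ⧸ I)) hreg))
            i (i + 1) rfl)
        (zero1.eq_zero_of_src _) (zero2.eq_zero_of_tgt _))
  exact ⟨rs, hl, hmem, ((quotSMulTopEquiv I y).isRegular_congr rs).1 hr⟩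

theorem HasRegSeq.steps {m : Ideal R} (hm : m ≠ ⊤) (rs : List R) (hrs : ∀ r ∈ rs, r ∈ m) :
    ∀ {I : Ideal R}, I ≤ m → IsWeaklyRegular (R ⧸ I) rs → ∀ {d : ℕ},
      HasRegSeq m I (rs.length + d) → HasRegSeq m (I ⊔ Ideal.ofList rs) d := by
  induction rs with
  | nil =>
    intro I hI _ d h
    simpa using h
  | cons y rs ih =>
    intro I hI hw d h
    rw [isWeaklyRegular_cons_iff] at hw
    have hy : y ∈ m := hrs y (by simp)
    have h' : HasRegSeq m I (rs.length + d + 1) := by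
      rw [List.length_cons] at h
      convert h using 1
      omega
    have := ih (fun r hr => hrs r (by simp [hr]))
      (sup_le hI ((Ideal.span_singleton_le_iff_mem m).2 hy))
      (((quotSMulTopEquiv I y).isWeaklyRegular_congr rs).1 hw.2) (h'.step hI hm hy hw.1)
    rwa [sup_assoc, ← Ideal.ofList_cons] at this

omit [IsNoetherianRing R] in
theorem HasRegSeq.exists_regular {m I : Ideal R} {d : ℕ} (h : HasRegSeq m I (d + 1)) :
    ∃ z ∈ m, IsSMulRegular (R ⧸ I) z := by
  obtain ⟨rs, hl, hmem, hr⟩ := h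
  match rs with
  | [] => simp at hl
  | z :: rs =>
    exact ⟨z, hmem z (by simp), ((isRegular_cons_iff _ _ _).1 hr).1⟩

/-- Noetherian induction: a regular element `y ∈ m` on `R ⧸ I` strictly enlarges `I`. -/
theorem exists_not_hasRegSeq {m : Ideal R} (hm : m ≠ ⊤) (I : Ideal R) (hI : I ≤ m) :
    ∃ N, ¬ HasRegSeq m I (N + 1) := by
  induction I using IsNoetherian.induction with
  | hgt I ih =>
  by_cases h : ∃ z ∈ m, IsSMulRegular (R ⧸ I) z
  · obtain ⟨z, hz, hreg⟩ := h
    have hlt : I < I ⊔ Ideal.span {z} := by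
      refine lt_of_le_of_ne le_sup_left fun he => hm ?_
      have hzI : z ∈ I := by
        rw [he]
        exact Ideal.mem_sup_right (Ideal.mem_span_singleton_self z)
      have := (isSMulRegular_quot_iff I z).1 hreg 1 (by simpa using hzI)
      exact (Ideal.eq_top_iff_one m).2 (hI this)
    obtain ⟨N, hN⟩ := ih _ hlt (sup_le hI ((Ideal.span_singleton_le_iff_mem m).2 hz))
    exact ⟨N + 1, fun h => hN (h.step hI hm hz hreg)⟩
  · exact ⟨0, fun h' => h h'.exists_regular⟩

theorem HasRegSeq.mono {m I : Ideal R} {d e : ℕ} (hI : I ≤ m) (hm : m ≠ ⊤) (hde : d ≤ e)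
    (h : HasRegSeq m I e) : HasRegSeq m I d := by
  have := (hasRegSeq_iff_ext m e (ModuleCat.of R (R ⧸ I)) (smul_top_ne_top hI hm)).1 h
  exact (hasRegSeq_iff_ext m d (ModuleCat.of R (R ⧸ I)) (smul_top_ne_top hI hm)).2
    fun i hi => this i (hi.trans_le hde)

theorem bddAbove_hasRegSeq {m I : Ideal R} (hI : I ≤ m) (hm : m ≠ ⊤) :
    BddAbove {d | HasRegSeq m I d} := by
  obtain ⟨N, hN⟩ := exists_not_hasRegSeq hm I hI
  refine ⟨N, fun d hd => ?_⟩
  by_contra hlt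
  exact hN (hd.mono hI hm (by omega))

omit [IsNoetherianRing R] in
theorem hasRegSeq_of_isWeaklyRegular {m I : Ideal R} (hI : I ≤ m) (hm : m ≠ ⊤) {rs : List R}
    (hrs : ∀ r ∈ rs, r ∈ m) (hw : IsWeaklyRegular (R ⧸ I) rs) : HasRegSeq m I rs.length := by
  refine ⟨rs, rfl, hrs, hw, fun h => smul_top_ne_top hI hm ?_⟩
  have hle : Ideal.ofList rs ≤ m := Ideal.span_le.2 hrs
  exact eq_top_iff.2 (h.le.trans (Submodule.smul_mono_left hle))

/-- A maximal weakly regular sequence in `m`, detected by a socle element, computes the depth. -/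
theorem sSup_hasRegSeq_eq {m I : Ideal R} (hI : I ≤ m) (hm : m ≠ ⊤) {rs : List R}
    (hrs : ∀ r ∈ rs, r ∈ m) (hw : IsWeaklyRegular (R ⧸ I) rs)
    {f : R} (hf : f ∉ I ⊔ Ideal.ofList rs) (hmf : ∀ z ∈ m, z * f ∈ I ⊔ Ideal.ofList rs) :
    sSup {d | HasRegSeq m I d} = rs.length := by
  apply le_antisymm
  · refine csSup_le ⟨_, hasRegSeq_of_isWeaklyRegular hI hm hrs hw⟩ fun d hd => ?_
    by_contra hlt
    have h1 : HasRegSeq m I (rs.length + (0 + 1)) :=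
      HasRegSeq.mono (e := d) hI hm (by omega) hd
    obtain ⟨z, hz, hreg⟩ := (HasRegSeq.steps hm rs hrs hI hw h1).exists_regular
    exact hf ((isSMulRegular_quot_iff _ z).1 hreg f (hmf z hz))
  · exact le_csSup (bddAbove_hasRegSeq hI hm) (hasRegSeq_of_isWeaklyRegular hI hm hrs hw)

/-- If the maximal ideal `m` annihilates no nonzero element modulo a weakly regular sequence, prime
avoidance over the associated primes yields one more regular element. -/
theorem length_lt_sSup_hasRegSeq {m I : Ideal R} (hI : I ≤ m) (hm : m.IsMaximal) {rs : List R}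
    (hrs : ∀ r ∈ rs, r ∈ m) (hw : IsWeaklyRegular (R ⧸ I) rs)
    (hf : ∀ f, (∀ z ∈ m, z * f ∈ I ⊔ Ideal.ofList rs) → f ∈ I ⊔ Ideal.ofList rs) :
    rs.length < sSup {d | HasRegSeq m I d} := by
  have key : ∃ z ∈ m, IsSMulRegular (R ⧸ (I ⊔ Ideal.ofList rs)) z := by
    by_contra! hno
    have hsub : (m : Set R) ⊆ ⋃ p ∈ associatedPrimes R (R ⧸ (I ⊔ Ideal.ofList rs)), p := by
      rw [biUnion_associatedPrimes_eq_compl_regular]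
      exact fun z hz => hno z hz
    obtain ⟨p, hp, hmp⟩ := (Ideal.subset_union_prime_finite (associatedPrimes.finite R _) ⊥ ⊥
      (fun p hp _ _ => IsAssociatedPrime.isPrime hp)).1 hsub
    obtain ⟨hpp, x, hx⟩ := isAssociatedPrime_iff.1 hp
    obtain rfl := hm.eq_of_le hpp.ne_top hmp
    obtain ⟨f, rfl⟩ := Submodule.Quotient.mk_surjective _ x
    have hmem : ∀ z, z ∈ m ↔ z * f ∈ I ⊔ Ideal.ofList rs := by
      intro z
      conv_lhs => rw [hx]
      rw [Submodule.mem_colon_singleton, ← Submodule.Quotient.mk_smul, Submodule.mem_bot,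
        Submodule.Quotient.mk_eq_zero, smul_eq_mul]
    have h1 := (hmem 1).2 (by simpa using hf f fun z hz => (hmem z).1 hz)
    exact hm.ne_top ((Ideal.eq_top_iff_one m).2 h1)
  obtain ⟨z, hz, hreg⟩ := key
  have hw' : IsWeaklyRegular (R ⧸ I) (rs ++ [z]) :=
    (isWeaklyRegular_append_iff _ _ _).2 ⟨hw, (isWeaklyRegular_singleton_iff _ _).2
      (((quotSmulEquiv I (Ideal.ofList rs)).isSMulRegular_congr _).2 hreg)⟩
  have := le_csSup (bddAbove_hasRegSeq hI hm.ne_top) (hasRegSeq_of_isWeaklyRegular hI hm.ne_top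
    (by simpa [or_imp, forall_and] using ⟨hrs, hz⟩) hw')
  simpa using this

end Depth

/-! ### Powers of the cover ideal modulo differences of variables -/

section CoverIdeal

variable {r : ℕ}

/-- The exponents `a` with `a u + a v ≥ t` on every edge `{u, v}` of the path. -/
def fracCovers (r t : ℕ) : Set (Fin r →₀ ℕ) :=
  {a | ∀ u v : Fin r, u.val + 1 = v.val → t ≤ a u + a v}

variable (K : Type*) [Field K]

/-- The ideal spanned by the monomials with exponent in `s`. -/
noncomputable def monoIdeal (s : Set (Fin r →₀ ℕ)) : Ideal (MvPolynomial (Fin r) K) :=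
  Ideal.span ((fun a => monomial a (1 : K)) '' s)

variable {K}

theorem monomial_mem_monoIdeal {s : Set (Fin r →₀ ℕ)} {a : Fin r →₀ ℕ} (ha : a ∈ s) :
    monomial a (1 : K) ∈ monoIdeal K s :=
  Ideal.subset_span ⟨a, ha, rfl⟩

theorem mem_monoIdeal {s : Set (Fin r →₀ ℕ)} (hs : IsUpperSet s)
    {f : MvPolynomial (Fin r) K} : f ∈ monoIdeal K s ↔ ∀ e ∈ f.support, e ∈ s := by
  rw [monoIdeal, mem_ideal_span_monomial_image]
  exact ⟨fun h e he => by obtain ⟨a, ha, hae⟩ := h e he; exact hs hae ha,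
    fun h e he => ⟨e, h e he, le_rfl⟩⟩

theorem coverIdeal_eq :
    coverIdeal K (SimpleGraph.pathGraph r) = monoIdeal K (fracCovers r 1) := by
  have hup : IsUpperSet (fracCovers r 1) := fun a b hab ha u v huv =>
    (ha u v huv).trans (add_le_add (hab u) (hab v))
  ext f
  rw [mem_monoIdeal hup]
  have key : ∀ u v : Fin r, f ∈ Ideal.span {X u, X v} ↔ ∀ e ∈ f.support, 1 ≤ e u + e v := by
    intro u v
    have : ({X u, X v} : Set (MvPolynomial (Fin r) K)) = X '' {u, v} := by
      simp [Set.image_insert_eq]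
    rw [this, mem_ideal_span_X_image]
    refine forall₂_congr fun e _ => ?_
    simp only [Set.mem_insert_iff, Set.mem_singleton_iff, exists_eq_or_imp, exists_eq_left]
    omega
  simp only [coverIdeal, Ideal.mem_iInf, key, SimpleGraph.pathGraph_adj]
  constructor
  · intro h e he u v huv
    exact h u v (Or.inl huv) e he
  · rintro h u v (huv | huv) e he
    · exact h e he u v huv
    · rw [add_comm]
      exact h e he v u huv

/-- As the path is bipartite, an exponent with value at least `t + 1` on every edge splits off a
vertex cover: the even vertices of value at least `t + 1` and the odd ones of value at least `1`. -/
theorem fracCovers_succ {t : ℕ} {a : Fin r →₀ ℕ} (ha : a ∈ fracCovers r (t + 1)) :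
    ∃ c ∈ fracCovers r 1, ∃ b ∈ fracCovers r t, a = b + c := by
  let c : Fin r →₀ ℕ := Finsupp.equivFunOnFinite.symm fun i =>
    if i.val % 2 = 0 then (if t + 1 ≤ a i then 1 else 0) else (if 1 ≤ a i then 1 else 0)
  have hc : ∀ i, c i = if i.val % 2 = 0 then (if t + 1 ≤ a i then 1 else 0)
      else (if 1 ≤ a i then 1 else 0) := fun i => rfl
  refine ⟨c, ?_, a - c, ?_, ?_⟩
  · intro u v huv
    have := ha u v huv
    rw [hc, hc]
    split_ifs <;> omega
  · intro u v huv
    have := ha u v huv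
    rw [Finsupp.tsub_apply, Finsupp.tsub_apply, hc, hc]
    split_ifs <;> omega
  · ext i
    rw [Finsupp.add_apply, Finsupp.tsub_apply, hc]
    split_ifs <;> omega

/-- The ordinary powers of the cover ideal agree with the symbolic ones. -/
theorem coverIdeal_pow (t : ℕ) :
    coverIdeal K (SimpleGraph.pathGraph r) ^ t = monoIdeal K (fracCovers r t) := by
  induction t with
  | zero =>
    rw [pow_zero, Ideal.one_eq_top, eq_comm, Ideal.eq_top_iff_one]
    exact monomial_mem_monoIdeal (a := 0) fun u v _ => Nat.zero_le _
  | succ t ih =>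
    rw [pow_succ, ih, coverIdeal_eq]
    apply le_antisymm
    · rw [monoIdeal, monoIdeal, Ideal.span_mul_span', Ideal.span_le]
      rintro _ ⟨_, ⟨a, ha, rfl⟩, _, ⟨b, hb, rfl⟩, rfl⟩
      simp only [monomial_mul, one_mul]
      refine monomial_mem_monoIdeal fun u v huv => ?_
      have h1 := ha u v huv
      have h2 := hb u v huv
      simp only [Finsupp.add_apply]
      omega
    · rw [monoIdeal, Ideal.span_le]
      rintro _ ⟨a, ha, rfl⟩
      obtain ⟨c, hc, b, hb, rfl⟩ := fracCovers_succ ha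
      have : monomial (b + c) (1 : K) = monomial b 1 * monomial c 1 := by simp
      simp only [this]
      exact Ideal.mul_mem_mul (monomial_mem_monoIdeal hb) (monomial_mem_monoIdeal hc)

/-- The least exponent of the variable `u` that satisfies the inequalities `≥ t` on the edges at
`u`, given the exponents `e` of its neighbours. -/
def need (t : ℕ) (e : Fin r →₀ ℕ) (u : Fin r) : ℕ :=
  Finset.univ.sup fun v : Fin r => if u.val + 1 = v.val ∨ v.val + 1 = u.val then t - e v else 0

theorem need_le_iff {t : ℕ} {e : Fin r →₀ ℕ} {u : Fin r} {n : ℕ} :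
    need t e u ≤ n ↔ ∀ v : Fin r, u.val + 1 = v.val ∨ v.val + 1 = u.val → t ≤ e v + n := by
  simp only [need, Finset.sup_le_iff, Finset.mem_univ, true_imp_iff]
  refine forall_congr' fun v => ?_
  split_ifs with h
  · simp only [h, true_imp_iff]
    omega
  · simp [h]

theorem need_anti {t : ℕ} {e e' : Fin r →₀ ℕ} {u : Fin r}
    (h : ∀ v : Fin r, u.val + 1 = v.val ∨ v.val + 1 = u.val → e v ≤ e' v) :
    need t e' u ≤ need t e u :=
  need_le_iff.2 fun v hv => (need_le_iff.1 le_rfl v hv).trans (Nat.add_le_add_right (h v hv) _)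

theorem need_congr {t : ℕ} {e e' : Fin r →₀ ℕ} {u : Fin r}
    (h : ∀ v : Fin r, u.val + 1 = v.val ∨ v.val + 1 = u.val → e v = e' v) :
    need t e u = need t e' u :=
  le_antisymm (need_anti fun v hv => (h v hv).ge) (need_anti fun v hv => (h v hv).le)

/-- Changing exponents of even variables does not affect `need` at even vertices. -/
theorem need_congr_odd {t : ℕ} {e e' : Fin r →₀ ℕ} {u : Fin r} (hu : u.val % 2 = 0)
    (h : ∀ v : Fin r, v.val % 2 = 1 → e v = e' v) : need t e u = need t e' u :=
  need_congr fun v hv => h v (by omega)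

/-- The even vertices up to `2 * j`: those merged with the vertex `0` modulo the first `j`
differences. -/
def evens (r j : ℕ) : Finset (Fin r) := Finset.univ.filter fun i => i.val % 2 = 0 ∧ i.val ≤ 2 * j

theorem mem_evens {j : ℕ} {i : Fin r} : i ∈ evens r j ↔ i.val % 2 = 0 ∧ i.val ≤ 2 * j := by
  simp [evens]

variable [NeZero r]

/-- The map merging the even vertices up to `2 * j` into `0`. -/
def merge (r j : ℕ) [NeZero r] (i : Fin r) : Fin r :=
  if i.val % 2 = 0 ∧ i.val ≤ 2 * j then 0 else i

theorem merge_zero (j : ℕ) : merge r j 0 = 0 := by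
  unfold merge
  split_ifs <;> rfl

/-- The upward closure of the image of `fracCovers r t` under `merge r j`, described by one
inequality per even vertex that is not merged and by the sum of the inequalities at the merged
vertices. -/
def mergedCovers (r t j : ℕ) [NeZero r] : Set (Fin r →₀ ℕ) :=
  {e | ∑ i ∈ evens r j, need t e i ≤ e 0 ∧
    ∀ i : Fin r, i.val % 2 = 0 → 2 * j < i.val → need t e i ≤ e i}

theorem isUpperSet_mergedCovers (t j : ℕ) : IsUpperSet (mergedCovers r t j) := by
  intro a b hab ha
  refine ⟨?_, fun i hi hij => ?_⟩
  · exact (Finset.sum_le_sum fun i _ => need_anti fun v _ => hab v).trans (ha.1.trans (hab 0))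
  · exact (need_anti fun v _ => hab v).trans ((ha.2 i hi hij).trans (hab i))

theorem mapDomain_merge_zero (j : ℕ) (a : Fin r →₀ ℕ) :
    Finsupp.mapDomain (merge r j) a 0 = ∑ i ∈ evens r j, a i := by
  rw [Finsupp.mapDomain, Finsupp.sum_apply, Finsupp.sum_fintype _ _ (by simp), evens,
    Finset.sum_filter]
  refine Finset.sum_congr rfl fun i _ => ?_
  unfold merge
  split_ifs with h
  · simp
  · have : i ≠ 0 := by
      rintro rfl
      simp at h
    simp [this]

theorem mapDomain_merge_of_ne {j : ℕ} (a : Fin r →₀ ℕ) {x : Fin r} (hx : x ≠ 0) :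
    Finsupp.mapDomain (merge r j) a x = if x.val % 2 = 0 ∧ x.val ≤ 2 * j then 0 else a x := by
  rw [Finsupp.mapDomain, Finsupp.sum_apply, Finsupp.sum_fintype _ _ (by simp),
    Finset.sum_eq_single x]
  · unfold merge
    split_ifs with h
    · simp [hx.symm]
    · simp
  · intro i _ hi
    unfold merge
    split_ifs with h
    · simp [hx.symm]
    · simp [hi]
  · simp

theorem mapDomain_merge_odd {j : ℕ} (a : Fin r →₀ ℕ) {x : Fin r} (hx : x.val % 2 = 1) :
    Finsupp.mapDomain (merge r j) a x = a x := by
  rw [mapDomain_merge_of_ne a (by rintro rfl; simp at hx), if_neg (by omega)]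

/-- The differences `x_0 - x_2, x_0 - x_4, …` of the variables on the larger side of the
bipartition. -/
noncomputable def diffs (K : Type*) [Field K] (r : ℕ) [NeZero r] (L : ℕ) :
    List (MvPolynomial (Fin r) K) :=
  (List.range L).map fun i => X 0 - X (Fin.ofNat r (2 * (i + 1)))

theorem length_diffs (L : ℕ) : (diffs K r L).length = L := by simp [diffs]

theorem take_diffs {j L : ℕ} (h : j ≤ L) : (diffs K r L).take j = diffs K r j := by
  simp [diffs, ← List.map_take, List.take_range, h]

theorem diff_mem {j : ℕ} {m : Fin r} (h0 : m.val % 2 = 0) (hm : m.val ≤ 2 * j) :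
    (X 0 - X m : MvPolynomial (Fin r) K) ∈ Ideal.ofList (diffs K r j) := by
  by_cases h : m = 0
  · subst h
    simp
  · refine Ideal.subset_span ?_
    have hpos : m.val ≠ 0 := fun h' => h (Fin.ext (by simpa using h'))
    simp only [diffs, Set.mem_ofPred_eq, List.mem_map, List.mem_range]
    refine ⟨m.val / 2 - 1, by omega, ?_⟩
    congr 2
    apply Fin.ext
    rw [Fin.val_ofNat, show 2 * (m.val / 2 - 1 + 1) = m.val by omega, Nat.mod_eq_of_lt m.2]

theorem sub_rename_mem (j : ℕ) (f : MvPolynomial (Fin r) K) :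
    f - rename (merge r j) f ∈ Ideal.ofList (diffs K r j) := by
  induction f using MvPolynomial.induction_on with
  | C a => simp
  | add p q hp hq =>
    rw [map_add, add_sub_add_comm]
    exact add_mem hp hq
  | mul_X p i hp =>
    have hi : X i - X (merge r j i) ∈ Ideal.ofList (diffs K r j) := by
      unfold merge
      split_ifs with h
      · rw [← neg_sub]
        exact neg_mem (diff_mem h.1 h.2)
      · simp
    have : p * X i - rename (merge r j) (p * X i) =
        X i * (p - rename (merge r j) p) + rename (merge r j) p * (X i - X (merge r j i)) := by
      rw [map_mul, rename_X]
      ring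
    rw [this]
    exact add_mem (Ideal.mul_mem_left _ _ hp) (Ideal.mul_mem_left _ _ hi)

theorem rename_diffs {j : ℕ} (hj : 2 * j < r) :
    Ideal.ofList (diffs K r j) ≤ RingHom.ker (rename (R := K) (merge r j)) := by
  refine Ideal.span_le.2 ?_
  intro f hf
  simp only [diffs, Set.mem_ofPred_eq, List.mem_map, List.mem_range] at hf
  obtain ⟨i, hi, rfl⟩ := hf
  have hv : (Fin.ofNat r (2 * (i + 1))).val = 2 * (i + 1) := by
    rw [Fin.val_ofNat, Nat.mod_eq_of_lt (by omega)]
  have h1 : merge r j (Fin.ofNat r (2 * (i + 1))) = 0 := by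
    unfold merge
    rw [if_pos (by omega)]
  rw [SetLike.mem_coe, RingHom.mem_ker, map_sub, rename_X, rename_X, h1, merge_zero, sub_self]

/-- Membership modulo the first `j` differences becomes, after identifying the merged variables,
membership in a monomial ideal. -/
theorem mem_sup_diffs {t j : ℕ} (hj : 2 * j < r) (f : MvPolynomial (Fin r) K) :
    f ∈ monoIdeal K (fracCovers r t) ⊔ Ideal.ofList (diffs K r j) ↔
      ∀ e ∈ (rename (merge r j) f).support, e ∈ mergedCovers r t j := by
  rw [← mem_monoIdeal (isUpperSet_mergedCovers t j)]
  constructor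
  · suffices h : monoIdeal K (fracCovers r t) ⊔ Ideal.ofList (diffs K r j) ≤
        (monoIdeal K (mergedCovers r t j)).comap (rename (R := K) (merge r j)) from fun hf => h hf
    refine sup_le (Ideal.span_le.2 ?_) ?_
    · rintro _ ⟨a, ha, rfl⟩
      simp only [SetLike.mem_coe, Ideal.mem_comap, rename_monomial]
      refine monomial_mem_monoIdeal ?_
      have hneed : ∀ i : Fin r, i.val % 2 = 0 →
          need t (Finsupp.mapDomain (merge r j) a) i ≤ a i := by
        intro i hi
        rw [need_congr_odd hi fun v hv => mapDomain_merge_odd a hv, need_le_iff]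
        rintro v (hv | hv)
        · rw [add_comm]
          exact ha i v hv
        · exact ha v i hv
      refine ⟨?_, fun i hi hij => ?_⟩
      · rw [mapDomain_merge_zero]
        exact Finset.sum_le_sum fun i hi => hneed i (mem_evens.1 hi).1
      · rw [mapDomain_merge_of_ne _ (by rintro rfl; simp at hij), if_neg (by omega)]
        exact hneed i hi
    · intro f hf
      have : rename (merge r j) f = 0 := rename_diffs hj hf
      simp [Ideal.mem_comap, this]
  · intro hf
    suffices h : monoIdeal K (mergedCovers r t j) ≤
        monoIdeal K (fracCovers r t) ⊔ Ideal.ofList (diffs K r j) by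
      have := add_mem (Ideal.mem_sup_right (sub_rename_mem j f)) (h hf)
      simpa using this
    refine Ideal.span_le.2 ?_
    rintro _ ⟨e, he, rfl⟩
    -- the smallest exponent at the merged vertices that is forced by the odd part of `e`
    let a : Fin r →₀ ℕ := Finsupp.equivFunOnFinite.symm fun i =>
      if i.val % 2 = 0 ∧ i.val ≤ 2 * j then need t e i else e i
    have ha : ∀ i, a i = if i.val % 2 = 0 ∧ i.val ≤ 2 * j then need t e i else e i := fun i => rfl
    have ha_odd : ∀ i : Fin r, i.val % 2 = 1 → a i = e i := fun i hi => by
      rw [ha, if_neg (by omega)]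
    have ha_even : ∀ i : Fin r, i.val % 2 = 0 → need t e i ≤ a i := fun i hi => by
      rw [ha]
      split_ifs with h
      · exact le_rfl
      · exact he.2 i hi (by omega)
    have haT : a ∈ fracCovers r t := by
      intro u v huv
      rcases Nat.mod_two_eq_zero_or_one u.val with hu | hu
      · rw [ha_odd v (by omega), add_comm]
        exact need_le_iff.1 (ha_even u hu) v (Or.inl huv)
      · rw [ha_odd u hu]
        exact need_le_iff.1 (ha_even v (by omega)) u (Or.inr huv)
    have hle : Finsupp.mapDomain (merge r j) a ≤ e := by
      intro x
      by_cases hx : x = 0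
      · subst hx
        rw [mapDomain_merge_zero]
        refine le_trans (Finset.sum_le_sum fun i hi => ?_) he.1
        rw [ha, if_pos (mem_evens.1 hi)]
      · rw [mapDomain_merge_of_ne _ hx]
        split_ifs with h
        · exact Nat.zero_le _
        · rw [ha, if_neg h]
    have h1 : rename (merge r j) (monomial a (1 : K)) ∈
        monoIdeal K (fracCovers r t) ⊔ Ideal.ofList (diffs K r j) := by
      have := sub_mem (Ideal.mem_sup_left (T := Ideal.ofList (diffs K r j))
        (monomial_mem_monoIdeal (K := K) haT))
        (Ideal.mem_sup_right (S := monoIdeal K (fracCovers r t))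
          (sub_rename_mem j (monomial a (1 : K))))
      simpa using this
    have h2 := Ideal.mul_mem_left _ (monomial (e - Finsupp.mapDomain (merge r j) a) (1 : K)) h1
    rw [rename_monomial, monomial_mul, tsub_add_cancel_of_le hle, one_mul] at h2
    exact h2

omit [NeZero r] in
/-- If every exponent of `(x - y) F` lies in `U`, then `F` vanishes on every set `B` of exponents
that leaves `U` on multiplication by `x` and is stable under replacing `y` by `x`. -/
theorem coeff_eq_zero_of_sub_mul {x y : Fin r} (hxy : x ≠ y) {F : MvPolynomial (Fin r) K}
    {U B : Set (Fin r →₀ ℕ)} (hF : ∀ e ∈ ((X x - X y) * F).support, e ∈ U)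
    (hB : ∀ e ∈ B, e + Finsupp.single x 1 ∉ U)
    (hB' : ∀ e ∈ B, e y ≠ 0 → e + Finsupp.single x 1 - Finsupp.single y 1 ∈ B) :
    ∀ (n : ℕ) (e : Fin r →₀ ℕ), e y = n → e ∈ B → coeff e F = 0 := by
  intro n
  induction n with
  | zero =>
    intro e hey he
    have h0 := mt (hF _) (hB e he)
    rw [notMem_support_iff, sub_mul, coeff_sub, add_comm, coeff_X_mul, coeff_X_mul', if_neg,
      sub_zero] at h0
    · exact h0
    · simp [hey, hxy]
  | succ n ih =>
    intro e hey he
    have h0 := mt (hF _) (hB e he)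
    have h1 := ih (e + Finsupp.single x 1 - Finsupp.single y 1) (by simp [hey, hxy])
      (hB' e he (by omega))
    rw [notMem_support_iff, sub_mul, coeff_sub, coeff_X_mul', coeff_X_mul', if_pos (by simp),
      if_pos (by simp [hey]), h1, sub_zero, add_tsub_cancel_right] at h0
    exact h0

/-- The next difference `x_0 - x_m` is a nonzerodivisor: a bad exponent of `f` violates a condition
not involving `x_m`, or the one on `x_m` alone. Among the exponents violating such a condition, one
of the two variables can be traded for the other, and `coeff_eq_zero_of_sub_mul` applies. -/
theorem diffs_regular {t j : ℕ} (hj : 2 * (j + 1) < r) (f : MvPolynomial (Fin r) K)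
    (hf : (X 0 - X (Fin.ofNat r (2 * (j + 1)))) * f ∈
      monoIdeal K (fracCovers r t) ⊔ Ideal.ofList (diffs K r j)) :
    f ∈ monoIdeal K (fracCovers r t) ⊔ Ideal.ofList (diffs K r j) := by
  set m : Fin r := Fin.ofNat r (2 * (j + 1)) with hm
  have hv : m.val = 2 * (j + 1) := by rw [hm, Fin.val_ofNat, Nat.mod_eq_of_lt hj]
  have hm0 : (0 : Fin r) ≠ m := fun h => by
    have := congrArg Fin.val h
    simp [hv] at this
  have hmm : merge r j m = m := if_neg (by omega)
  rw [mem_sup_diffs (by omega)] at hf ⊢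
  rw [map_mul, map_sub, rename_X, rename_X, merge_zero, hmm] at hf
  set F := rename (merge r j) f
  have hneed : ∀ (e : Fin r →₀ ℕ) (i : Fin r), i.val % 2 = 0 →
      need t (e + Finsupp.single 0 1) i = need t e i ∧
      need t (e + Finsupp.single m 1) i = need t e i ∧
      need t (e + Finsupp.single 0 1 - Finsupp.single m 1) i = need t e i ∧
      need t (e + Finsupp.single m 1 - Finsupp.single 0 1) i = need t e i := by
    intro e i hi
    have h : ∀ v : Fin r, v.val % 2 = 1 → (0 : Fin r) ≠ v ∧ m ≠ v := by
      refine fun v hv' => ⟨?_, ?_⟩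
      · rintro rfl
        simp at hv'
      · rintro rfl
        omega
    refine ⟨?_, ?_, ?_, ?_⟩ <;> refine need_congr_odd hi fun v hv' => ?_ <;>
      simp [h v hv']
  intro e he
  by_contra hU
  rw [mem_support_iff] at he
  by_cases hb : need t e m ≤ e m
  · -- the obstruction does not involve `x_m`: trade `x_0` for `x_m`
    refine he (coeff_eq_zero_of_sub_mul hm0.symm (F := F)
      (U := mergedCovers r t j)
      (B := {e | ¬ (∑ i ∈ evens r j, need t e i ≤ e 0 ∧
        ∀ i : Fin r, i ≠ m → i.val % 2 = 0 → 2 * j < i.val → need t e i ≤ e i)})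
      ?_ ?_ ?_ _ e rfl ?_)
    · rw [← neg_sub, neg_mul, support_neg]
      exact hf
    · rintro e he ⟨h1, h2⟩
      refine he ⟨?_, fun i him hi hij => ?_⟩
      · rw [Finset.sum_congr rfl fun i hi => (hneed e i (mem_evens.1 hi).1).2.1] at h1
        simpa [hm0] using h1
      · have := h2 i hi hij
        rw [(hneed e i hi).2.1] at this
        simpa [him.symm, Finsupp.single_apply] using this
    · rintro e he h0 ⟨h1, h2⟩
      refine he ⟨?_, fun i him hi hij => ?_⟩
      · rw [Finset.sum_congr rfl fun i hi => (hneed e i (mem_evens.1 hi).1).2.2.2] at h1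
        refine h1.trans ?_
        simp [hm0]
      · have := h2 i him hi hij
        rw [(hneed e i hi).2.2.2] at this
        refine this.trans ?_
        simp [him.symm, Finsupp.single_apply]
    · rintro ⟨h1, h2⟩
      refine hU ⟨h1, fun i hi hij => ?_⟩
      by_cases him : i = m
      · rw [him]
        exact hb
      · exact h2 i him hi hij
  · -- the obstruction is a small exponent of `x_m`: trade `x_m` for `x_0`
    have hm2 : m.val % 2 = 0 := by omega
    refine he (coeff_eq_zero_of_sub_mul hm0 (F := F) (U := mergedCovers r t j)
      (B := {e | ¬ need t e m ≤ e m}) hf ?_ ?_ _ e rfl hb)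
    · rintro e he ⟨-, h2⟩
      have := h2 m hm2 (by omega)
      rw [(hneed e m hm2).1] at this
      exact he (by simpa [hm0] using this)
    · intro e he h0 h2
      rw [(hneed e m hm2).2.2.1] at h2
      refine he (h2.trans ?_)
      simp [hm0]

theorem isWeaklyRegular_diffs {t L : ℕ} (hL : 2 * L < r) :
    RingTheory.Sequence.IsWeaklyRegular
      (MvPolynomial (Fin r) K ⧸ monoIdeal K (fracCovers r t)) (diffs K r L) := by
  refine isWeaklyRegular_quot _ _ fun j hj f hf => ?_
  rw [length_diffs] at hj
  rw [take_diffs hj.le] at hf ⊢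
  refine diffs_regular (by omega) f ?_
  simpa [diffs] using hf

end CoverIdeal

/-! ### Socles and depth stability -/

section Stability

/-- A sequence `γ 0, …, γ (k - 1)` bounded by `t` without weak local maxima (read with the boundary
value `t` on the left and, exactly when `r` is odd, also on the right) first decreases strictly and
then increases strictly, which forces `t` to be large. -/
theorem le_of_no_local_max {k t : ℕ} {odd : Prop} (γ : ℕ → ℕ) (hγ : ∀ i < k, γ i < t)
    (h : ∀ i < k, (i = 0 ∨ γ i < γ (i - 1)) ∨
      ((i + 1 = k → odd) ∧ (i + 1 < k → γ i < γ (i + 1)))) :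
    ∃ p ≤ k, p ≤ t ∧ (p = k ∨ (odd ∧ k - p ≤ t)) := by
  obtain ⟨p, hpk, hleft, hp⟩ : ∃ p ≤ k, (∀ i < p, i = 0 ∨ γ i < γ (i - 1)) ∧
      (p = k ∨ ¬ (p = 0 ∨ γ p < γ (p - 1))) := by
    classical
    by_cases hex : ∃ p, p < k ∧ ¬ (p = 0 ∨ γ p < γ (p - 1))
    · refine ⟨Nat.find hex, (Nat.find_spec hex).1.le, fun i hi => ?_, Or.inr (Nat.find_spec hex).2⟩
      by_contra hni
      exact Nat.find_min hex hi ⟨hi.trans (Nat.find_spec hex).1, hni⟩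
    · push Not at hex
      exact ⟨k, le_rfl, fun i hi => by have := hex i hi; tauto, Or.inl rfl⟩
  -- the entries before `p` decrease strictly, starting below `t`
  have h1 : ∀ i < p, γ i + i + 1 ≤ t := by
    intro i
    induction i with
    | zero => intro hi; have := hγ 0 (by omega); omega
    | succ i ih =>
      intro hi
      have h2 := ih (by omega)
      have h3 := hleft (i + 1) hi
      simp only [Nat.add_sub_cancel] at h3
      omega
  refine ⟨p, hpk, ?_, ?_⟩
  · rcases Nat.eq_zero_or_pos p with hp0 | hp0
    · omega
    · have := h1 (p - 1) (by omega)
      omega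
  · by_cases hk : p = k
    · exact Or.inl hk
    · have hpn := hp.resolve_left hk
      -- once an entry is at least its left neighbour, all later ones increase strictly
      have h2 : ∀ d, p + d < k → ¬ (p + d = 0 ∨ γ (p + d) < γ (p + d - 1)) ∧ d ≤ γ (p + d) := by
        intro d
        induction d with
        | zero => intro _; exact ⟨hpn, Nat.zero_le _⟩
        | succ d ih =>
          intro hd
          obtain ⟨h3, h4⟩ := ih (by omega)
          have h5 := ((h (p + d) (by omega)).resolve_left h3).2 (by omega)
          rw [← Nat.add_assoc, Nat.add_sub_cancel]
          omega
      obtain ⟨h3, h4⟩ := h2 (k - 1 - p) (by omega)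
      have h5 := (h _ (by omega)).resolve_left h3
      have h6 := hγ (p + (k - 1 - p)) (by omega)
      exact Or.inr ⟨h5.1 (by omega), by omega⟩

/-- The claimed index of depth stability, as a natural number. -/
def stabIndex (r : ℕ) : ℕ := if r % 2 = 0 then r / 2 else (r / 2 + 1) / 2

variable {r : ℕ}

theorem lt_need_iff {t : ℕ} {e : Fin r →₀ ℕ} {u : Fin r} {n : ℕ} :
    n < need t e u ↔ ∃ v : Fin r, (u.val + 1 = v.val ∨ v.val + 1 = u.val) ∧ e v + n < t := by
  rw [← not_le, need_le_iff]
  push Not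
  rfl

/-- Raising `e v` lowers `need t e u` exactly when `v` is a neighbour of `u` with `e v < t` that is
the unique minimum of `e` among the neighbours of `u`. -/
theorem need_lt_iff {t : ℕ} {e : Fin r →₀ ℕ} {u v : Fin r} :
    need t (e + Finsupp.single v 1) u < need t e u ↔
      (u.val + 1 = v.val ∨ v.val + 1 = u.val) ∧ e v < t ∧
        ∀ w : Fin r, u.val + 1 = w.val ∨ w.val + 1 = u.val → w ≠ v → e v < e w := by
  constructor
  · intro h
    obtain ⟨w, hw, hlt⟩ := lt_need_iff.1 h
    have hle := need_le_iff.1 (le_refl (need t (e + Finsupp.single v 1) u))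
    have hwv : w = v := by
      by_contra hne
      have := hle w hw
      rw [Finsupp.add_apply, Finsupp.single_eq_of_ne hne] at this
      omega
    subst hwv
    refine ⟨hw, by omega, fun w' hw' hne => ?_⟩
    have := hle w' hw'
    rw [Finsupp.add_apply, Finsupp.single_eq_of_ne hne] at this
    omega
  · rintro ⟨huv, ht, hw⟩
    have h1 : need t (e + Finsupp.single v 1) u ≤ t - e v - 1 := by
      refine need_le_iff.2 fun w huw => ?_
      by_cases hne : w = v
      · subst hne
        rw [Finsupp.add_apply, Finsupp.single_eq_same]
        omega
      · have := hw w huw hne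
        rw [Finsupp.add_apply, Finsupp.single_eq_of_ne hne]
        omega
    have h2 := need_le_iff.1 (le_refl (need t e u)) v huv
    omega

/-- A socle exponent forces `t` to be at least the index of stability: the even vertex `u` attached
to an odd vertex `v` lies to its left or right, and the neighbour of `u` on the other side of `v`
has a strictly larger exponent, so the exponents of the odd variables have no weak local
maximum. -/
theorem stabIndex_le {t : ℕ} (e : Fin r →₀ ℕ)
    (h : ∀ v : Fin r, v.val % 2 = 1 → ∃ u : Fin r, u.val % 2 = 0 ∧
      need t (e + Finsupp.single v 1) u < need t e u) : stabIndex r ≤ t := by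
  simp only [need_lt_iff] at h
  let γ : ℕ → ℕ := fun i => if hi : 2 * i + 1 < r then e ⟨2 * i + 1, hi⟩ else 0
  have hγ : ∀ i (hi : 2 * i + 1 < r), γ i = e ⟨2 * i + 1, hi⟩ := fun i hi => dif_pos hi
  obtain ⟨p, hpk, hpt, hp⟩ := le_of_no_local_max (k := r / 2) (t := t) (odd := r % 2 = 1) γ
    (by
      intro i hi
      obtain ⟨u, -, -, h1, -⟩ := h ⟨2 * i + 1, by omega⟩ (by simp only; omega)
      rw [hγ i (by omega)]
      exact h1)
    (by
      intro i hi
      obtain ⟨u, -, hadj, -, h1⟩ := h ⟨2 * i + 1, by omega⟩ (by simp only; omega)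
      simp only at hadj
      rcases hadj with hadj | hadj
      · left
        by_cases hi0 : i = 0
        · exact Or.inl hi0
        · right
          have := h1 ⟨2 * (i - 1) + 1, by omega⟩ (by simp only; omega)
            (by simp only [ne_eq, Fin.mk.injEq]; omega)
          rw [hγ i (by omega), hγ (i - 1) (by omega)]
          exact this
      · right
        have hu := u.2
        refine ⟨fun hk => by omega, fun hk => ?_⟩
        have := h1 ⟨2 * (i + 1) + 1, by omega⟩ (by simp only; omega)
            (by simp only [ne_eq, Fin.mk.injEq]; omega)
        rw [hγ i (by omega), hγ (i + 1) (by omega)]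
        exact this)
  unfold stabIndex
  split_ifs <;> omega

/-- Exponents of the odd variables that decrease to `0` and then increase again. -/
noncomputable def valley (r : ℕ) : Fin r →₀ ℕ :=
  Finsupp.equivFunOnFinite.symm fun v =>
    if v.val % 2 = 0 then 0
    else if v.val / 2 < stabIndex r then stabIndex r - 1 - v.val / 2 else v.val / 2 - stabIndex r

theorem valley_apply (v : Fin r) : valley r v = if v.val % 2 = 0 then 0
    else if v.val / 2 < stabIndex r then stabIndex r - 1 - v.val / 2
    else v.val / 2 - stabIndex r := rfl

/-- The `valley` has the socle property: an odd vertex on the descending part is the strict minimum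
around its left neighbour, one on the ascending part around its right neighbour. The latter exists
because an ascending part only occurs for odd `r`. -/
theorem need_valley {t : ℕ} (ht : stabIndex r ≤ t) {v : Fin r} (hv : v.val % 2 = 1) :
    ∃ u : Fin r, u.val % 2 = 0 ∧
      need t (valley r + Finsupp.single v 1) u < need t (valley r) u := by
  simp only [need_lt_iff]
  have hvr := v.2
  have hs : stabIndex r = if r % 2 = 0 then r / 2 else (r / 2 + 1) / 2 := rfl
  by_cases hlt : v.val / 2 < stabIndex r
  · refine ⟨⟨v.val - 1, by omega⟩, by simp only; omega, by simp only; omega, ?_, fun w hw hne => ?_⟩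
    · rw [valley_apply, if_neg (by omega), if_pos hlt]
      omega
    · have hne' : w.val ≠ v.val := fun h => hne (Fin.ext h)
      simp only at hw
      rw [valley_apply, valley_apply, if_neg (by omega), if_pos hlt, if_neg (by omega),
        if_pos (by omega)]
      omega
  · have hodd : r % 2 = 1 ∧ r / 2 ≤ 2 * stabIndex r := by
      split_ifs at hs <;> omega
    refine ⟨⟨v.val + 1, by omega⟩, by simp only; omega, Or.inr rfl, ?_, fun w hw hne => ?_⟩
    · rw [valley_apply, if_neg (by omega), if_neg hlt]
      omega
    · have hne' : w.val ≠ v.val := fun h => hne (Fin.ext h)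
      simp only at hw
      rw [valley_apply, valley_apply, if_neg (by omega), if_neg hlt, if_neg (by omega),
        if_neg (by omega)]
      omega

variable {K : Type*} [Field K]

theorem maxIdeal_isMaximal : (maxIdeal K r).IsMaximal := by
  have : maxIdeal K r = RingHom.ker (constantCoeff (R := K) (σ := Fin r)) := by
    ext f
    rw [maxIdeal, ← Set.image_univ, mem_ideal_span_X_image, RingHom.mem_ker]
    refine ⟨fun h => ?_, fun h m hm => ?_⟩
    · by_contra h0
      obtain ⟨i, -, hi⟩ := h 0 (mem_support_iff.2 h0)
      exact hi rfl
    · by_contra! h0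
      have : m = 0 := Finsupp.ext fun i => h0 i (Set.mem_univ i)
      subst this
      exact mem_support_iff.1 hm h
  rw [this]
  exact RingHom.ker_isMaximal_of_surjective _ fun a => ⟨C a, by simp⟩

theorem monoIdeal_le_maxIdeal (hr : 2 ≤ r) {t : ℕ} (ht : 1 ≤ t) :
    monoIdeal K (fracCovers r t) ≤ maxIdeal K r := by
  refine Ideal.span_le.2 ?_
  rintro _ ⟨a, ha, rfl⟩
  have h := ha ⟨0, by omega⟩ ⟨1, by omega⟩ rfl
  have hne : ∃ i, a i ≠ 0 := by
    by_contra! h0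
    rw [h0, h0] at h
    omega
  obtain ⟨i, hi⟩ := hne
  have : monomial a (1 : K) = monomial (a - Finsupp.single i 1) 1 * X i := by
    rw [X, monomial_mul, one_mul, tsub_add_cancel_of_le]
    simpa [Finsupp.single_le_iff] using Nat.one_le_iff_ne_zero.2 hi
  simp only [this]
  exact Ideal.mul_mem_left _ _ (Ideal.subset_span ⟨i, rfl⟩)

variable [NeZero r]

theorem diffs_mem_maxIdeal (L : ℕ) : ∀ f ∈ diffs K r L, f ∈ maxIdeal K r := by
  intro f hf
  simp only [diffs, List.mem_map, List.mem_range] at hf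
  obtain ⟨i, -, rfl⟩ := hf
  exact sub_mem (Ideal.subset_span ⟨_, rfl⟩) (Ideal.subset_span ⟨_, rfl⟩)

omit [NeZero r] in
theorem depthQuot_eq_sSup (I : Ideal (MvPolynomial (Fin r) K)) :
    depthQuot K r I = sSup {d | HasRegSeq (maxIdeal K r) I d} := rfl

/-- After all even variables have been merged, only the sum condition remains. -/
theorem mem_mergedCovers_last {t : ℕ} {e : Fin r →₀ ℕ} :
    e ∈ mergedCovers r t ((r - 1) / 2) ↔ ∑ i ∈ evens r ((r - 1) / 2), need t e i ≤ e 0 :=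
  ⟨fun h => h.1, fun h => ⟨h, fun i _ _ => by have := i.2; omega⟩⟩

theorem single_zero_add_odd {e : Fin r →₀ ℕ} {v : Fin r} (hv : v.val % 2 = 1) :
    (e + Finsupp.single v 1 : Fin r →₀ ℕ) 0 = e 0 := by
  have : (0 : Fin r) ≠ v := by
    rintro rfl
    simp at hv
  simp [Finsupp.single_eq_of_ne this]

/-- For large `t` the monomial with exponents `valley r` at the odd variables, and with the exponent
of `x_0` one too small, is a socle element modulo the differences. -/
theorem depthQuot_of_le (hr : 2 ≤ r) {t : ℕ} (ht : stabIndex r ≤ t) (ht1 : 1 ≤ t) :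
    depthQuot K r (coverIdeal K (SimpleGraph.pathGraph r) ^ t) = (r - 1) / 2 := by
  have hL : 2 * ((r - 1) / 2) < r := by omega
  rw [depthQuot_eq_sSup, coverIdeal_pow]
  set L := (r - 1) / 2 with hLdef
  have hne0 : ∀ v : Fin r, v.val % 2 = 1 → v ≠ 0 := by
    rintro v hv rfl
    simp at hv
  -- the exponent of `x_0` is one short of what the monomial ideal requires
  set N := ∑ i ∈ evens r L, need t (valley r) i with hN
  let e : Fin r →₀ ℕ := valley r + Finsupp.single 0 (N - 1)
  have he_odd : ∀ v : Fin r, v.val % 2 = 1 → e v = valley r v := fun v hv => by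
    simp [e, Finsupp.single_eq_of_ne (hne0 v hv)]
  have he0 : e 0 = N - 1 := by
    simp [e, valley_apply]
  have hNpos : 0 < N := by
    refine Finset.sum_pos' (fun _ _ => Nat.zero_le _) ⟨0, mem_evens.2 (by simp), ?_⟩
    obtain ⟨u, hu, hlt⟩ := need_valley ht (v := ⟨1, by omega⟩) rfl
    refine lt_need_iff.2 ⟨⟨1, by omega⟩, by simp, ?_⟩
    have := (need_lt_iff.1 hlt).2.1
    omega
  have he_even : ∀ v : Fin r, v.val % 2 = 0 → v ≠ 0 → e v = 0 := fun v hv hv0 => by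
    simp [e, Finsupp.single_eq_of_ne hv0, valley_apply, hv]
  have hmap : Finsupp.mapDomain (merge r L) e = e := by
    rw [Finsupp.mapDomain_congr (g := id), Finsupp.mapDomain_id]
    intro v hv
    unfold merge
    split_ifs with h
    · by_contra hv0
      exact (Finsupp.mem_support_iff.1 hv) (he_even v h.1 fun h => hv0 h.symm)
    · rfl
  have hren : rename (merge r L) (monomial e (1 : K)) = monomial e 1 := by
    rw [rename_monomial, hmap]
  have hneed : ∀ i ∈ evens r L, need t e i = need t (valley r) i := fun i hi =>
    need_congr_odd (mem_evens.1 hi).1 he_odd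
  have key := sSup_hasRegSeq_eq (monoIdeal_le_maxIdeal (K := K) hr ht1)
    (maxIdeal_isMaximal (K := K) (r := r)).ne_top (diffs_mem_maxIdeal L)
    (isWeaklyRegular_diffs (K := K) (t := t) hL) (f := monomial e 1) ?_ ?_
  · rw [key, length_diffs]
  · rw [mem_sup_diffs hL, hren]
    intro h
    have h1 := h e (by simp)
    rw [hLdef, mem_mergedCovers_last, ← hLdef, Finset.sum_congr rfl hneed, he0] at h1
    have h2 : N ≤ N - 1 := h1
    omega
  · suffices h : maxIdeal K r ≤ Submodule.comap (LinearMap.mulRight _ (monomial e (1 : K)))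
        (monoIdeal K (fracCovers r t) ⊔ Ideal.ofList (diffs K r L)) from fun z hz => h hz
    refine Ideal.span_le.2 ?_
    rintro _ ⟨v, rfl⟩
    change X v * monomial e (1 : K) ∈ monoIdeal K (fracCovers r t) ⊔ Ideal.ofList (diffs K r L)
    rw [mem_sup_diffs hL, map_mul, hren, rename_X, X, monomial_mul, one_mul]
    intro e' he'
    obtain rfl : e' = Finsupp.single (merge r L v) 1 + e := by
      by_contra hne
      simp [coeff_monomial, Ne.symm hne] at he'
    rw [hLdef, mem_mergedCovers_last, ← hLdef, add_comm]
    rcases Nat.mod_two_eq_zero_or_one v.val with hv | hv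
    · have : merge r L v = 0 := if_pos (by have := v.2; omega)
      rw [this, Finsupp.add_apply, Finsupp.single_eq_same, he0]
      refine (Finset.sum_le_sum fun i _ => ?_).trans (show N ≤ N - 1 + 1 by omega)
      refine need_anti fun w _ => ?_
      simp only [e, Finsupp.add_apply]
      omega
    · have : merge r L v = v := if_neg (by omega)
      rw [this, single_zero_add_odd hv, he0]
      have hlt : ∑ i ∈ evens r L, need t (e + Finsupp.single v 1) i < N := by
        rw [hN, ← Finset.sum_congr rfl hneed]
        refine Finset.sum_lt_sum (fun i _ => need_anti fun w _ => by simp) ?_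
        obtain ⟨u, hu, hlt⟩ := need_valley ht hv
        have hu' : u ∈ evens r L := mem_evens.2 ⟨hu, by have := u.2; omega⟩
        refine ⟨u, hu', ?_⟩
        rw [hneed u hu']
        refine lt_of_le_of_lt (need_congr_odd hu fun w hw => ?_).le hlt
        exact congrArg (· + Finsupp.single v 1 w) (he_odd w hw)
      omega

/-- For small `t` there is no socle element modulo the differences: its exponents outside the ideal
would satisfy the hypothesis of `stabIndex_le`. -/
theorem lt_depthQuot (hr : 2 ≤ r) {t : ℕ} (ht : t < stabIndex r) (ht1 : 1 ≤ t) :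
    (r - 1) / 2 < depthQuot K r (coverIdeal K (SimpleGraph.pathGraph r) ^ t) := by
  have hL : 2 * ((r - 1) / 2) < r := by omega
  rw [depthQuot_eq_sSup, coverIdeal_pow]
  set L := (r - 1) / 2 with hLdef
  have key := length_lt_sSup_hasRegSeq (monoIdeal_le_maxIdeal (K := K) hr ht1)
    (maxIdeal_isMaximal (K := K) (r := r)) (diffs_mem_maxIdeal L)
    (isWeaklyRegular_diffs (K := K) (t := t) hL) ?_
  · rwa [length_diffs] at key
  intro f hf
  rw [mem_sup_diffs hL]
  intro e he
  by_contra hU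
  rw [hLdef, mem_mergedCovers_last, ← hLdef, not_le] at hU
  refine ht.not_ge (stabIndex_le e fun v hv => ?_)
  have h1 := (mem_sup_diffs hL _).1 (hf (X v) (Ideal.subset_span ⟨v, rfl⟩))
    (e + Finsupp.single v 1) (by
      have : merge r L v = v := if_neg (by omega)
      rw [map_mul, rename_X, this, mem_support_iff, add_comm, coeff_X_mul]
      exact mem_support_iff.1 he)
  rw [hLdef, mem_mergedCovers_last, ← hLdef, single_zero_add_odd hv] at h1
  obtain ⟨u, hu, hlt⟩ := Finset.exists_lt_of_sum_lt (h1.trans_lt hU)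
  exact ⟨u, (mem_evens.1 hu).1, hlt⟩

omit [NeZero r] in
theorem stabIndex_pos (hr : 2 ≤ r) : 1 ≤ stabIndex r := by
  unfold stabIndex
  split_ifs <;> omega

theorem dstab_eq_stabIndex (hr : 2 ≤ r) :
    dstab K r (coverIdeal K (SimpleGraph.pathGraph r)) = stabIndex r := by
  have hs := stabIndex_pos hr
  have hmem : stabIndex r ∈ {k : ℕ | 1 ≤ k ∧ ∀ m : ℕ, k ≤ m →
      depthQuot K r (coverIdeal K (SimpleGraph.pathGraph r) ^ m) =
        depthQuot K r (coverIdeal K (SimpleGraph.pathGraph r) ^ k)} :=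
    ⟨hs, fun m hm => by rw [depthQuot_of_le hr hm (hs.trans hm), depthQuot_of_le hr le_rfl hs]⟩
  refine le_antisymm (Nat.sInf_le hmem) (le_csInf ⟨_, hmem⟩ ?_)
  rintro k ⟨hk1, hk⟩
  by_contra hlt
  have h1 := hk (stabIndex r) (by omega)
  rw [depthQuot_of_le hr le_rfl hs] at h1
  have h2 := lt_depthQuot (K := K) hr (not_le.1 hlt) hk1
  omega

end Stability

/-- For the path `P_r` (`r ≥ 2`), the index of depth stability of its cover ideal is
`r/2` if `r` is even and `⌈(r - 1)/4⌉` if `r` is odd. -/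
theorem dstab_coverIdeal_pathGraph (K : Type*) [Field K] (r : ℕ) (hr : 2 ≤ r) :
    (Even r → dstab K r (coverIdeal K (SimpleGraph.pathGraph r)) = r / 2) ∧
    (Odd r → (dstab K r (coverIdeal K (SimpleGraph.pathGraph r)) : ℤ)
        = ⌈((r : ℚ) - 1) / 4⌉) := by
  have : NeZero r := ⟨by omega⟩
  rw [dstab_eq_stabIndex hr]
  refine ⟨fun h => if_pos (Nat.even_iff.1 h), fun h => ?_⟩
  rw [stabIndex, if_neg (by rw [Nat.odd_iff.1 h]; decide), eq_comm, Int.ceil_eq_iff]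
  obtain ⟨k, rfl⟩ := h
  have h1 : 2 * k + 1 + 1 ≤ 4 * (((2 * k + 1) / 2 + 1) / 2) + 1 + 1 := by omega
  have h2 : 4 * (((2 * k + 1) / 2 + 1) / 2) < 2 * k + 4 := by omega
  generalize ((2 * k + 1) / 2 + 1) / 2 = s at h1 h2
  have h1' : (2 * k + 1 + 1 : ℚ) ≤ 4 * s + 1 + 1 := by exact_mod_cast h1
  have h2' : (4 * s : ℚ) < 2 * k + 4 := by exact_mod_cast h2
  push_cast
  constructor <;> linarith
end
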